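/- arXiv:1212.1437 — 3 statements merged into one kernel-verified Lean document; each statement's English description precedes it below -/
import Mathlib

section
/- For any probability density f on ℝ² with finite Fisher information I(f) = ∫ |∇f|²/f, and any p ∈ [1, ∞), there is a constant C_p depending only on p such that the L^p norm of f satisfies ‖f‖_{L^p(ℝ²)} ≤ C_p · I(f)^{1 - 1/p}. -/
/-!
For a smooth density `F`, the planar Sobolev embedding `W^{1,1} ⊂ L²` applied to `F^{s/2}` and
Cauchy–Schwarz for `∇F^{s/2} = (s/2) F^{(s-1)/2} (∇F / F^{1/2})` give, for `s ≥ 2`,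

  `∫ F^s ≤ C (s/2)² I(F) ∫ F^{s-1}`  (`SmoothDensity.step`).

With `s = 2` and `∫ F = 1` this is `∫ F² ≤ C I(F)`; Hölder's inequality gives
`∫ F^p ≤ C I(F)^{p-1}` for `1 ≤ p ≤ 2`, and iterating the inequality gives it for all `p`
(`SmoothDensity.bound`). Taking `p`-th roots yields the exponent `1 - 1/p`.

A general `f` is approximated by its mollifications `ρₙ * f`. By Cauchy–Schwarz,
`|∇(ρₙ * f)|² ≤ (ρₙ * f) (ρₙ * (|∇f|² / f))` (`enorm_fderiv_mol_sq_le`), so mollification does not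
increase the Fisher information, and Fatou's lemma passes the bound to `f`. Since the Fisher
integrand is `0` where `f = 0`, this step needs `∇f = 0` almost everywhere on `{f = 0}`, which
follows from the chain rule for `δ arctan (f / δ)` as `δ → 0` (`weakDeriv_eq_zero`).

Local integrability of the gradient `g` is not assumed: if some `φ • g` is not integrable, its
Bochner integral is `0` by convention, and then the zero field is a weak gradient of `f` as well
(`integral_eq_zero_of_not_integrable`), to which the previous argument applies.
-/

open MeasureTheory

noncomputable section

abbrev E2 := EuclideanSpace ℝ (Fin 2)

open Filter Topology
open scoped ENNReal NNReal

/-! ### A priori bounds for smooth densities -/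

/-- The constant `C` in the planar Gagliardo–Nirenberg–Sobolev inequality
`‖u‖_{L²}² ≤ C ‖∇u‖_{L¹}²`. -/
def sobConst : ℝ≥0 := lintegralPowLePowLIntegralFDerivConst (volume : Measure E2) 2

lemma sobolev_compact {u : E2 → ℝ} (hu : ContDiff ℝ 1 u) (h2u : HasCompactSupport u) :
    ∫⁻ x, ‖u x‖ₑ ^ (2:ℝ) ≤ sobConst * (∫⁻ x, ‖fderiv ℝ u x‖ₑ) ^ (2:ℝ) := by
  apply lintegral_pow_le_pow_lintegral_fderiv (volume : Measure E2) hu h2u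
  simpa using Real.HolderConjugate.two_two

/-- The embedding `W^{1,1}(ℝ²) ⊂ L²(ℝ²)` for `C¹` functions in `L¹` without compact support:
multiply by cutoffs `χ(x / (n + 1))`, whose gradients tend to `0` uniformly, and use Fatou. -/
lemma sobolev_global {U : E2 → ℝ} (hU : ContDiff ℝ 1 U) (hfin : ∫⁻ x, ‖U x‖ₑ ≠ ⊤) :
    ∫⁻ x, ‖U x‖ₑ ^ (2:ℝ) ≤ sobConst * (∫⁻ x, ‖fderiv ℝ U x‖ₑ) ^ (2:ℝ) := by
  let χ : ContDiffBump (0 : E2) := ⟨1, 2, one_pos, one_lt_two⟩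
  have hχ1 : ContDiff ℝ 1 (χ : E2 → ℝ) := χ.contDiff
  obtain ⟨L, hL⟩ : ∃ L, ∀ x, ‖fderiv ℝ χ x‖ ≤ L := by
    apply (hχ1.continuous_fderiv one_ne_zero).bounded_above_of_compact_support
    exact χ.hasCompactSupport.fderiv ℝ
  have hL0 : 0 ≤ L := (norm_nonneg _).trans (hL 0)
  let c : ℕ → ℝ := fun n => ((n:ℝ) + 1)⁻¹
  have hc : ∀ n, 0 < c n := fun n => by positivity
  let u : ℕ → E2 → ℝ := fun n x => χ (c n • x) * U x
  have hχn : ∀ n, ContDiff ℝ 1 (fun x : E2 => χ (c n • x)) := fun n =>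
    hχ1.comp (contDiff_const_smul _)
  have hu : ∀ n, ContDiff ℝ 1 (u n) := fun n => (hχn n).mul hU
  have hucs : ∀ n, HasCompactSupport (u n) := fun n => by
    apply HasCompactSupport.mul_right
    exact χ.hasCompactSupport.comp_homeomorph (Homeomorph.smulOfNeZero (c n) (hc n).ne')
  have hd : ∀ n x, ‖fderiv ℝ (u n) x‖ₑ ≤ ‖fderiv ℝ U x‖ₑ + ENNReal.ofReal (L * c n) * ‖U x‖ₑ := by
    intro n x
    have h1 : HasFDerivAt (fun x : E2 => χ (c n • x))
        ((fderiv ℝ χ (c n • x)).comp (c n • ContinuousLinearMap.id ℝ E2)) x :=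
      ((hχ1.differentiable one_ne_zero (c n • x)).hasFDerivAt).comp x
        ((hasFDerivAt_id x).const_smul (c n))
    have h2 := (hU.differentiable one_ne_zero x).hasFDerivAt
    have h3 := (h1.mul h2).fderiv
    have h4 : ‖fderiv ℝ (u n) x‖ ≤ ‖fderiv ℝ U x‖ + L * c n * ‖U x‖ := by
      change fderiv ℝ (u n) x = _ at h3
      rw [h3]
      refine (norm_add_le _ _).trans ?_
      rw [norm_smul, norm_smul]
      have h5 : ‖χ (c n • x)‖ ≤ 1 := by
        rw [Real.norm_of_nonneg χ.nonneg]; exact χ.le_one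
      have h6 : ‖(fderiv ℝ χ (c n • x)).comp (c n • ContinuousLinearMap.id ℝ E2)‖ ≤ L * c n := by
        rw [ContinuousLinearMap.comp_smul, ContinuousLinearMap.comp_id, norm_smul,
          Real.norm_of_nonneg (hc n).le, mul_comm]
        gcongr
        · exact hL _
      have := mul_le_mul_of_nonneg_right h5 (norm_nonneg (fderiv ℝ U x))
      have := mul_le_mul_of_nonneg_left h6 (norm_nonneg (U x))
      linarith
    calc ‖fderiv ℝ (u n) x‖ₑ = ENNReal.ofReal ‖fderiv ℝ (u n) x‖ := (ofReal_norm _).symm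
      _ ≤ ENNReal.ofReal (‖fderiv ℝ U x‖ + L * c n * ‖U x‖) := ENNReal.ofReal_le_ofReal h4
      _ = _ := by
        rw [ENNReal.ofReal_add (by positivity) (by have := hc n; positivity),
          ENNReal.ofReal_mul (by have := hc n; positivity), ofReal_norm, ofReal_norm]
  have hlim : ∀ x, Tendsto (fun n => ‖u n x‖ₑ ^ (2:ℝ)) atTop (𝓝 (‖U x‖ₑ ^ (2:ℝ))) := by
    intro x
    apply tendsto_const_nhds.congr'
    filter_upwards [eventually_ge_atTop ⌈‖x‖⌉₊] with n hn
    have : χ (c n • x) = 1 := by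
      apply χ.one_of_mem_closedBall
      rw [mem_closedBall_zero_iff, norm_smul, Real.norm_of_nonneg (hc n).le]
      change ((n:ℝ)+1)⁻¹ * ‖x‖ ≤ 1
      rw [inv_mul_le_iff₀ (by positivity)]
      have := Nat.le_of_ceil_le hn
      linarith
    simp [u, this]
  calc ∫⁻ x, ‖U x‖ₑ ^ (2:ℝ) = ∫⁻ x, liminf (fun n => ‖u n x‖ₑ ^ (2:ℝ)) atTop := by
        simp_rw [fun x => (hlim x).liminf_eq]
    _ ≤ liminf (fun n => ∫⁻ x, ‖u n x‖ₑ ^ (2:ℝ)) atTop := by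
        apply lintegral_liminf_le
        intro n
        exact ((hu n).continuous.enorm.measurable).pow_const _
    _ ≤ liminf (fun n => sobConst * ((∫⁻ x, ‖fderiv ℝ U x‖ₑ)
          + ENNReal.ofReal (L * c n) * ∫⁻ x, ‖U x‖ₑ) ^ (2:ℝ)) atTop := by
        refine liminf_le_liminf (Eventually.of_forall fun n => ?_)
        refine (sobolev_compact (hu n) (hucs n)).trans ?_
        beta_reduce
        gcongr
        rw [← lintegral_const_mul _ hU.continuous.enorm.measurable,
          ← lintegral_add_right _ (hU.continuous.enorm.measurable.const_mul _)]
        exact lintegral_mono (hd n)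
    _ = sobConst * (∫⁻ x, ‖fderiv ℝ U x‖ₑ) ^ (2:ℝ) := by
        apply Tendsto.liminf_eq
        have h1 : Tendsto c atTop (𝓝 0) := by
          simpa [c] using tendsto_one_div_add_atTop_nhds_zero_nat (𝕜 := ℝ)
        have h2 : Tendsto (fun n => ENNReal.ofReal (L * c n) * ∫⁻ x, ‖U x‖ₑ) atTop (𝓝 0) := by
          have := ENNReal.Tendsto.mul_const (b := ∫⁻ x, ‖U x‖ₑ)
            (ENNReal.tendsto_ofReal (h1.const_mul L)) (Or.inr hfin)
          simpa using this
        have h3 := (tendsto_const_nhds (x := ∫⁻ x, ‖fderiv ℝ U x‖ₑ)).add h2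
        rw [add_zero] at h3
        exact ENNReal.Tendsto.const_mul (((ENNReal.continuous_rpow_const).tendsto _).comp h3)
          (Or.inr ENNReal.coe_ne_top)

/-- The Cauchy–Schwarz inequality for lower Lebesgue integrals. -/
lemma cauchy_lint {α : Type*} [MeasurableSpace α] {μ : Measure α} {a b : α → ℝ≥0∞}
    (ha : AEMeasurable a μ) (hb : AEMeasurable b μ) :
    (∫⁻ x, a x ^ (1/2:ℝ) * b x ^ (1/2:ℝ) ∂μ) ^ (2:ℝ) ≤ (∫⁻ x, a x ∂μ) * ∫⁻ x, b x ∂μ := by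
  have h := ENNReal.lintegral_mul_le_Lp_mul_Lq μ Real.HolderConjugate.two_two
    (ha.pow_const (1/2:ℝ)) (hb.pow_const (1/2:ℝ))
  have e : ∀ y : ℝ≥0∞, (y ^ (1/2:ℝ)) ^ (2:ℝ) = y := fun y => by
    rw [← ENNReal.rpow_mul]; norm_num
  simp only [e, Pi.mul_apply] at h
  calc _ ≤ ((∫⁻ x, a x ∂μ) ^ (1/2:ℝ) * (∫⁻ x, b x ∂μ) ^ (1/2:ℝ)) ^ (2:ℝ) := by gcongr
    _ = _ := by rw [ENNReal.mul_rpow_of_nonneg _ _ (by norm_num), e, e]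

/-- `F` is a bounded `C¹` sub-probability density on the plane whose Fisher information is at
most `J`. The inequality `∫ |∇F|² / F ≤ J` is recorded through a majorant `H` of the integrand,
in the division-free form `|∇F|² ≤ F H` with `∫ H ≤ J`, so that zeros of `F` need no convention. -/
structure SmoothDensity (F : E2 → ℝ) (H : E2 → ℝ≥0∞) (J : ℝ≥0∞) : Prop where
  contDiff : ContDiff ℝ 1 F
  nonneg : ∀ x, 0 ≤ F x
  bdd : ∃ M, ∀ x, F x ≤ M
  mass : ∫⁻ x, ENNReal.ofReal (F x) ≤ 1
  meas : AEMeasurable H volume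
  fisher : ∫⁻ x, H x ≤ J
  grad : ∀ x, ‖fderiv ℝ F x‖ₑ ^ (2:ℝ) ≤ ENNReal.ofReal (F x) * H x

/-- The Sobolev inequality applied to `F^{s/2}`: since `|∇F^{s/2}| ≤ (s/2) F^{(s-1)/2} H^{1/2}`,
Cauchy–Schwarz gives `∫ F^s ≤ C (s/2)² J ∫ F^{s-1}`. -/
lemma SmoothDensity.step {F H J} (h : SmoothDensity F H J) {s : ℝ} (hs : 2 ≤ s) :
    ∫⁻ x, ENNReal.ofReal (F x) ^ s ≤
      sobConst * ENNReal.ofReal (s / 2) ^ (2:ℝ) * J * ∫⁻ x, ENNReal.ofReal (F x) ^ (s - 1) := by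
  have hm : 1 ≤ s / 2 := by linarith
  have hU : ContDiff ℝ 1 (fun x => F x ^ (s / 2)) :=
    h.contDiff.rpow_const_of_le (by simpa using hm)
  have hFm : Measurable fun x => ENNReal.ofReal (F x) :=
    h.contDiff.continuous.measurable.ennreal_ofReal
  have hnorm : ∀ x, ‖F x ^ (s/2)‖ₑ = ENNReal.ofReal (F x) ^ (s/2) := fun x => by
    rw [Real.enorm_of_nonneg (Real.rpow_nonneg (h.nonneg x) _),
      ENNReal.ofReal_rpow_of_nonneg (h.nonneg x) (by linarith)]
  have hfin : ∫⁻ x, ‖F x ^ (s/2)‖ₑ ≠ ⊤ := by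
    obtain ⟨M, hM⟩ := h.bdd
    have : ∀ x, ‖F x ^ (s/2)‖ₑ ≤ ENNReal.ofReal M ^ (s/2-1) * ENNReal.ofReal (F x) := fun x => by
      rw [hnorm]
      calc ENNReal.ofReal (F x) ^ (s/2) = ENNReal.ofReal (F x) ^ ((s/2 - 1) + 1) := by ring_nf
        _ = ENNReal.ofReal (F x) ^ (s/2 - 1) * ENNReal.ofReal (F x) := by
          rw [ENNReal.rpow_add_of_nonneg _ _ (by linarith) (by norm_num), ENNReal.rpow_one]
        _ ≤ _ := by
          gcongr
          exact hM x
    refine ((lintegral_mono this).trans_lt ?_).ne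
    rw [lintegral_const_mul _ hFm]
    refine ENNReal.mul_lt_top (ENNReal.rpow_lt_top_of_nonneg (by linarith) (by simp)) ?_
    exact h.mass.trans_lt (by simp)
  have hd : ∀ x, ‖fderiv ℝ (fun x => F x ^ (s / 2)) x‖ₑ ≤ ENNReal.ofReal (s/2) *
      ((ENNReal.ofReal (F x) ^ (s - 1)) ^ (1/2:ℝ) * H x ^ (1/2:ℝ)) := by
    intro x
    rw [(((h.contDiff.differentiable one_ne_zero x).hasFDerivAt).rpow_const
      (Or.inr hm)).fderiv, enorm_smul,
      Real.enorm_of_nonneg (mul_nonneg (by linarith) (Real.rpow_nonneg (h.nonneg x) _)),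
      ENNReal.ofReal_mul (by linarith), mul_assoc,
      ← ENNReal.ofReal_rpow_of_nonneg (h.nonneg x) (by linarith)]
    refine mul_le_mul' le_rfl ?_
    have h1 : ‖fderiv ℝ F x‖ₑ ≤ ENNReal.ofReal (F x) ^ (1/2:ℝ) * H x ^ (1/2:ℝ) := by
      rw [← ENNReal.mul_rpow_of_nonneg _ _ (by norm_num)]
      calc ‖fderiv ℝ F x‖ₑ = (‖fderiv ℝ F x‖ₑ ^ (2:ℝ)) ^ (1/2:ℝ) := by
            rw [← ENNReal.rpow_mul]; norm_num
        _ ≤ _ := by gcongr; exact h.grad x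
    calc _ ≤ ENNReal.ofReal (F x) ^ (s/2-1) *
          (ENNReal.ofReal (F x) ^ (1/2:ℝ) * H x ^ (1/2:ℝ)) := by gcongr
      _ = _ := by
        rw [← mul_assoc, ← ENNReal.rpow_add_of_nonneg _ _ (by linarith) (by norm_num),
          ← ENNReal.rpow_mul]
        ring_nf
  calc ∫⁻ x, ENNReal.ofReal (F x) ^ s = ∫⁻ x, ‖F x ^ (s/2)‖ₑ ^ (2:ℝ) := by
        simp_rw [hnorm, ← ENNReal.rpow_mul]; ring_nf
    _ ≤ sobConst * (∫⁻ x, ‖fderiv ℝ (fun x => F x ^ (s / 2)) x‖ₑ) ^ (2:ℝ) :=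
        sobolev_global hU hfin
    _ ≤ sobConst * (ENNReal.ofReal (s/2) * ∫⁻ x,
        ((ENNReal.ofReal (F x) ^ (s - 1)) ^ (1/2:ℝ) * H x ^ (1/2:ℝ))) ^ (2:ℝ) := by
        gcongr
        rw [← lintegral_const_mul' _ _ (by simp)]
        exact lintegral_mono hd
    _ ≤ sobConst * (ENNReal.ofReal (s/2) ^ (2:ℝ) *
          ((∫⁻ x, ENNReal.ofReal (F x) ^ (s - 1)) * J)) := by
        rw [ENNReal.mul_rpow_of_nonneg _ _ (by norm_num)]
        gcongr
        refine (cauchy_lint (hFm.pow_const _).aemeasurable h.meas).trans ?_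
        gcongr
        exact h.fisher
    _ = _ := by ring

/-- The bound `∫ F^p ≤ C_p J^{p-1}` for `1 ≤ p ≤ k + 2`, by induction on `k`. On `[1, 2]` it is
the case `s = 2` of `SmoothDensity.step` interpolated with the mass; beyond, `step` reduces `p`
to `p - 1`. -/
lemma SmoothDensity.bound_aux (k : ℕ) : ∀ p : ℝ, 1 ≤ p → p ≤ k + 2 → ∃ C : ℝ≥0, ∀ F H J,
    SmoothDensity F H J → ∫⁻ x, ENNReal.ofReal (F x) ^ p ≤ C * J ^ (p - 1) := by
  induction k with
  | zero =>
    intro p h1 h2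
    simp only [Nat.cast_zero, zero_add] at h2
    refine ⟨sobConst ^ (p - 1), fun F H J h => ?_⟩
    have hFm : Measurable fun x => ENNReal.ofReal (F x) :=
      h.contDiff.continuous.measurable.ennreal_ofReal
    have hst : ∫⁻ x, ENNReal.ofReal (F x) ^ (2:ℝ) ≤ sobConst * J := by
      have := h.step (s := 2) le_rfl
      have e : (2:ℝ) - 1 = 1 := by norm_num
      simp only [e, ENNReal.rpow_one] at this
      refine this.trans ?_
      simp only [div_self (two_ne_zero (α := ℝ)), ENNReal.ofReal_one, ENNReal.one_rpow, mul_one]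
      exact mul_le_of_le_one_right (by simp) h.mass
    calc ∫⁻ x, ENNReal.ofReal (F x) ^ p
        = ∫⁻ x, ENNReal.ofReal (F x) ^ (2 - p) * (ENNReal.ofReal (F x) ^ (2:ℝ)) ^ (p - 1) := by
          congr with x
          rw [← ENNReal.rpow_mul, ← ENNReal.rpow_add_of_nonneg _ _ (by linarith) (by linarith)]
          ring_nf
      _ ≤ (∫⁻ x, ENNReal.ofReal (F x)) ^ (2 - p) *
          (∫⁻ x, ENNReal.ofReal (F x) ^ (2:ℝ)) ^ (p - 1) :=
          ENNReal.lintegral_mul_norm_pow_le hFm.aemeasurable (hFm.pow_const _).aemeasurable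
            (by linarith) (by linarith) (by ring)
      _ ≤ 1 ^ (2 - p) * (sobConst * J) ^ (p - 1) := by
          gcongr
          exact h.mass
      _ = _ := by
          rw [ENNReal.one_rpow, one_mul, ENNReal.mul_rpow_of_nonneg _ _ (by linarith),
            ENNReal.coe_rpow_of_nonneg _ (by linarith)]
  | succ k ih =>
    intro p h1 h2
    by_cases h3 : p ≤ k + 2
    · exact ih p h1 h3
    push Not at h3
    have hk : (0:ℝ) ≤ k := Nat.cast_nonneg k
    push_cast at h2
    obtain ⟨C, hC⟩ := ih (p - 1) (by linarith) (by linarith)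
    refine ⟨sobConst * (p / 2).toNNReal ^ (2:ℝ) * C, fun F H J h => ?_⟩
    calc _ ≤ sobConst * ENNReal.ofReal (p / 2) ^ (2:ℝ) * J * (C * J ^ (p - 1 - 1)) := by
          refine (h.step (by linarith)).trans ?_
          gcongr
          exact hC F H J h
      _ = sobConst * ENNReal.ofReal (p / 2) ^ (2:ℝ) * C * (J ^ (1:ℝ) * J ^ (p - 1 - 1)) := by
          rw [ENNReal.rpow_one]; ring
      _ = _ := by
          rw [← ENNReal.rpow_add_of_nonneg _ _ (by linarith) (by linarith)]
          push_cast
          rw [ENNReal.coe_rpow_of_nonneg _ (by norm_num)]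
          congr 2
          ring

lemma SmoothDensity.bound {p : ℝ} (hp : 1 ≤ p) : ∃ C : ℝ≥0, ∀ F H J,
    SmoothDensity F H J → ∫⁻ x, ENNReal.ofReal (F x) ^ p ≤ C * J ^ (p - 1) :=
  bound_aux ⌈p⌉₊ p hp (by have := Nat.le_ceil p; linarith)

/-! ### Mollification -/

/-- Bump functions at the origin with radii shrinking to `0`. The ratio of the outer to the
inner radius stays bounded, which almost everywhere convergence of the mollifications requires. -/
def bump (n : ℕ) : ContDiffBump (0 : E2) where
  rIn := ((n:ℝ) + 1)⁻¹ / 2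
  rOut := ((n:ℝ) + 1)⁻¹
  rIn_pos := by positivity
  rIn_lt_rOut := half_lt_self (by positivity)

/-- The mollifier `ρₙ`: the `n`-th bump function normalised to have integral `1`. -/
def rho (n : ℕ) : E2 → ℝ := (bump n).normed volume

lemma rho_nonneg (n : ℕ) (x : E2) : 0 ≤ rho n x := (bump n).nonneg_normed x

lemma rho_contDiff (n : ℕ) : ContDiff ℝ (⊤ : ℕ∞) (rho n) := (bump n).contDiff_normed

lemma rho_continuous (n : ℕ) : Continuous (rho n) := (rho_contDiff n).continuous

lemma rho_compact (n : ℕ) : HasCompactSupport (rho n) := (bump n).hasCompactSupport_normed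

lemma rho_integrable (n : ℕ) : Integrable (rho n) volume := (bump n).integrable_normed

lemma rho_integral (n : ℕ) : ∫ x, rho n x = 1 := (bump n).integral_normed

lemma rho_lintegral (n : ℕ) : ∫⁻ x, ENNReal.ofReal (rho n x) = 1 := by
  rw [← ofReal_integral_eq_lintegral_ofReal (rho_integrable n)
    (Eventually.of_forall (rho_nonneg n)), rho_integral, ENNReal.ofReal_one]

lemma rho_eq_zero (n : ℕ) {x : E2} (hx : 1 ≤ ‖x‖) : rho n x = 0 := by
  have : x ∉ Function.support (rho n) := by
    rw [rho, (bump n).support_normed_eq, Metric.mem_ball, dist_zero_right, not_lt]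
    refine le_trans ?_ hx
    change ((n:ℝ)+1)⁻¹ ≤ 1
    exact inv_le_one_of_one_le₀ (by simp)
  simpa using this

/-- The mollification `ρₙ * k`. -/
def mol (n : ℕ) (k : E2 → ℝ) (x : E2) : ℝ := ∫ t, rho n (x - t) * k t

lemma mol_eq_conv (n : ℕ) (k : E2 → ℝ) :
    mol n k = convolution (rho n) k (ContinuousLinearMap.lsmul ℝ ℝ) volume := by
  ext x
  rw [convolution_lsmul_swap]
  rfl

lemma mol_integrand {n : ℕ} {k : E2 → ℝ} (hk : LocallyIntegrable k volume) (x : E2) :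
    Integrable (fun t => rho n (x - t) * k t) volume := by
  have h1 : HasCompactSupport (fun t => rho n (x - t)) :=
    (rho_compact n).comp_homeomorph (Homeomorph.subLeft x)
  have h2 : Continuous (fun t => rho n (x - t)) := (rho_continuous n).comp (by fun_prop)
  exact hk.integrable_smul_left_of_hasCompactSupport h2 h1

lemma mol_contDiff {n : ℕ} {k : E2 → ℝ} (hk : LocallyIntegrable k volume) :
    ContDiff ℝ 1 (mol n k) := by
  rw [mol_eq_conv]
  exact (rho_compact n).contDiff_convolution_left (n := 1) _ (rho_contDiff n |>.of_le (by simp)) hk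

lemma mol_tendsto {k : E2 → ℝ} (hk : LocallyIntegrable k volume) :
    ∀ᵐ x, Tendsto (fun n => mol n k x) atTop (𝓝 (k x)) := by
  simp_rw [mol_eq_conv]
  apply ContDiffBump.ae_convolution_tendsto_right_of_locallyIntegrable (φ := bump) (K := 2)
  · simpa [bump] using tendsto_one_div_add_atTop_nhds_zero_nat (𝕜 := ℝ)
  · refine Eventually.of_forall fun n => ?_
    simp only [bump]
    linarith
  · exact hk

lemma mol_integrable {n : ℕ} {k : E2 → ℝ} (hk : Integrable k volume) :
    Integrable (mol n k) volume := by
  rw [mol_eq_conv]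
  exact (rho_integrable n).integrable_convolution _ hk

lemma mol_integral {n : ℕ} {k : E2 → ℝ} (hk : Integrable k volume) :
    ∫ x, mol n k x = ∫ x, k x := by
  rw [mol_eq_conv, integral_convolution _ (rho_integrable n) hk, rho_integral]
  simp

lemma mol_nonneg {n : ℕ} {k : E2 → ℝ} (hk : ∀ x, 0 ≤ k x) (x : E2) : 0 ≤ mol n k x :=
  integral_nonneg fun t => mul_nonneg (rho_nonneg n _) (hk t)

/-- `G` is a weak derivative of `f` in the direction `v`, tested against smooth compactly
supported functions. No integrability is built in: as the integrals are Bochner integrals, the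
notion has its usual meaning when `f` and `G` are locally integrable. -/
def WeakDeriv (f G : E2 → ℝ) (v : E2) : Prop :=
  ∀ φ : E2 → ℝ, ContDiff ℝ (⊤ : ℕ∞) φ → HasCompactSupport φ →
    ∫ x, f x * fderiv ℝ φ x v = - ∫ x, φ x * G x

lemma fderiv_mol {f G : E2 → ℝ} {v : E2} (hf : LocallyIntegrable f volume)
    (h : WeakDeriv f G v) (n : ℕ) (x : E2) : fderiv ℝ (mol n f) x v = mol n G x := by
  have hr1 : ContDiff ℝ 1 (rho n) := (rho_contDiff n).of_le (by simp)
  have h1 := (rho_compact n).hasFDerivAt_convolution_left (ContinuousLinearMap.lsmul ℝ ℝ)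
    hr1 hf x
  rw [← mol_eq_conv] at h1
  have h2 := ((rho_compact n).fderiv ℝ).convolutionExists_left
    ((ContinuousLinearMap.lsmul ℝ ℝ).precompL E2) (hr1.continuous_fderiv one_ne_zero) hf x
  rw [h1.fderiv, convolution_eq_swap, ContinuousLinearMap.integral_apply h2.integrable_swap]
  have h3 := h (fun t => rho n (x - t)) ((rho_contDiff n).comp (by fun_prop))
    ((rho_compact n).comp_homeomorph (Homeomorph.subLeft x))
  have h4 : ∀ t, fderiv ℝ (fun t => rho n (x - t)) t v = - fderiv ℝ (rho n) (x - t) v := by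
    intro t
    have : HasFDerivAt (fun t => rho n (x - t))
        ((fderiv ℝ (rho n) (x - t)).comp (-ContinuousLinearMap.id ℝ E2)) t :=
      ((hr1.differentiable one_ne_zero (x - t)).hasFDerivAt).comp t
        ((hasFDerivAt_id t).const_sub x)
    rw [this.fderiv]
    simp
  simp only [h4, mul_neg, integral_neg, neg_inj] at h3
  unfold mol
  rw [← h3]
  congr with t
  simp [mul_comm]

/-- `ρₙ * k → k` in `L¹` for `k ≥ 0`, by Scheffé's argument: the integrals agree, so
`∫ |ρₙ * k - k| = 2 ∫ (k - ρₙ * k)⁺`, and the positive part is dominated by `k`. -/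
lemma mol_L1 {k : E2 → ℝ} (hk : Integrable k volume) (hk0 : ∀ x, 0 ≤ k x) :
    Tendsto (fun n => ∫ x, |mol n k x - k x|) atTop (𝓝 0) := by
  have h1 : Tendsto (fun n => ∫ x, max (k x - mol n k x) 0) atTop (𝓝 (∫ x : E2, (0:ℝ))) := by
    apply tendsto_integral_of_dominated_convergence k
    · intro n
      exact ((hk.sub (mol_integrable hk)).pos_part).aestronglyMeasurable
    · exact hk
    · intro n
      refine Eventually.of_forall fun x => ?_
      rw [Real.norm_of_nonneg (le_max_right _ _)]
      exact max_le (by linarith [mol_nonneg (n := n) hk0 x]) (hk0 x)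
    · filter_upwards [mol_tendsto hk.locallyIntegrable] with x hx
      have := ((tendsto_const_nhds (x := k x)).sub hx).max (tendsto_const_nhds (x := (0:ℝ)))
      simpa using this
  have h2 : ∀ n, ∫ x, |mol n k x - k x| = 2 * ∫ x, max (k x - mol n k x) 0 := by
    intro n
    have e : ∀ x, |mol n k x - k x| = 2 * max (k x - mol n k x) 0 - (k x - mol n k x) := by
      intro x
      rcases le_total (k x) (mol n k x) with h | h
      · rw [abs_of_nonneg (by linarith), max_eq_right (by linarith)]; ring
      · rw [abs_of_nonpos (by linarith), max_eq_left (by linarith)]; ring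
    simp_rw [e]
    have i1 : Integrable (fun x => k x - mol n k x) volume := hk.sub (mol_integrable hk)
    rw [integral_sub (i1.pos_part.const_mul 2) i1, integral_const_mul]
    rw [integral_sub hk (mol_integrable hk), mol_integral hk, sub_self, sub_zero]
  simp_rw [h2]
  simpa using h1.const_mul 2

/-- Bounded, almost everywhere convergent weights may be paired with mollifications in the
limit; see `mol_pairing` for `k` of arbitrary sign. -/
lemma mol_pairing_nonneg {k : E2 → ℝ} (hk : Integrable k volume) (hk0 : ∀ x, 0 ≤ k x)
    {w : ℕ → E2 → ℝ} {w' : E2 → ℝ} {S : ℝ} (hw : ∀ n, AEStronglyMeasurable (w n) volume)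
    (hS : ∀ n x, |w n x| ≤ S) (hlim : ∀ᵐ x, Tendsto (fun n => w n x) atTop (𝓝 (w' x))) :
    Tendsto (fun n => ∫ x, w n x * mol n k x) atTop (𝓝 (∫ x, w' x * k x)) := by
  have hint : ∀ n {u : E2 → ℝ}, Integrable u volume → Integrable (fun x => w n x * u x) volume :=
    fun n u hu => hu.bdd_mul (hw n) (Eventually.of_forall fun x => hS n x)
  have h1 : Tendsto (fun n => ∫ x, w n x * k x) atTop (𝓝 (∫ x, w' x * k x)) := by
    apply tendsto_integral_of_dominated_convergence (fun x => S * k x)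
    · exact fun n => (hint n hk).aestronglyMeasurable
    · exact hk.const_mul S
    · intro n
      refine Eventually.of_forall fun x => ?_
      rw [norm_mul, Real.norm_of_nonneg (hk0 x)]
      exact mul_le_mul_of_nonneg_right (hS n x) (hk0 x)
    · filter_upwards [hlim] with x hx
      exact hx.mul_const _
  have h2 : Tendsto (fun n => ∫ x, w n x * (mol n k x - k x)) atTop (𝓝 0) := by
    apply squeeze_zero_norm (a := fun n => S * ∫ x, |mol n k x - k x|)
    · intro n
      rw [← integral_const_mul]
      have i1 := (mol_integrable (n := n) hk).sub hk
      refine norm_integral_le_of_norm_le (i1.abs.const_mul S) ?_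
      refine Eventually.of_forall fun x => ?_
      rw [norm_mul]
      exact mul_le_mul_of_nonneg_right (hS n x) (norm_nonneg _)
    · simpa using (mol_L1 hk hk0).const_mul S
  have h3 := h1.add h2
  rw [add_zero] at h3
  refine h3.congr fun n => ?_
  have i1 : Integrable (fun x => mol n k x - k x) volume := (mol_integrable hk).sub hk
  rw [← integral_add (hint n hk) (hint n i1)]
  congr with x
  ring

lemma mol_pairing {k : E2 → ℝ} (hk : Integrable k volume)
    {w : ℕ → E2 → ℝ} {w' : E2 → ℝ} {S : ℝ} (hw : ∀ n, AEStronglyMeasurable (w n) volume)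
    (hw' : AEStronglyMeasurable w' volume)
    (hS : ∀ n x, |w n x| ≤ S) (hS' : ∀ x, |w' x| ≤ S)
    (hlim : ∀ᵐ x, Tendsto (fun n => w n x) atTop (𝓝 (w' x))) :
    Tendsto (fun n => ∫ x, w n x * mol n k x) atTop (𝓝 (∫ x, w' x * k x)) := by
  have hp := hk.pos_part
  have hm := hk.neg_part
  have h := (mol_pairing_nonneg hp (fun x => le_max_right _ _) hw hS hlim).sub
    (mol_pairing_nonneg hm (fun x => le_max_right _ _) hw hS hlim)
  have e : ∀ x, k x = max (k x) 0 - max (-k x) 0 := fun x => by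
    rcases le_total (k x) 0 with h | h
    · rw [max_eq_right h, max_eq_left (by linarith)]; ring
    · rw [max_eq_left h, max_eq_right (by linarith)]; ring
  have hint : ∀ {w : E2 → ℝ} {u : E2 → ℝ}, AEStronglyMeasurable w volume → (∀ x, |w x| ≤ S) →
      Integrable u volume → Integrable (fun x => w x * u x) volume :=
    fun hw hS hu => hu.bdd_mul hw (Eventually.of_forall fun x => hS x)
  rw [← integral_sub (hint hw' hS' hp) (hint hw' hS' hm)] at h
  have e2 : ∫ x, w' x * k x = ∫ x, (w' x * max (k x) 0 - w' x * max (-k x) 0) := by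
    congr with x
    rw [← mul_sub, ← e]
  rw [e2]
  refine h.congr fun n => ?_
  rw [← integral_sub (hint (hw n) (hS n) (mol_integrable hp))
    (hint (hw n) (hS n) (mol_integrable hm))]
  congr with x
  rw [← mul_sub]
  congr 1
  unfold mol
  rw [← integral_sub (mol_integrand hp.locallyIntegrable x)
    (mol_integrand hm.locallyIntegrable x)]
  congr with t
  rw [← mul_sub, ← e]

/-! ### Vanishing of weak derivatives on the zero set -/

lemma abs_arctan_le_two (y : ℝ) : |Real.arctan y| ≤ 2 := by
  have h1 := Real.arctan_lt_pi_div_two y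
  have h2 := Real.neg_pi_div_two_lt_arctan y
  have h3 := Real.pi_le_four
  rw [abs_le]
  constructor <;> linarith

/-- Chain rule for weak derivatives with the outer function `y ↦ δ arctan (y / δ)`, whose
derivative is `1 / (1 + (y / δ)²)`; proved by mollifying `f` and passing to the limit. -/
lemma weakDeriv_chain {f G : E2 → ℝ} {v : E2} (hf : Integrable f volume)
    (hG : LocallyIntegrable G volume) (h : WeakDeriv f G v) {δ : ℝ} (hδ : 0 < δ)
    {φ : E2 → ℝ} (hφ : ContDiff ℝ (⊤ : ℕ∞) φ) (hφc : HasCompactSupport φ) :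
    ∫ x, (δ * Real.arctan (f x / δ)) * fderiv ℝ φ x v =
      - ∫ x, (φ x * (1 + (f x / δ) ^ 2)⁻¹) * G x := by
  have hφ1 : ContDiff ℝ 1 φ := hφ.of_le (by simp)
  have hdφ : Continuous fun x => fderiv ℝ φ x v :=
    (hφ1.continuous_fderiv one_ne_zero).clm_apply continuous_const
  have hdφc : HasCompactSupport fun x => fderiv ℝ φ x v := hφc.fderiv_apply ℝ v
  have hfl := hf.locallyIntegrable
  obtain ⟨S, hS⟩ := hφ1.continuous.bounded_above_of_compact_support hφc
  obtain ⟨R, hR⟩ := hφc.isCompact.isBounded.subset_closedBall 0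
  have hsupp : ∀ x, φ x ≠ 0 → ‖x‖ ≤ R := fun x hx => by
    simpa using hR (subset_tsupport _ hx)
  let k : E2 → ℝ := (Metric.ball (0:E2) (R+1)).indicator G
  have hk : Integrable k volume := by
    rw [integrable_indicator_iff measurableSet_ball]
    exact (hG.integrableOn_isCompact (isCompact_closedBall (0:E2) (R+1))).mono_set
      Metric.ball_subset_closedBall
  -- on the support of `φ`, only the values of `G` on a fixed ball matter
  have hmolk : ∀ n x, φ x ≠ 0 → mol n G x = mol n k x := by
    intro n x hx
    unfold mol
    congr with t
    by_cases ht : t ∈ Metric.ball (0:E2) (R+1)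
    · simp [k, ht]
    · rw [rho_eq_zero n, zero_mul, zero_mul]
      rw [mem_ball_zero_iff, not_lt] at ht
      have h1 := hsupp x hx
      have h2 := norm_sub_norm_le t x
      rw [norm_sub_rev] at h2
      linarith
  have hkG : ∀ x, φ x ≠ 0 → k x = G x := by
    intro x hx
    have : x ∈ Metric.ball (0:E2) (R+1) := by
      rw [mem_ball_zero_iff]; linarith [hsupp x hx]
    simp [k, this]
  have hstep : ∀ n, ∫ x, (δ * Real.arctan (mol n f x / δ)) * fderiv ℝ φ x v =
      - ∫ x, (φ x * (1 + (mol n f x / δ) ^ 2)⁻¹) * mol n k x := by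
    intro n
    have hF : ContDiff ℝ 1 (mol n f) := mol_contDiff hfl
    have hF' : ContDiff ℝ 1 (fun x => δ * Real.arctan (mol n f x / δ)) :=
      contDiff_const.mul (Real.contDiff_arctan.comp (hF.div_const δ))
    have hd : ∀ x, fderiv ℝ (fun x => δ * Real.arctan (mol n f x / δ)) x v =
        (1 + (mol n f x / δ) ^ 2)⁻¹ * mol n G x := by
      intro x
      have h1 : HasDerivAt (fun y : ℝ => δ * Real.arctan (y / δ))
          (δ * (1 / (1 + (mol n f x / δ) ^ 2) * (1 / δ))) (mol n f x) :=
        (((hasDerivAt_id _).div_const δ).arctan).const_mul δ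
      have h2 := h1.comp_hasFDerivAt x (hF.differentiable one_ne_zero x).hasFDerivAt
      have h3 : fderiv ℝ (fun x => δ * Real.arctan (mol n f x / δ)) x = _ := h2.fderiv
      rw [h3, smul_apply, fderiv_mol hfl h, smul_eq_mul]
      congr 1
      field_simp
    rw [integral_mul_fderiv_eq_neg_fderiv_mul_of_integrable]
    · congr 1
      congr with x
      by_cases hx : φ x = 0
      · simp [hx]
      · rw [hd, hmolk n x hx]; ring
    · apply Continuous.integrable_of_hasCompactSupport
      · exact ((hF'.continuous_fderiv one_ne_zero).clm_apply continuous_const).mul hφ1.continuous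
      · exact hφc.mul_left
    · exact (hF'.continuous.mul hdφ).integrable_of_hasCompactSupport hdφc.mul_left
    · exact (hF'.continuous.mul hφ1.continuous).integrable_of_hasCompactSupport hφc.mul_left
    · exact fun x _ => hF'.differentiable one_ne_zero x
    · exact fun x _ => hφ1.differentiable one_ne_zero x
  have hdφi : Integrable (fun x => fderiv ℝ φ x v) volume :=
    hdφ.integrable_of_hasCompactSupport hdφc
  have hL : Tendsto (fun n => ∫ x, (δ * Real.arctan (mol n f x / δ)) * fderiv ℝ φ x v) atTop
      (𝓝 (∫ x, (δ * Real.arctan (f x / δ)) * fderiv ℝ φ x v)) := by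
    apply tendsto_integral_of_dominated_convergence (fun x => δ * 2 * |fderiv ℝ φ x v|)
    · intro n
      have := (mol_contDiff (n := n) hfl).continuous
      exact (Continuous.mul (by fun_prop) hdφ).aestronglyMeasurable
    · exact hdφi.abs.const_mul _
    · intro n
      refine Eventually.of_forall fun x => ?_
      rw [norm_mul, norm_mul, Real.norm_of_nonneg hδ.le]
      gcongr
      · exact abs_arctan_le_two _
      · exact le_rfl
    · filter_upwards [mol_tendsto hfl] with x hx
      exact (((Real.continuous_arctan.tendsto _).comp (hx.div_const δ)).const_mul δ).mul_const _
  have hb : ∀ x y, |φ x * (1 + (y / δ) ^ 2)⁻¹| ≤ S := by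
    intro x y
    rw [abs_mul]
    refine le_trans (mul_le_of_le_one_right (abs_nonneg _) ?_) (hS x)
    rw [abs_of_nonneg (by positivity)]
    exact inv_le_one_of_one_le₀ (by nlinarith [sq_nonneg (y/δ)])
  have hpos : ∀ y : ℝ, 1 + (y / δ) ^ 2 ≠ 0 := fun y => by positivity
  have hcont : Continuous fun y : ℝ => (1 + (y / δ) ^ 2)⁻¹ :=
    Continuous.inv₀ (by fun_prop) hpos
  have hR' := mol_pairing hk (w := fun n x => φ x * (1 + (mol n f x / δ) ^ 2)⁻¹)
    (w' := fun x => φ x * (1 + (f x / δ) ^ 2)⁻¹) (S := S)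
    (fun n => (hφ1.continuous.mul
      (hcont.comp (mol_contDiff (n := n) hfl).continuous)).aestronglyMeasurable)
    (hφ1.continuous.aestronglyMeasurable.mul
      (hcont.comp_aestronglyMeasurable hf.aestronglyMeasurable))
    (fun n x => hb x _) (fun x => hb x _)
    (by
      filter_upwards [mol_tendsto hfl] with x hx
      exact ((hcont.tendsto _).comp hx).const_mul _)
  have hE := tendsto_nhds_unique hL (hR'.neg.congr fun n => (hstep n).symm)
  rw [hE]
  congr 2 with x
  by_cases hx : φ x = 0
  · simp [hx]
  · rw [hkG x hx]

/-- A weak derivative of `f` vanishes almost everywhere on `{f = 0}`. As `δ → 0`, the functions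
`δ arctan (f / δ)` tend to `0` uniformly while their derivatives `G / (1 + (f / δ)²)` tend to
`1_{f = 0} G`, so the latter is the weak derivative of `0`. -/
lemma weakDeriv_eq_zero {f G : E2 → ℝ} {v : E2} (hf : Integrable f volume)
    (hG : LocallyIntegrable G volume) (h : WeakDeriv f G v) :
    ∀ᵐ x, f x = 0 → G x = 0 := by
  let ι : E2 → ℝ := fun x => if f x = 0 then 1 else 0
  let δ : ℕ → ℝ := fun m => 1 / ((m:ℝ) + 1)
  have hδ : ∀ m, 0 < δ m := fun m => by positivity
  have hδ0 : Tendsto δ atTop (𝓝 0) := tendsto_one_div_add_atTop_nhds_zero_nat (𝕜 := ℝ)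
  have hcut : ∀ x, Tendsto (fun m => (1 + (f x / δ m) ^ 2)⁻¹) atTop (𝓝 (ι x)) := by
    intro x
    by_cases hx : f x = 0
    · simp [ι, hx]
    · simp only [ι, hx, if_false]
      apply Tendsto.inv_tendsto_atTop
      apply tendsto_atTop_add_const_left
      have : ∀ m, (f x / δ m) ^ 2 = (f x) ^ 2 * (((m:ℝ) + 1) ^ 2) := fun m => by
        simp only [δ]; field_simp
      simp_rw [this]
      apply Tendsto.const_mul_atTop (by positivity)
      exact (tendsto_pow_atTop two_ne_zero).comp
        (tendsto_atTop_add_const_right _ _ tendsto_natCast_atTop_atTop)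
  have hcm : ∀ m, AEStronglyMeasurable (fun x => (1 + (f x / δ m) ^ 2)⁻¹) volume := fun m => by
    have hcont : Continuous fun y : ℝ => (1 + (y / δ m) ^ 2)⁻¹ :=
      Continuous.inv₀ (by fun_prop) (fun y => by positivity)
    exact hcont.comp_aestronglyMeasurable hf.aestronglyMeasurable
  have hιm : AEStronglyMeasurable ι volume :=
    aestronglyMeasurable_of_tendsto_ae atTop hcm (Eventually.of_forall hcut)
  have hιG : LocallyIntegrable (fun x => ι x * G x) volume := by
    refine hG.mono (hιm.mul hG.aestronglyMeasurable) (Eventually.of_forall fun x => ?_)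
    rw [norm_mul]
    refine mul_le_of_le_one_left (norm_nonneg _) ?_
    by_cases hx : f x = 0 <;> simp [ι, hx]
  have key := ae_eq_zero_of_integral_contDiff_smul_eq_zero hιG (fun φ hφ hφc => by
    have hφ1 : ContDiff ℝ 1 φ := hφ.of_le (by simp)
    have hdφ : Continuous fun x => fderiv ℝ φ x v :=
      (hφ1.continuous_fderiv one_ne_zero).clm_apply continuous_const
    have hdφc : HasCompactSupport fun x => fderiv ℝ φ x v := hφc.fderiv_apply ℝ v
    have hφG : Integrable (fun x => φ x * G x) volume :=
      hG.integrable_smul_left_of_hasCompactSupport hφ1.continuous hφc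
    have hR : Tendsto (fun m => ∫ x, (φ x * (1 + (f x / δ m) ^ 2)⁻¹) * G x) atTop
        (𝓝 (∫ x, φ x * (ι x * G x))) := by
      apply tendsto_integral_of_dominated_convergence (fun x => ‖φ x * G x‖)
      · exact fun m => (hφ1.continuous.aestronglyMeasurable.mul (hcm m)).mul
          hG.aestronglyMeasurable
      · exact hφG.norm
      · intro m
        refine Eventually.of_forall fun x => ?_
        rw [norm_mul, norm_mul, norm_mul]
        gcongr
        refine mul_le_of_le_one_right (norm_nonneg _) ?_
        rw [Real.norm_of_nonneg (by positivity)]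
        exact inv_le_one_of_one_le₀ (by nlinarith [sq_nonneg (f x / δ m)])
      · refine Eventually.of_forall fun x => ?_
        have := ((hcut x).const_mul (φ x)).mul_const (G x)
        rwa [mul_assoc] at this
    have hL : Tendsto (fun m => ∫ x, (δ m * Real.arctan (f x / δ m)) * fderiv ℝ φ x v) atTop
        (𝓝 0) := by
      apply squeeze_zero_norm (a := fun m => δ m * ∫ x, 2 * |fderiv ℝ φ x v|)
      · intro m
        rw [← integral_const_mul]
        refine norm_integral_le_of_norm_le
          (((hdφ.integrable_of_hasCompactSupport hdφc).abs.const_mul 2).const_mul _) ?_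
        refine Eventually.of_forall fun x => ?_
        rw [norm_mul, norm_mul, Real.norm_of_nonneg (hδ m).le, mul_assoc]
        refine mul_le_mul_of_nonneg_left ?_ (hδ m).le
        exact mul_le_mul_of_nonneg_right (abs_arctan_le_two _) (norm_nonneg _)
      · simpa using hδ0.mul_const (∫ x, 2 * |fderiv ℝ φ x v|)
    have hL' := hR.neg.congr (fun m => (weakDeriv_chain hf hG h (hδ m) hφ hφc).symm)
    have := tendsto_nhds_unique hL hL'
    simp only [smul_eq_mul]
    linarith)
  filter_upwards [key] with x hx h0
  simpa [ι, h0] using hx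

/-! ### Fisher information of mollified densities -/

/-- `|∇f| = f^{1/2} (|∇f|² / f)^{1/2}`, where the division by `f = 0` gives the value `0`;
the hypothesis `h0` is what makes the identity true there. -/
lemma fisher_split {f : E2 → ℝ} {g : E2 → E2} {x : E2} (hf0 : 0 ≤ f x) (h0 : f x = 0 → g x = 0) :
    ‖g x‖ₑ = ENNReal.ofReal (f x) ^ (1/2:ℝ) * ENNReal.ofReal (‖g x‖ ^ 2 / f x) ^ (1/2:ℝ) := by
  by_cases hx : f x = 0
  · simp [hx, h0 hx]
  · rw [← ENNReal.mul_rpow_of_nonneg _ _ (by norm_num), ← ENNReal.ofReal_mul hf0,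
      mul_div_cancel₀ _ hx, ENNReal.ofReal_rpow_of_nonneg (by positivity) (by norm_num),
      ← Real.sqrt_eq_rpow, Real.sqrt_sq (norm_nonneg _), ofReal_norm]

lemma enorm_fderiv_mol_le {f : E2 → ℝ} {g : E2 → E2} (hf : LocallyIntegrable f volume)
    (hg : LocallyIntegrable g volume)
    (h : ∀ v, WeakDeriv f (fun x => inner ℝ v (g x)) v) (n : ℕ) (x : E2) :
    ‖fderiv ℝ (mol n f) x‖ₑ ≤ ∫⁻ t, ENNReal.ofReal (rho n (x - t)) * ‖g t‖ₑ := by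
  have hgn : LocallyIntegrable (fun t => ‖g t‖) volume := 
    hg.mono hg.aestronglyMeasurable.norm (Eventually.of_forall fun t => by simp)
  have hi := mol_integrand (n := n) hgn x
  have h0 : 0 ≤ mol n (fun t => ‖g t‖) x := mol_nonneg (fun t => norm_nonneg _) x
  have h1 : ‖fderiv ℝ (mol n f) x‖ ≤ mol n (fun t => ‖g t‖) x := by
    refine ContinuousLinearMap.opNorm_le_bound _ h0 fun v => ?_
    rw [fderiv_mol hf (h v)]
    unfold mol
    rw [← integral_mul_const]
    refine norm_integral_le_of_norm_le (hi.mul_const _) (Eventually.of_forall fun t => ?_)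
    rw [norm_mul, Real.norm_of_nonneg (rho_nonneg n _), mul_assoc]
    refine mul_le_mul_of_nonneg_left ?_ (rho_nonneg n _)
    rw [mul_comm]
    exact norm_inner_le_norm _ _
  rw [← ofReal_norm]
  refine (ENNReal.ofReal_le_ofReal h1).trans_eq ?_
  unfold mol
  rw [ofReal_integral_eq_lintegral_ofReal hi
    (Eventually.of_forall fun t => mul_nonneg (rho_nonneg n _) (norm_nonneg _))]
  congr with t
  rw [ENNReal.ofReal_mul (rho_nonneg n _), ofReal_norm]

lemma gradient_ae_eq_zero {f : E2 → ℝ} {g : E2 → E2} (hf : Integrable f volume)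
    (hg : LocallyIntegrable g volume) (h : ∀ v, WeakDeriv f (fun x => inner ℝ v (g x)) v) :
    ∀ᵐ x, f x = 0 → g x = 0 := by
  have hi : ∀ i : Fin 2, ∀ᵐ x, f x = 0 → g x i = 0 := by
    intro i
    have hl : LocallyIntegrable
        (fun x => inner ℝ (EuclideanSpace.single i (1:ℝ)) (g x)) volume := by
      refine hg.mono (hg.aestronglyMeasurable.const_inner) (Eventually.of_forall fun x => ?_)
      refine (norm_inner_le_norm _ _).trans ?_
      simp
    filter_upwards [weakDeriv_eq_zero hf hl (h _)] with x hx h0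
    have h2 := hx h0
    rw [EuclideanSpace.inner_single_left] at h2
    simpa using h2
  filter_upwards [hi 0, hi 1] with x h0 h1 hx
  ext i
  fin_cases i
  · exact h0 hx
  · exact h1 hx

lemma measurable_rho_sub (n : ℕ) :
    Measurable (fun p : E2 × E2 => ENNReal.ofReal (rho n (p.1 - p.2))) :=
  ((rho_continuous n).comp (continuous_fst.sub continuous_snd)).measurable.ennreal_ofReal

lemma measurable_rho_sub_mul (n : ℕ) {e : E2 → ℝ≥0∞} (he : Measurable e) :
    Measurable (fun p : E2 × E2 => ENNReal.ofReal (rho n (p.1 - p.2)) * e p.2) :=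
  (measurable_rho_sub n).mul (he.comp measurable_snd)

lemma lintegral_mol_lintegral (n : ℕ) {e : E2 → ℝ≥0∞} (he : Measurable e) :
    ∫⁻ x, ∫⁻ t, ENNReal.ofReal (rho n (x - t)) * e t = ∫⁻ t, e t := by
  have h1 : ∀ t, ∫⁻ x, ENNReal.ofReal (rho n (x - t)) = 1 := fun t => by
    rw [lintegral_sub_right_eq_self (fun x => ENNReal.ofReal (rho n x)) t, rho_lintegral]
  have h2 : ∀ t, Measurable fun x => ENNReal.ofReal (rho n (x - t)) := fun t =>
    ((rho_continuous n).comp (by fun_prop)).measurable.ennreal_ofReal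
  rw [lintegral_lintegral_swap (measurable_rho_sub_mul n he).aemeasurable]
  congr with t
  rw [lintegral_mul_const _ (h2 t), h1, one_mul]

/-- Mollification does not increase the Fisher information, in pointwise form:
`|∇(ρₙ * f)|² ≤ (ρₙ * f) (ρₙ * (|∇f|² / f))`, by Cauchy–Schwarz for the measure `ρₙ(x - t) dt`. -/
lemma enorm_fderiv_mol_sq_le {f : E2 → ℝ} {g : E2 → E2} (hf0 : ∀ x, 0 ≤ f x)
    (hf : Integrable f volume) (hg : LocallyIntegrable g volume)
    (h : ∀ v, WeakDeriv f (fun x => inner ℝ v (g x)) v) {e : E2 → ℝ≥0∞} (hem : Measurable e)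
    (he : ∀ᵐ t, ENNReal.ofReal (‖g t‖ ^ 2 / f t) = e t) (n : ℕ) (x : E2) :
    ‖fderiv ℝ (mol n f) x‖ₑ ^ (2:ℝ) ≤
      ENNReal.ofReal (mol n f x) * ∫⁻ t, ENNReal.ofReal (rho n (x - t)) * e t := by
  have hfl := hf.locallyIntegrable
  have hρx : Measurable fun t => ENNReal.ofReal (rho n (x - t)) :=
    ((rho_continuous n).comp (by fun_prop)).measurable.ennreal_ofReal
  have hfm : AEMeasurable (fun t => ENNReal.ofReal (rho n (x - t)) * ENNReal.ofReal (f t))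
      volume := hρx.aemeasurable.mul hf.aestronglyMeasurable.aemeasurable.ennreal_ofReal
  have hsplit : ∀ r a b : ℝ≥0∞, r ^ (1/2:ℝ) * a * (r ^ (1/2:ℝ) * b) = r * (a * b) := by
    intro r a b
    calc _ = (r ^ (1/2:ℝ) * r ^ (1/2:ℝ)) * (a * b) := by ring
      _ = _ := by
        rw [← ENNReal.rpow_add_of_nonneg _ _ (by norm_num) (by norm_num)]
        norm_num
  have h1 : ∫⁻ t, ENNReal.ofReal (rho n (x - t)) * ‖g t‖ₑ =
      ∫⁻ t, (ENNReal.ofReal (rho n (x - t)) * ENNReal.ofReal (f t)) ^ (1/2:ℝ) *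
        (ENNReal.ofReal (rho n (x - t)) * e t) ^ (1/2:ℝ) := by
    apply lintegral_congr_ae
    filter_upwards [gradient_ae_eq_zero hf hg h, he] with t ht hmk
    rw [← hmk, fisher_split (hf0 t) ht, ENNReal.mul_rpow_of_nonneg _ _ (by norm_num),
      ENNReal.mul_rpow_of_nonneg _ _ (by norm_num), hsplit]
  have h2 : ENNReal.ofReal (mol n f x) =
      ∫⁻ t, ENNReal.ofReal (rho n (x - t)) * ENNReal.ofReal (f t) := by
    unfold mol
    rw [ofReal_integral_eq_lintegral_ofReal (mol_integrand hfl x)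
      (Eventually.of_forall fun t => mul_nonneg (rho_nonneg n _) (hf0 t))]
    congr with t
    rw [ENNReal.ofReal_mul (rho_nonneg n _)]
  have h3 := cauchy_lint hfm (hρx.mul hem).aemeasurable
  simp only [Pi.mul_apply] at h3
  rw [← h1, ← h2] at h3
  exact (ENNReal.rpow_le_rpow (enorm_fderiv_mol_le hfl hg h n x) (by norm_num)).trans h3

lemma mol_bdd {f : E2 → ℝ} (hf0 : ∀ x, 0 ≤ f x) (hf : Integrable f volume)
    (hf1 : ∫ x, f x = 1) (n : ℕ) : ∃ S, ∀ x, mol n f x ≤ S := by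
  obtain ⟨S, hS⟩ := (rho_continuous n).bounded_above_of_compact_support (rho_compact n)
  refine ⟨S, fun x => ?_⟩
  calc mol n f x ≤ ∫ t, S * f t := by
        refine integral_mono (mol_integrand hf.locallyIntegrable x) (hf.const_mul S) fun t => ?_
        exact mul_le_mul_of_nonneg_right ((le_abs_self _).trans (hS _)) (hf0 t)
    _ = S := by rw [integral_const_mul, hf1, mul_one]

lemma mol_smoothDensity {f : E2 → ℝ} {g : E2 → E2} (hf0 : ∀ x, 0 ≤ f x)
    (hf : Integrable f volume) (hf1 : ∫ x, f x = 1) (hg : LocallyIntegrable g volume)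
    (h : ∀ v, WeakDeriv f (fun x => inner ℝ v (g x)) v)
    (hI : Integrable (fun x => ‖g x‖ ^ 2 / f x) volume) (n : ℕ) :
    ∃ H, SmoothDensity (mol n f) H (ENNReal.ofReal (∫ x, ‖g x‖ ^ 2 / f x)) := by
  -- a Borel representative of the Fisher integrand, needed for Tonelli
  obtain ⟨e, hem, he⟩ := hI.aestronglyMeasurable.aemeasurable.ennreal_ofReal
  refine ⟨fun x => ∫⁻ t, ENNReal.ofReal (rho n (x - t)) * e t,
    mol_contDiff hf.locallyIntegrable, mol_nonneg hf0, mol_bdd hf0 hf hf1 n, ?_, ?_, ?_,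
    enorm_fderiv_mol_sq_le hf0 hf hg h hem he n⟩
  · rw [← ofReal_integral_eq_lintegral_ofReal (mol_integrable hf)
      (Eventually.of_forall (mol_nonneg hf0)), mol_integral hf, hf1, ENNReal.ofReal_one]
  · exact (measurable_rho_sub_mul n hem).lintegral_prod_right'.aemeasurable
  · rw [lintegral_mol_lintegral n hem, ← lintegral_congr_ae he,
      ofReal_integral_eq_lintegral_ofReal hI
        (Eventually.of_forall fun x => div_nonneg (sq_nonneg _) (hf0 x))]

/-! ### Weak gradients and passage to the limit -/

lemma integrable_smul_gradient {f φ : E2 → ℝ} (hf : Integrable f volume)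
    (hφ : ContDiff ℝ (⊤ : ℕ∞) φ) (hφc : HasCompactSupport φ) :
    Integrable (fun x => f x • gradient φ x) volume := by
  have hφ1 : ContDiff ℝ 1 φ := hφ.of_le (by simp)
  have hgrc : Continuous (gradient φ) :=
    (InnerProductSpace.toDual ℝ E2).symm.continuous.comp (hφ1.continuous_fderiv one_ne_zero)
  have hgrs : HasCompactSupport (gradient φ) :=
    (hφc.fderiv ℝ).comp_left (map_zero _)
  obtain ⟨S, hS⟩ := hgrc.bounded_above_of_compact_support hgrs
  exact hf.smul_bdd S hgrc.aestronglyMeasurable (Eventually.of_forall hS)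

lemma weakDeriv_of_gradient {f : E2 → ℝ} {g : E2 → E2} (hf : Integrable f volume)
    (hφg : ∀ φ : E2 → ℝ, ContDiff ℝ (⊤ : ℕ∞) φ → HasCompactSupport φ →
      Integrable (fun x => φ x • g x) volume)
    (h : ∀ φ : E2 → ℝ, ContDiff ℝ (⊤ : ℕ∞) φ → HasCompactSupport φ →
      (∫ x, f x • gradient φ x) = - ∫ x, φ x • g x) (v : E2) :
    WeakDeriv f (fun x => inner ℝ v (g x)) v := by
  intro φ hφ hφc
  have hgr : ∀ x, inner ℝ v (gradient φ x) = fderiv ℝ φ x v := fun x => by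
    rw [real_inner_comm, gradient, InnerProductSpace.toDual_symm_apply]
  have hi1 := integrable_smul_gradient hf hφ hφc
  have h1 := integral_inner (𝕜 := ℝ) hi1 v
  have h2 := integral_inner (𝕜 := ℝ) (hφg φ hφ hφc) v
  simp only [inner_smul_right, hgr] at h1 h2
  beta_reduce
  rw [h1, h2, h φ hφ hφc, inner_neg_right]

/-- Testing with a bump function equal to `1` near a point yields local integrability. -/
lemma locallyIntegrable_of_test {g : E2 → E2}
    (hφg : ∀ φ : E2 → ℝ, ContDiff ℝ (⊤ : ℕ∞) φ → HasCompactSupport φ →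
      Integrable (fun x => φ x • g x) volume) : LocallyIntegrable g volume := by
  intro x
  let χ : ContDiffBump x := ⟨1, 2, one_pos, one_lt_two⟩
  refine ⟨Metric.closedBall x 1, Metric.closedBall_mem_nhds x one_pos, ?_⟩
  refine (hφg χ χ.contDiff χ.hasCompactSupport).integrableOn.congr_fun (fun y hy => ?_)
    measurableSet_closedBall
  have : χ y = 1 := χ.one_of_mem_closedBall hy
  simp [this]

/-- If some `ψ • g` fails to be integrable, its Bochner integral is `0`, and the weak gradient
identity then forces `∫ f ∇φ = 0` for every test function `φ`: either `φ • g` is not integrable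
itself, or `(φ + ψ) • g` is not. Hence `0` is then a weak gradient of `f`. -/
lemma integral_eq_zero_of_not_integrable {f : E2 → ℝ} {g : E2 → E2} (hf : Integrable f volume)
    (h : ∀ φ : E2 → ℝ, ContDiff ℝ (⊤ : ℕ∞) φ → HasCompactSupport φ →
      (∫ x, f x • gradient φ x) = - ∫ x, φ x • g x)
    (hφg : ¬ ∀ φ : E2 → ℝ, ContDiff ℝ (⊤ : ℕ∞) φ → HasCompactSupport φ →
      Integrable (fun x => φ x • g x) volume)
    (φ : E2 → ℝ) (hφ : ContDiff ℝ (⊤ : ℕ∞) φ) (hφc : HasCompactSupport φ) :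
    ∫ x, f x • gradient φ x = 0 := by
  by_cases hi : Integrable (fun x => φ x • g x) volume
  swap
  · rw [h φ hφ hφc, integral_undef hi, neg_zero]
  push Not at hφg
  obtain ⟨ψ, hψ, hψc, hψi⟩ := hφg
  have hsum : ¬ Integrable (fun x => (φ + ψ) x • g x) volume := by
    intro hs
    refine hψi ((hs.sub hi).congr (Eventually.of_forall fun x => ?_))
    simp [add_smul]
  have e1 : ∫ x, f x • gradient ψ x = 0 := by rw [h ψ hψ hψc, integral_undef hψi, neg_zero]
  have e2 : ∫ x, f x • gradient (φ + ψ) x = 0 := by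
    rw [h (φ + ψ) (hφ.add hψ) (hφc.add hψc), integral_undef hsum, neg_zero]
  have hadd : ∀ x, f x • gradient (φ + ψ) x = f x • gradient φ x + f x • gradient ψ x := by
    intro x
    have d1 := hφ.differentiable (by simp) x
    have d2 := hψ.differentiable (by simp) x
    rw [← smul_add]
    congr 1
    unfold gradient
    rw [fderiv_add d1 d2, map_add]
  simp_rw [hadd] at e2
  rw [integral_add (integrable_smul_gradient hf hφ hφc)
    (integrable_smul_gradient hf hψ hψc), e1, add_zero] at e2
  exact e2

/-- Transfer of an a priori bound for smooth densities to `f`, by mollification and Fatou. -/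
lemma lintegral_rpow_le {p : ℝ} {C : ℝ≥0} (hC : ∀ F H J,
      SmoothDensity F H J → ∫⁻ x, ENNReal.ofReal (F x) ^ p ≤ C * J ^ (p - 1))
    {f : E2 → ℝ} {g : E2 → E2} (hf0 : ∀ x, 0 ≤ f x)
    (hf : Integrable f volume) (hf1 : ∫ x, f x = 1)
    (hφg : ∀ φ : E2 → ℝ, ContDiff ℝ (⊤ : ℕ∞) φ → HasCompactSupport φ →
      Integrable (fun x => φ x • g x) volume)
    (h : ∀ φ : E2 → ℝ, ContDiff ℝ (⊤ : ℕ∞) φ → HasCompactSupport φ →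
      (∫ x, f x • gradient φ x) = - ∫ x, φ x • g x)
    (hI : Integrable (fun x => ‖g x‖ ^ 2 / f x) volume) :
    ∫⁻ x, ENNReal.ofReal (f x) ^ p ≤
      C * ENNReal.ofReal (∫ x, ‖g x‖ ^ 2 / f x) ^ (p - 1) := by
  have hlim : ∀ᵐ x, ENNReal.ofReal (f x) ^ p =
      liminf (fun n => ENNReal.ofReal (mol n f x) ^ p) atTop := by
    filter_upwards [mol_tendsto hf.locallyIntegrable] with x hx
    exact (((ENNReal.continuous_rpow_const.tendsto _).comp
      (ENNReal.tendsto_ofReal hx)).liminf_eq).symm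
  rw [lintegral_congr_ae hlim]
  refine (lintegral_liminf_le fun n => ?_).trans ?_
  · exact ((mol_contDiff hf.locallyIntegrable).continuous.measurable.ennreal_ofReal).pow_const _
  · refine liminf_le_of_le (by isBoundedDefault) fun b hb => ?_
    obtain ⟨n, hn⟩ := hb.exists
    obtain ⟨H, hH⟩ := mol_smoothDensity hf0 hf hf1 (locallyIntegrable_of_test hφg)
      (weakDeriv_of_gradient hf hφg h) hI n
    exact hn.trans (hC _ _ _ hH)

/-- For any probability density `f` on `ℝ²` with weak gradient `g` and finite Fisher
information `I(f) = ∫ ‖∇f‖²/f`, and any `p ∈ [1,∞)`, there is a constant `C_p` depending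
only on `p` such that `‖f‖_{L^p} ≤ C_p · I(f)^{1-1/p}`. -/
theorem stmt0 (p : ℝ) (hp : 1 ≤ p) :
    ∃ C : ℝ, 0 < C ∧
      ∀ (f : E2 → ℝ) (g : E2 → E2),
        (∀ x, 0 ≤ f x) →
        Integrable f volume →
        (∫ x, f x) = 1 →
        (∀ φ : E2 → ℝ, ContDiff ℝ (⊤ : ℕ∞) φ → HasCompactSupport φ →
          (∫ x, f x • gradient φ x) = - ∫ x, φ x • g x) →
        Integrable (fun x => ‖g x‖ ^ 2 / f x) volume →
        eLpNorm f (ENNReal.ofReal p) volume ≤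
          ENNReal.ofReal (C * (∫ x, ‖g x‖ ^ 2 / f x) ^ (1 - 1 / p)) := by
  obtain ⟨C, hC⟩ := SmoothDensity.bound hp
  have hp0 : 0 < p := by linarith
  refine ⟨(C:ℝ) ^ (1/p) + 1, by positivity, fun f g hf0 hf hf1 h hI => ?_⟩
  have hI0 : 0 ≤ ∫ x, ‖g x‖ ^ 2 / f x :=
    integral_nonneg fun x => div_nonneg (sq_nonneg _) (hf0 x)
  have key : ∫⁻ x, ENNReal.ofReal (f x) ^ p ≤
      C * ENNReal.ofReal (∫ x, ‖g x‖ ^ 2 / f x) ^ (p - 1) := by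
    by_cases hφg : ∀ φ : E2 → ℝ, ContDiff ℝ (⊤ : ℕ∞) φ → HasCompactSupport φ →
      Integrable (fun x => φ x • g x) volume
    · exact lintegral_rpow_le hC hf0 hf hf1 hφg h hI
    -- here the zero gradient also satisfies the hypotheses, and its Fisher information is `0`
    · have h0 := lintegral_rpow_le hC (g := fun _ => 0) hf0 hf hf1 (by simp)
        (fun φ hφ hφc => by
          simpa using integral_eq_zero_of_not_integrable hf h hφg φ hφ hφc) (by simp)
      refine h0.trans ?_
      refine mul_le_mul' le_rfl (ENNReal.rpow_le_rpow (ENNReal.ofReal_le_ofReal ?_) (by linarith))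
      simpa using hI0
  rw [eLpNorm_eq_lintegral_rpow_enorm_toReal (by simpa using hp0) (by simp),
    ENNReal.toReal_ofReal hp0.le]
  simp_rw [fun x => Real.enorm_of_nonneg (hf0 x)]
  calc (∫⁻ x, ENNReal.ofReal (f x) ^ p) ^ (1/p)
      ≤ (C * ENNReal.ofReal (∫ x, ‖g x‖ ^ 2 / f x) ^ (p - 1)) ^ (1/p) := by gcongr
    _ = ENNReal.ofReal ((C:ℝ) ^ (1/p) * (∫ x, ‖g x‖ ^ 2 / f x) ^ (1 - 1/p)) := by
        rw [ENNReal.mul_rpow_of_nonneg _ _ (by positivity), ← ENNReal.rpow_mul,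
          ENNReal.ofReal_mul (by positivity),
          ← ENNReal.ofReal_rpow_of_nonneg hI0 (by
            rw [sub_nonneg, div_le_one hp0]; exact hp),
          ← ENNReal.ofReal_rpow_of_nonneg C.coe_nonneg (by positivity), ENNReal.ofReal_coe_nnreal]
        congr 2
        field_simp
    _ ≤ _ := by
        apply ENNReal.ofReal_le_ofReal
        have := Real.rpow_nonneg hI0 (1 - 1/p)
        nlinarith
end
end

section
/- For any probability density f on ℝ² with finite Fisher information I(f), and any q ∈ [1, 2), there is a constant C_q depending only on q such that ‖∇f‖_{L^q(ℝ²)} ≤ C_q · I(f)^{3/2 - 1/q}. -/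
/-!
Set `p = q/(2-q)`, so that `2p` is the Sobolev exponent of `q` in dimension two. Writing
`|∇f| = f^(1/2) (|∇f|²/f)^(1/2)`, Hölder's inequality gives
`∫ |∇f|^q ≤ I(f)^(q/2) (∫ f^p)^(1-q/2)` (`holder_grad`), so everything reduces to
`∫ f^p ≤ K I(f)^(p-1)` (`density_bound`). Sobolev's inequality followed by the same Hölder
inequality bounds `∫ f^(2p)` by a multiple of `I(f)^p ∫ f^p`, and interpolating `L^p` between `L¹`
and `L^(2p)` turns this into an inequality for `∫ f^p` alone, which closes when `∫ f^p` is finite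
(`smooth_bound`). Finiteness and smoothness are obtained by mollifying `f`: by Cauchy-Schwarz the
mollification does not increase the Fisher information (`moll_grad_bound`), and Fatou's lemma removes
it. Collecting powers of `I(f)` gives the exponent `3/2 - 1/q`.

Two points concern the formulation. The pointwise identity for `|∇f|` needs `∇f = 0` almost
everywhere on `{f = 0}`, where `|∇f|²/f` is `0` by convention (`grad_eq_zero`). It is proved by
differentiating `∫ f φ(· - s v) ≥ 0` in `s` for `φ` close to the indicator of a piece of `{f = 0}`.
The integrability of `φ ∇f` for test functions `φ` is not assumed, but follows from the integration
by parts formula because `f` has mass one (`isWeakGrad_of_eq`).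
-/

open MeasureTheory

noncomputable section

open Filter Topology ENNReal NNReal

/-! ### Cutoffs and the Sobolev inequality on the whole plane -/

/-- Cutoffs `χ n = B (· / (n + 1))` obtained by dilating one smooth bump `B`: they tend to `1` and
their gradients tend to `0` uniformly. -/
lemma exists_cutoff : ∃ (χ : ℕ → E2 → ℝ) (c : ℝ), 0 ≤ c ∧ (∀ n, ContDiff ℝ 1 (χ n)) ∧
    (∀ n, HasCompactSupport (χ n)) ∧ (∀ n x, ‖χ n x‖ ≤ 1) ∧
    (∀ n x, ‖fderiv ℝ (χ n) x‖ ≤ c / (n + 1)) ∧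
    (∀ x, Tendsto (fun n => χ n x) atTop (𝓝 1)) := by
  let B : ContDiffBump (0 : E2) := ⟨1, 2, one_pos, one_lt_two⟩
  have hB : ContDiff ℝ 1 B := B.contDiff
  obtain ⟨c, hc⟩ := (B.hasCompactSupport.fderiv (𝕜 := ℝ)).exists_bound_of_continuous
    (hB.continuous_fderiv one_ne_zero)
  have hpos : ∀ n : ℕ, (0 : ℝ) < n + 1 := fun n => by positivity
  refine ⟨fun n x => B (((n : ℝ) + 1)⁻¹ • x), c, (norm_nonneg _).trans (hc 0), ?_, ?_, ?_, ?_, ?_⟩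
  · intro n
    exact hB.comp (contDiff_const_smul _)
  · intro n
    exact B.hasCompactSupport.comp_homeomorph
      (Homeomorph.smulOfNeZero ((n : ℝ) + 1)⁻¹ (inv_ne_zero (hpos n).ne'))
  · intro n x
    rw [Real.norm_of_nonneg B.nonneg]
    exact B.le_one
  · intro n x
    rw [fderiv_comp_smul, norm_smul, norm_inv, Real.norm_of_nonneg (hpos n).le, div_eq_inv_mul]
    gcongr
    exact hc _
  · intro x
    apply tendsto_const_nhds.congr'
    obtain ⟨N, hN⟩ := exists_nat_ge ‖x‖
    filter_upwards [eventually_ge_atTop N] with n hn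
    symm
    apply B.one_of_mem_closedBall
    rw [mem_closedBall_zero_iff, norm_smul, norm_inv, Real.norm_of_nonneg (hpos n).le,
      inv_mul_le_iff₀ (hpos n)]
    have : (N : ℝ) ≤ n := by exact_mod_cast hn
    change ‖x‖ ≤ (n + 1) * 1
    linarith

/-- The constant of the Gagliardo-Nirenberg-Sobolev inequality on `ℝ²` for the exponents `q` and
`2q/(2-q)`. -/
def sobC (q : ℝ) : ℝ≥0 := SNormLESNormFDerivOfEqConst ℝ (volume : Measure E2) q

/-- Sobolev's inequality for `u ∈ L^q` without compact support: it is applied to `χ n * u`, where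
the error term `‖u ∇(χ n)‖_q` tends to `0`, and the left side passes to the limit by Fatou. -/
lemma sobolev_global_s1 {u : E2 → ℝ} (hu : ContDiff ℝ 1 u) {q r : ℝ≥0} (hq : 1 ≤ q)
    (hr : (r : ℝ)⁻¹ = (q : ℝ)⁻¹ - 2⁻¹) (huq : eLpNorm u q volume ≠ ∞) :
    eLpNorm u r volume ≤ sobC q * eLpNorm (fderiv ℝ u) q volume := by
  obtain ⟨χ, c, hc, h1, h2, h3, h4, h5⟩ := exists_cutoff
  have hcont := hu.continuous
  have hdcont := hu.continuous_fderiv one_ne_zero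
  have key : ∀ n, eLpNorm (fun x => χ n x * u x) r volume ≤
      sobC q * (eLpNorm (fderiv ℝ u) q volume +
        ENNReal.ofReal (c / (n + 1)) * eLpNorm u q volume) := by
    intro n
    have hχu : ContDiff ℝ 1 (fun x => χ n x * u x) := (h1 n).mul hu
    refine (eLpNorm_le_eLpNorm_fderiv_of_eq (μ := volume) hχu ((h2 n).mul_right) hq
      (by simp) (by simpa using hr)).trans ?_
    refine mul_le_mul_right ?_ _
    have e : fderiv ℝ (fun x => χ n x * u x) =
        (fun x => χ n x • fderiv ℝ u x) + (fun x => u x • fderiv ℝ (χ n) x) := by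
      ext1 x
      rw [fderiv_fun_mul ((h1 n).differentiable one_ne_zero x)
        (hu.differentiable one_ne_zero x)]
      rfl
    rw [e]
    have m1 : AEStronglyMeasurable (fun x => χ n x • fderiv ℝ u x) volume :=
      Continuous.aestronglyMeasurable ((h1 n).continuous.smul hdcont)
    have m2 : AEStronglyMeasurable (fun x => u x • fderiv ℝ (χ n) x) volume :=
      Continuous.aestronglyMeasurable (hcont.smul ((h1 n).continuous_fderiv one_ne_zero))
    have hq' : (1 : ℝ≥0∞) ≤ q := by exact_mod_cast hq
    refine (eLpNorm_add_le m1 m2 hq').trans (add_le_add ?_ ?_)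
    · refine eLpNorm_mono fun x => ?_
      rw [norm_smul]
      exact mul_le_of_le_one_left (norm_nonneg _) (h3 n x)
    · refine eLpNorm_le_mul_eLpNorm_of_ae_le_mul (Eventually.of_forall fun x => ?_) _
      rw [norm_smul, mul_comm]
      gcongr
      exact h4 n x
  refine (Lp.eLpNorm_lim_le_liminf_eLpNorm (f := fun n x => χ n x * u x)
    (fun n => ((h1 n).continuous.mul hcont).aestronglyMeasurable) u
    (Eventually.of_forall fun x => by simpa using (h5 x).mul_const (u x))).trans ?_
  have hlim : Tendsto (fun n : ℕ => (sobC q : ℝ≥0∞) * (eLpNorm (fderiv ℝ u) q volume +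
        ENNReal.ofReal (c / (n + 1)) * eLpNorm u q volume)) atTop
      (𝓝 (sobC q * (eLpNorm (fderiv ℝ u) q volume + 0 * eLpNorm u q volume))) := by
    refine ENNReal.Tendsto.const_mul (tendsto_const_nhds.add
      (ENNReal.Tendsto.mul_const ?_ (Or.inr huq))) (Or.inr coe_ne_top)
    rw [← ENNReal.ofReal_zero]
    refine ENNReal.tendsto_ofReal ?_
    exact tendsto_const_div_atTop_nhds_zero_nat c |>.comp (tendsto_add_atTop_nat 1) |>.congr
      fun n => by simp
  rw [zero_mul, add_zero] at hlim
  rw [← hlim.liminf_eq]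
  exact liminf_le_liminf (Eventually.of_forall key)

/-! ### The a priori bound for smooth densities -/

/-- Hölder's inequality with exponents `2/q` and `2/(2-q)`: a pointwise bound `G ≤ √(F h)` controls
`∫ G^q` by `∫ h` (the Fisher information in the applications) and `∫ F^p`, `p = q/(2-q)`. -/
lemma holder_grad {G F h : E2 → ℝ≥0∞} (hF : AEMeasurable F) (hh : AEMeasurable h)
    (hG : ∀ᵐ x, G x ≤ F x ^ (1 / 2 : ℝ) * h x ^ (1 / 2 : ℝ)) {p q : ℝ} (hq : 1 ≤ q) (hq2 : q < 2)
    (hp : p = q / (2 - q)) :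
    ∫⁻ x, G x ^ q ≤ (∫⁻ x, h x) ^ (q / 2) * (∫⁻ x, F x ^ p) ^ (1 - q / 2) := by
  have h2 : (0 : ℝ) < 2 - q := by linarith
  refine le_trans (lintegral_mono_ae (g := fun x => h x ^ (q / 2) * (F x ^ p) ^ (1 - q / 2)) ?_)
    (ENNReal.lintegral_mul_norm_pow_le hh (hF.pow_const p) (by linarith) (by linarith) (by ring))
  filter_upwards [hG] with x hx
  refine (ENNReal.rpow_le_rpow hx (by linarith)).trans (le_of_eq ?_)
  rw [ENNReal.mul_rpow_of_nonneg _ _ (by linarith), ← ENNReal.rpow_mul, ← ENNReal.rpow_mul,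
    ← ENNReal.rpow_mul, mul_comm]
  congr 2
  · ring
  · rw [hp]; field_simp

/-- The constant `K` in the bound `∫ f^p ≤ K I^(p-1)`, `p = q/(2-q)`: it is `S^(2(p-1))` with `S`
the Sobolev constant, in the form in which absorbing `∫ f^p` produces it. -/
def fisherK (q : ℝ) : ℝ≥0∞ :=
  ((sobC q : ℝ≥0∞) ^ (2 * (q / (2 - q)))) ^ ((q / (2 - q) - 1) / (q / (2 - q)))

/-- The a priori bound `∫ F^p ≤ K (∫ h)^(p-1)` for a bounded `C¹` subprobability density with
`|∇F| ≤ √(F h)`. With `A = ∫ F^p`, `B = ∫ F^(2p)` and `J = ∫ h`, the Sobolev and Hölder inequalities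
give `B ≤ S^(2p) J^p A`, interpolation gives `A ≤ B^((p-1)/(2p-1))`, and the resulting power of `A`
on the right is smaller than `1`, so it can be absorbed because `A` is finite. -/
lemma smooth_bound {F : E2 → ℝ} (hF : ContDiff ℝ 1 F) (hF0 : ∀ x, 0 ≤ F x) {M : ℝ}
    (hM : ∀ x, F x ≤ M) (hF1 : ∫⁻ x, ENNReal.ofReal (F x) ≤ 1) {h : E2 → ℝ≥0∞}
    (hh : AEMeasurable h)
    (hG : ∀ x, ‖fderiv ℝ F x‖ₑ ≤ ENNReal.ofReal (F x) ^ (1 / 2 : ℝ) * h x ^ (1 / 2 : ℝ))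
    {p q : ℝ} (hq : 1 ≤ q) (hq2 : q < 2) (hp : p = q / (2 - q)) :
    ∫⁻ x, ENNReal.ofReal (F x) ^ p ≤ fisherK q * (∫⁻ x, h x) ^ (p - 1) := by
  have h2 : (0 : ℝ) < 2 - q := by linarith
  have hp1 : 1 ≤ p := by rw [hp, le_div_iff₀ h2]; linarith
  set A := ∫⁻ x, ENNReal.ofReal (F x) ^ p with hA
  set B := ∫⁻ x, ENNReal.ofReal (F x) ^ (2 * p) with hB
  set D := ∫⁻ x, ‖fderiv ℝ F x‖ₑ ^ q with hD
  set J := ∫⁻ x, h x with hJ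
  set K : ℝ≥0∞ := (sobC q : ℝ≥0∞) ^ (2 * p) with hK
  have hmeas : AEMeasurable (fun x => ENNReal.ofReal (F x)) (volume : Measure E2) :=
    hF.continuous.measurable.ennreal_ofReal.aemeasurable
  have hfin : ∀ r : ℝ, 1 ≤ r → ∫⁻ x, ENNReal.ofReal (F x) ^ r ≠ ∞ := by
    intro r hr
    have : ∫⁻ x, ENNReal.ofReal (F x) ^ r ≤ ENNReal.ofReal M ^ (r - 1) * 1 := by
      refine le_trans ?_ (mul_le_mul_right hF1 _)
      rw [← lintegral_const_mul' _ _ (ENNReal.rpow_ne_top_of_nonneg (by linarith) (by simp))]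
      refine lintegral_mono fun x => ?_
      calc ENNReal.ofReal (F x) ^ r = ENNReal.ofReal (F x) ^ (r - 1 + 1) := by ring_nf
        _ = ENNReal.ofReal (F x) ^ (r - 1) * ENNReal.ofReal (F x) := by
            rw [ENNReal.rpow_add_of_nonneg _ _ (by linarith) (by norm_num), ENNReal.rpow_one]
        _ ≤ _ := by
            refine mul_le_mul_left (ENNReal.rpow_le_rpow (ENNReal.ofReal_le_ofReal (hM x)) ?_) _
            linarith
    exact ne_top_of_le_ne_top (ENNReal.mul_ne_top
      (ENNReal.rpow_ne_top_of_nonneg (by linarith) (by simp)) (by simp)) this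
  have henorm : ∀ x, ‖F x‖ₑ = ENNReal.ofReal (F x) := fun x => by
    rw [← ofReal_norm, Real.norm_of_nonneg (hF0 x)]
  have hnorm : ∀ r : ℝ, 0 < r → eLpNorm F (ENNReal.ofReal r) volume =
      (∫⁻ x, ENNReal.ofReal (F x) ^ r) ^ (1 / r) := by
    intro r hr
    rw [eLpNorm_eq_lintegral_rpow_enorm_toReal (by simpa using hr) (by simp),
      ENNReal.toReal_ofReal hr.le]
    simp_rw [henorm]
  -- Sobolev's inequality with exponents `q` and `q* = 2q/(2-q) = 2p`
  have hsob : B ^ (1 / (2 * p)) ≤ sobC q * D ^ (1 / q) := by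
    have := sobolev_global_s1 hF (q := q.toNNReal) (r := (2 * p).toNNReal)
      (by simpa using hq) (by
        rw [Real.coe_toNNReal _ (by linarith), Real.coe_toNNReal _ (by linarith), hp]
        field_simp) (by
        change eLpNorm F (ENNReal.ofReal q) volume ≠ ∞
        rw [hnorm q (by linarith)]
        exact ENNReal.rpow_ne_top_of_nonneg (by positivity) (hfin q hq))
    change eLpNorm F (ENNReal.ofReal (2 * p)) volume ≤
      _ * eLpNorm _ (ENNReal.ofReal q) volume at this
    rw [hnorm _ (by linarith), Real.coe_toNNReal _ (by linarith),
      eLpNorm_eq_lintegral_rpow_enorm_toReal (p := ENNReal.ofReal q) (by simp; linarith) (by simp),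
      ENNReal.toReal_ofReal (by linarith)] at this
    exact this
  have hDle : D ≤ J ^ (q / 2) * A ^ (1 - q / 2) :=
    holder_grad hmeas hh (Eventually.of_forall hG) hq hq2 hp
  have hBle : B ≤ K * (J ^ p * A) := by
    have h3 := ENNReal.rpow_le_rpow hsob (z := 2 * p) (by linarith)
    rw [← ENNReal.rpow_mul, one_div_mul_cancel (by linarith), ENNReal.rpow_one,
      ENNReal.mul_rpow_of_nonneg _ _ (by linarith), ← ENNReal.rpow_mul] at h3
    refine h3.trans (mul_le_mul_right ?_ _)
    refine (ENNReal.rpow_le_rpow hDle (by positivity)).trans (le_of_eq ?_)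
    rw [ENNReal.mul_rpow_of_nonneg _ _ (by positivity), ← ENNReal.rpow_mul, ← ENNReal.rpow_mul]
    have e1 : q / 2 * (1 / q * (2 * p)) = p := by field_simp
    have e2 : (1 - q / 2) * (1 / q * (2 * p)) = 1 := by rw [hp]; field_simp
    rw [e1, e2, ENNReal.rpow_one]
  -- interpolation between `L¹` and `L^{2p}`
  have h2p : (0 : ℝ) < 2 * p - 1 := by linarith
  have hAB : A ≤ B ^ ((p - 1) / (2 * p - 1)) := by
    have h4 := ENNReal.lintegral_mul_norm_pow_le (μ := (volume : Measure E2)) hmeas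
      (hmeas.pow_const (2 * p)) (p := p / (2 * p - 1)) (q := (p - 1) / (2 * p - 1))
      (by positivity) (div_nonneg (by linarith) h2p.le)
      (by rw [← add_div, div_eq_one_iff_eq h2p.ne']; ring)
    have h5 : A = ∫⁻ x, ENNReal.ofReal (F x) ^ (p / (2 * p - 1)) *
        (ENNReal.ofReal (F x) ^ (2 * p)) ^ ((p - 1) / (2 * p - 1)) := by
      refine lintegral_congr fun x => ?_
      rw [← ENNReal.rpow_mul, ← ENNReal.rpow_add_of_nonneg _ _ (by positivity)
        (mul_nonneg (by linarith) (div_nonneg (by linarith) h2p.le))]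
      congr 1
      rw [← mul_div_assoc, ← add_div, eq_div_iff h2p.ne']
      ring
    rw [h5]
    refine h4.trans ?_
    calc _ ≤ (1 : ℝ≥0∞) ^ (p / (2 * p - 1)) * B ^ ((p - 1) / (2 * p - 1)) := by gcongr
      _ = _ := by simp
  -- absorb the power of `A` on the right
  set t := (p - 1) / (2 * p - 1) with ht
  have ht0 : 0 ≤ t := div_nonneg (by linarith) h2p.le
  have ht1 : 1 - t = p / (2 * p - 1) := by
    rw [ht, eq_div_iff h2p.ne', sub_mul, div_mul_cancel₀ _ h2p.ne']
    ring
  have ht1' : 0 < 1 - t := by rw [ht1]; positivity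
  have hAfin : A ≠ ∞ := hfin p hp1
  rcases eq_or_ne A 0 with hA0 | hA0
  · rw [hA0]; exact zero_le
  have h6 : A ^ (1 - t) * A ^ t ≤ (K * J ^ p) ^ t * A ^ t := by
    rw [← ENNReal.rpow_add _ _ hA0 hAfin, ← ENNReal.mul_rpow_of_nonneg _ _ ht0,
      sub_add_cancel, ENNReal.rpow_one, mul_assoc]
    exact hAB.trans (ENNReal.rpow_le_rpow hBle ht0)
  have h7 : A ^ (1 - t) ≤ (K * J ^ p) ^ t :=
    (ENNReal.mul_le_mul_iff_left (by simp [hA0, hAfin]) (by simp [hA0, hAfin])).1 h6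
  have h8 := ENNReal.rpow_le_rpow h7 (z := 1 / (1 - t)) (by positivity)
  rw [← ENNReal.rpow_mul, mul_one_div_cancel ht1'.ne', ENNReal.rpow_one, ← ENNReal.rpow_mul,
    ENNReal.mul_rpow_of_nonneg _ _ (by positivity), ← ENNReal.rpow_mul J] at h8
  have e3 : t * (1 / (1 - t)) = (p - 1) / p := by
    rw [ht1, ht, one_div_div, div_mul_div_cancel₀ h2p.ne']
  rw [e3, mul_div_cancel₀ _ (by linarith : p ≠ 0)] at h8
  rw [fisherK, ← hp]
  exact h8

/-! ### Weak gradients and mollification -/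

/-- `g` is a weak gradient of `f`. The integrability of `φ • g` is part of the notion, so that
the integral `∫ φ • g` in the second field is never the junk value `0`. -/
structure IsWeakGrad (f : E2 → ℝ) (g : E2 → E2) : Prop where
  int : ∀ φ : E2 → ℝ, ContDiff ℝ (⊤ : ℕ∞) φ → HasCompactSupport φ →
    Integrable (fun x => φ x • g x) volume
  eq : ∀ φ : E2 → ℝ, ContDiff ℝ (⊤ : ℕ∞) φ → HasCompactSupport φ →
    (∫ x, f x • gradient φ x) = - ∫ x, φ x • g x

lemma integrable_mul_test {f : E2 → ℝ} (hf : Integrable f volume) {φ : E2 → ℝ}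
    (hφ : Continuous φ) (hφc : HasCompactSupport φ) : Integrable (fun x => φ x * f x) volume := by
  obtain ⟨c, hc⟩ := hφc.exists_bound_of_continuous hφ
  exact hf.bdd_mul hφ.aestronglyMeasurable (Eventually.of_forall hc)

lemma inner_gradient (φ : E2 → ℝ) (x v : E2) : inner ℝ v (gradient φ x) = fderiv ℝ φ x v := by
  rw [real_inner_comm, gradient, InnerProductSpace.toDual_symm_apply]

/-- The definition of the weak gradient, paired with a direction `v`. -/
lemma IsWeakGrad.dir {f : E2 → ℝ} {g : E2 → E2} (hf : Integrable f volume) (W : IsWeakGrad f g)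
    {φ : E2 → ℝ} (hφ : ContDiff ℝ (⊤ : ℕ∞) φ) (hφc : HasCompactSupport φ) (v : E2) :
    ∫ x, f x * fderiv ℝ φ x v = - inner ℝ v (∫ x, φ x • g x) := by
  have hφ1 : ContDiff ℝ 1 φ := hφ.of_le (by exact_mod_cast le_top)
  have hgc : Continuous (gradient φ) :=
    (InnerProductSpace.toDual ℝ E2).symm.continuous.comp (hφ1.continuous_fderiv one_ne_zero)
  obtain ⟨c, hc⟩ := (hφc.fderiv (𝕜 := ℝ)).exists_bound_of_continuous
    (hφ1.continuous_fderiv one_ne_zero)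
  have hi : Integrable (fun x => f x • gradient φ x) volume := by
    refine hf.smul_bdd c hgc.aestronglyMeasurable (Eventually.of_forall fun x => ?_)
    rw [gradient, LinearIsometryEquiv.norm_map]
    exact hc x
  rw [← inner_neg_right, ← W.eq φ hφ hφc, ← integral_inner hi]
  refine integral_congr_ae (Eventually.of_forall fun x => ?_)
  simp only
  rw [inner_smul_right, inner_gradient]

/-- The mollification `ρ * f` of `f` by the normalized bump `ρ`. -/
def moll (ρ : ContDiffBump (0 : E2)) (f : E2 → ℝ) (x : E2) : ℝ :=
  ∫ y, ρ.normed volume (x - y) * f y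

section Moll

variable (ρ : ContDiffBump (0 : E2))

lemma moll_eq (f : E2 → ℝ) :
    moll ρ f = convolution (ρ.normed volume) f (ContinuousLinearMap.lsmul ℝ ℝ) volume := by
  ext x
  rw [convolution_eq_swap]
  rfl

lemma test_contDiff (x : E2) : ContDiff ℝ (⊤ : ℕ∞) (fun y => ρ.normed volume (x - y)) :=
  ρ.contDiff_normed.comp (contDiff_const.sub contDiff_id)

lemma test_compact (x : E2) : HasCompactSupport (fun y => ρ.normed volume (x - y)) :=
  ρ.hasCompactSupport_normed.comp_homeomorph (Homeomorph.subLeft x)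

variable {f : E2 → ℝ}

lemma moll_integrable (hf : Integrable f volume) (x : E2) :
    Integrable (fun y => ρ.normed volume (x - y) * f y) volume :=
  integrable_mul_test hf (test_contDiff ρ x).continuous (test_compact ρ x)

lemma moll_contDiff (hf : Integrable f volume) : ContDiff ℝ (⊤ : ℕ∞) (moll ρ f) := by
  rw [moll_eq]
  exact ρ.hasCompactSupport_normed.contDiff_convolution_left _ ρ.contDiff_normed
    hf.locallyIntegrable

lemma moll_nonneg (hf0 : ∀ x, 0 ≤ f x) (x : E2) : 0 ≤ moll ρ f x :=
  integral_nonneg fun y => mul_nonneg (ρ.nonneg_normed _) (hf0 y)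

lemma moll_fderiv (hf : Integrable f volume) (x v : E2) :
    fderiv ℝ (moll ρ f) x v = - ∫ y, f y * fderiv ℝ (fun y => ρ.normed volume (x - y)) y v := by
  have h1 : ContDiff ℝ 1 (ρ.normed volume) := ρ.contDiff_normed (n := 1)
  have := ρ.hasCompactSupport_normed.hasFDerivAt_convolution_left
    (ContinuousLinearMap.lsmul ℝ ℝ) h1 hf.locallyIntegrable x (μ := volume)
  rw [moll_eq, this.fderiv, convolution_eq_swap]
  obtain ⟨c, hc⟩ := (ρ.hasCompactSupport_normed.fderiv (𝕜 := ℝ)).exists_bound_of_continuous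
    (h1.continuous_fderiv one_ne_zero)
  have hi : Integrable (fun y => f y • fderiv ℝ (ρ.normed volume) (x - y)) volume := by
    refine hf.smul_bdd c (Continuous.aestronglyMeasurable ?_) (Eventually.of_forall fun y => hc _)
    exact (h1.continuous_fderiv one_ne_zero).comp (continuous_const.sub continuous_id)
  have e : ∀ y, ((ContinuousLinearMap.precompL E2 (ContinuousLinearMap.lsmul ℝ ℝ))
      (fderiv ℝ (ρ.normed volume) (x - y))) (f y) = f y • fderiv ℝ (ρ.normed volume) (x - y) := by
    intro y
    ext w
    simp [mul_comm]
  simp_rw [e]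
  rw [ContinuousLinearMap.integral_apply hi, ← integral_neg]
  refine integral_congr_ae (Eventually.of_forall fun y => ?_)
  simp only
  have e2 : fderiv ℝ (fun y => ρ.normed volume (x - y)) y =
      - fderiv ℝ (ρ.normed volume) (x - y) := by
    have := ((h1.differentiable one_ne_zero (x - y)).hasFDerivAt.comp y
      ((hasFDerivAt_id y).const_sub x)).fderiv
    refine this.trans ?_
    ext w
    simp
  rw [e2]
  simp

lemma lintegral_moll {k : E2 → ℝ≥0∞} (hk : AEMeasurable k volume) :
    ∫⁻ x, ∫⁻ y, ENNReal.ofReal (ρ.normed volume (x - y)) * k y = ∫⁻ y, k y := by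
  have hρ : Measurable fun x => ENNReal.ofReal (ρ.normed volume x) :=
    ρ.continuous_normed.measurable.ennreal_ofReal
  rw [lintegral_lintegral_swap]
  · refine lintegral_congr fun y => ?_
    have hm : Measurable fun x => ENNReal.ofReal (ρ.normed volume (x - y)) :=
      hρ.comp (measurable_id.sub_const y)
    rw [lintegral_mul_const _ hm,
      lintegral_sub_right_eq_self (fun x => ENNReal.ofReal (ρ.normed volume x)) y,
      ← ofReal_integral_eq_lintegral_ofReal ρ.integrable_normed
        (Eventually.of_forall ρ.nonneg_normed), ρ.integral_normed]
    simp
  · exact (hρ.comp (measurable_fst.sub measurable_snd)).aemeasurable.mul hk.comp_snd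

lemma ofReal_moll (hf : Integrable f volume) (hf0 : ∀ x, 0 ≤ f x) (x : E2) :
    ENNReal.ofReal (moll ρ f x) =
      ∫⁻ y, ENNReal.ofReal (ρ.normed volume (x - y)) * ENNReal.ofReal (f y) := by
  rw [moll, ofReal_integral_eq_lintegral_ofReal (moll_integrable ρ hf x)
    (Eventually.of_forall fun y => mul_nonneg (ρ.nonneg_normed _) (hf0 y))]
  exact lintegral_congr fun y => ENNReal.ofReal_mul (ρ.nonneg_normed _)

/-- The bound `|∇f| ≤ √(f h)` survives mollification, with `h` replaced by `ρ * h`: this is the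
Cauchy-Schwarz inequality for the weight `ρ (x - ·)`, and it expresses the joint convexity behind
the decrease of the Fisher information under convolution. -/
lemma moll_grad_bound {g : E2 → E2} (hf : Integrable f volume) (hf0 : ∀ x, 0 ≤ f x)
    (W : IsWeakGrad f g) {h : E2 → ℝ≥0∞} (hh : AEMeasurable h volume)
    (hg : ∀ᵐ x, ‖g x‖ₑ ≤ ENNReal.ofReal (f x) ^ (1 / 2 : ℝ) * h x ^ (1 / 2 : ℝ)) (x : E2) :
    ‖fderiv ℝ (moll ρ f) x‖ₑ ≤ ENNReal.ofReal (moll ρ f x) ^ (1 / 2 : ℝ) *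
      (∫⁻ y, ENNReal.ofReal (ρ.normed volume (x - y)) * h y) ^ (1 / 2 : ℝ) := by
  set φ : E2 → ℝ := fun y => ρ.normed volume (x - y) with hφ
  have h1 : ‖fderiv ℝ (moll ρ f) x‖ ≤ ‖∫ y, φ y • g y‖ := by
    refine ContinuousLinearMap.opNorm_le_bound _ (norm_nonneg _) fun v => ?_
    rw [moll_fderiv ρ hf, W.dir hf (test_contDiff ρ x) (test_compact ρ x), neg_neg, mul_comm]
    exact norm_inner_le_norm _ _
  have h2 : ‖fderiv ℝ (moll ρ f) x‖ₑ ≤ ‖∫ y, φ y • g y‖ₑ := by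
    rw [← ofReal_norm, ← ofReal_norm]
    exact ENNReal.ofReal_le_ofReal h1
  refine h2.trans ((enorm_integral_le_lintegral_enorm _).trans ?_)
  have hφm : AEMeasurable (fun y => ENNReal.ofReal (φ y)) volume :=
    (test_contDiff ρ x).continuous.measurable.ennreal_ofReal.aemeasurable
  rw [ofReal_moll ρ hf hf0]
  refine le_trans (lintegral_mono_ae ?_) (ENNReal.lintegral_mul_norm_pow_le
    (hφm.mul hf.aestronglyMeasurable.aemeasurable.ennreal_ofReal) (hφm.mul hh)
    (by norm_num) (by norm_num) (by norm_num))
  filter_upwards [hg] with y hy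
  have e : ‖φ y‖ₑ = ENNReal.ofReal (φ y) := by
    rw [← ofReal_norm, Real.norm_of_nonneg (ρ.nonneg_normed _)]
  simp only [Pi.mul_apply]
  rw [enorm_smul, e, ENNReal.mul_rpow_of_nonneg _ _ (by norm_num),
    ENNReal.mul_rpow_of_nonneg _ _ (by norm_num)]
  calc ENNReal.ofReal (φ y) * ‖g y‖ₑ
      ≤ ENNReal.ofReal (φ y) * (ENNReal.ofReal (f y) ^ (1 / 2 : ℝ) * h y ^ (1 / 2 : ℝ)) := by
        gcongr
    _ = (ENNReal.ofReal (φ y) ^ (1 / 2 : ℝ) * ENNReal.ofReal (φ y) ^ (1 / 2 : ℝ)) *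
        (ENNReal.ofReal (f y) ^ (1 / 2 : ℝ) * h y ^ (1 / 2 : ℝ)) := by
        rw [← ENNReal.rpow_add_of_nonneg _ _ (by norm_num) (by norm_num)]
        norm_num
    _ = _ := by ring

end Moll

/-- Bumps concentrating at the origin: equal to `1` on the ball of radius `1/(n+1)`, supported in
the ball of radius `2/(n+1)`. -/
def bumpSeq (n : ℕ) : ContDiffBump (0 : E2) :=
  ⟨1 / (n + 1), 2 / (n + 1), by positivity, by gcongr; norm_num⟩

lemma bumpSeq_tendsto {f : E2 → ℝ} (hf : Integrable f volume) :
    ∀ᵐ x, Tendsto (fun n => moll (bumpSeq n) f x) atTop (𝓝 (f x)) := by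
  simp_rw [moll_eq]
  refine ContDiffBump.ae_convolution_tendsto_right_of_locallyIntegrable (K := 2) ?_ ?_
    hf.locallyIntegrable
  · exact tendsto_const_div_atTop_nhds_zero_nat (2 : ℝ) |>.comp (tendsto_add_atTop_nat 1) |>.congr
      fun n => by simp [bumpSeq]
  · refine Eventually.of_forall fun n => le_of_eq ?_
    change (2 : ℝ) / (n + 1) = 2 * (1 / (n + 1))
    ring

/-- The bound `∫ f^p ≤ K (∫ h)^(p-1)` for a density with a weak gradient, obtained from
`smooth_bound` for the mollifications of `f` and Fatou's lemma. -/
lemma density_bound {f : E2 → ℝ} {g : E2 → E2} (hf : Integrable f volume) (hf0 : ∀ x, 0 ≤ f x)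
    (hf1 : ∫ x, f x = 1) (W : IsWeakGrad f g) {h : E2 → ℝ≥0∞} (hh : AEMeasurable h volume)
    (hg : ∀ᵐ x, ‖g x‖ₑ ≤ ENNReal.ofReal (f x) ^ (1 / 2 : ℝ) * h x ^ (1 / 2 : ℝ))
    {p q : ℝ} (hq : 1 ≤ q) (hq2 : q < 2) (hp : p = q / (2 - q)) :
    ∫⁻ x, ENNReal.ofReal (f x) ^ p ≤ fisherK q * (∫⁻ x, h x) ^ (p - 1) := by
  have hfl : ∫⁻ x, ENNReal.ofReal (f x) = 1 := by
    rw [← ofReal_integral_eq_lintegral_ofReal hf (Eventually.of_forall hf0), hf1,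
      ENNReal.ofReal_one]
  have key : ∀ n, ∫⁻ x, ENNReal.ofReal (moll (bumpSeq n) f x) ^ p ≤
      fisherK q * (∫⁻ x, h x) ^ (p - 1) := by
    intro n
    set ρ := bumpSeq n
    obtain ⟨c, hc⟩ := ρ.hasCompactSupport_normed (μ := volume) |>.exists_bound_of_continuous
      ρ.continuous_normed
    rw [← lintegral_moll ρ hh]
    refine smooth_bound ((moll_contDiff ρ hf).of_le (by exact_mod_cast le_top))
      (moll_nonneg ρ hf0) (M := c) ?_ ?_ ?_ (moll_grad_bound ρ hf hf0 W hh hg) hq hq2 hp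
    · intro x
      calc moll ρ f x ≤ ∫ y, c * f y := by
            refine integral_mono (moll_integrable ρ hf x) (hf.const_mul c) fun y => ?_
            exact mul_le_mul_of_nonneg_right ((le_abs_self _).trans (hc _)) (hf0 y)
        _ = c := by rw [integral_const_mul, hf1, mul_one]
    · simp_rw [ofReal_moll ρ hf hf0]
      rw [lintegral_moll ρ hf.aestronglyMeasurable.aemeasurable.ennreal_ofReal, hfl]
    · have hρ : Measurable fun x => ENNReal.ofReal (ρ.normed volume x) :=
        ρ.continuous_normed.measurable.ennreal_ofReal
      exact AEMeasurable.lintegral_prod_right'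
        ((hρ.comp (measurable_fst.sub measurable_snd)).aemeasurable.mul hh.comp_snd)
  have hp0 : 0 ≤ p := by rw [hp]; exact div_nonneg (by linarith) (by linarith)
  calc ∫⁻ x, ENNReal.ofReal (f x) ^ p
      = ∫⁻ x, liminf (fun n => ENNReal.ofReal (moll (bumpSeq n) f x) ^ p) atTop := by
        refine lintegral_congr_ae ?_
        filter_upwards [bumpSeq_tendsto hf] with x hx
        exact (((ENNReal.continuous_rpow_const).tendsto _).comp
          (ENNReal.tendsto_ofReal hx)).liminf_eq.symm
    _ ≤ liminf (fun n => ∫⁻ x, ENNReal.ofReal (moll (bumpSeq n) f x) ^ p) atTop := by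
        refine lintegral_liminf_le fun n => ?_
        exact ((moll_contDiff _ hf).continuous.measurable.ennreal_ofReal).pow_const p
    _ ≤ _ := liminf_le_of_le (by isBoundedDefault)
        fun b hb => (hb.exists.choose_spec).trans (key _)

/-! ### The weak gradient vanishes on the zero set -/

/-- Continuity of translations in `L¹`. -/
lemma translate_L1 {G : E2 → E2} (hG : Integrable G volume) (v : E2) :
    Tendsto (fun s : ℝ => ∫ x, ‖G (s • v + x) - G x‖) (𝓝 0) (𝓝 0) := by
  have hG1 : MemLp G 1 volume := memLp_one_iff_integrable.2 hG
  have : Fact ((1 : ℝ≥0∞) ≠ ∞) := ⟨ENNReal.one_ne_top⟩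
  have hs : Continuous fun s : ℝ => DomAddAct.mk (s • v) :=
    DomAddAct.continuous_mk.comp (by fun_prop : Continuous fun s : ℝ => s • v)
  have hc : Continuous fun s : ℝ => DomAddAct.mk (s • v) +ᵥ hG1.toLp G :=
    hs.vadd continuous_const
  have h0 : DomAddAct.mk ((0 : ℝ) • v) +ᵥ hG1.toLp G = hG1.toLp G := by
    rw [zero_smul, DomAddAct.mk_zero, zero_vadd]
  have h1 : Tendsto (fun s : ℝ => ‖(DomAddAct.mk (s • v) +ᵥ hG1.toLp G) - hG1.toLp G‖) (𝓝 0)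
      (𝓝 ‖(DomAddAct.mk ((0 : ℝ) • v) +ᵥ hG1.toLp G) - hG1.toLp G‖) :=
    (hc.sub continuous_const).norm.tendsto 0
  rw [h0, sub_self, norm_zero] at h1
  refine h1.congr fun s => ?_
  rw [DomAddAct.mk_vadd_toLp, ← MemLp.toLp_sub]
  have hi : Integrable (fun x => G (s • v + x) - G x) volume :=
    (hG.comp_add_left (s • v)).sub hG
  exact L1.norm_of_fun_eq_integral_norm hi

/-- Moving the test function `φ` in the direction `v` gives the nonnegative function
`J s = ∫ f φ(· - s v)`, whose derivative at `0` is `⟪v, ∫ φ G⟫` and varies by at most `η` on `[0, t]`;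
the conclusion is `0 ≤ J t ≤ J 0 + t (J' 0 + η)`. The function `G` is an integrable substitute for
`g`, which agrees with it near the support of `φ`. -/
lemma translate_ineq {f : E2 → ℝ} {g : E2 → E2} (hf : Integrable f volume) (hf0 : ∀ x, 0 ≤ f x)
    (W : IsWeakGrad f g) {φ : E2 → ℝ} (hφ : ContDiff ℝ (⊤ : ℕ∞) φ) (hφc : HasCompactSupport φ)
    (hφ0 : ∀ x, 0 ≤ φ x) (hφ1 : ∀ x, φ x ≤ 1) {G : E2 → E2} (hG : Integrable G volume) {R : ℝ}
    (hR : ∀ x, φ x ≠ 0 → ‖x‖ ≤ R) (hGg : ∀ x, ‖x‖ ≤ R + 1 → G x = g x)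
    {v : E2} (hv : ‖v‖ ≤ 1) {t η : ℝ} (ht0 : 0 ≤ t) (ht1 : t ≤ 1)
    (hη : ∀ s ∈ Set.Icc 0 t, ∫ x, ‖G (s • v + x) - G x‖ ≤ η) :
    0 ≤ (∫ x, f x * φ x) + t * (inner ℝ v (∫ x, φ x • G x) + η) := by
  have hφ1' : ContDiff ℝ 1 φ := hφ.of_le (by exact_mod_cast le_top)
  have hdc := hφ1'.continuous_fderiv one_ne_zero
  have hφn : ∀ x, ‖φ x‖ ≤ 1 := fun x => by rw [Real.norm_of_nonneg (hφ0 x)]; exact hφ1 x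
  obtain ⟨c, hc⟩ := (hφc.fderiv (𝕜 := ℝ)).exists_bound_of_continuous hdc
  set J : ℝ → ℝ := fun s => ∫ x, f x * φ (x - s • v) with hJ
  set D : ℝ → ℝ := fun s => inner ℝ v (∫ x, φ x • G (s • v + x)) with hD
  have hφs : ∀ s : ℝ, ContDiff ℝ (⊤ : ℕ∞) (fun x => φ (x - s • v)) := fun s =>
    hφ.comp (contDiff_id.sub contDiff_const)
  have hφsc : ∀ s : ℝ, HasCompactSupport (fun x => φ (x - s • v)) := fun s =>
    hφc.comp_homeomorph (Homeomorph.subRight (s • v))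
  have hm : ∀ s : ℝ, AEStronglyMeasurable (fun x => f x * φ (x - s • v)) volume := fun s =>
    hf.aestronglyMeasurable.mul (hφs s).continuous.aestronglyMeasurable
  have hder : ∀ s ∈ Set.Icc 0 t, HasDerivAt J (D s) s := by
    intro s hs
    have h1 := (hasDerivAt_integral_of_dominated_loc_of_deriv_le (μ := (volume : Measure E2))
      (F := fun s x => f x * φ (x - s • v))
      (F' := fun s x => - (f x * fderiv ℝ φ (x - s • v) v)) (x₀ := s)
      (bound := fun x => ‖f x‖ * (c * ‖v‖)) (s := Set.univ) Filter.univ_mem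
      (Eventually.of_forall hm) ?_ ?_ ?_ ?_ ?_).2
    · refine h1.congr_deriv ?_
      rw [integral_neg]
      have h2 := W.dir hf (hφs s) (hφsc s) v
      have h3 : ∀ x, fderiv ℝ (fun x => φ (x - s • v)) x v = fderiv ℝ φ (x - s • v) v := by
        intro x
        rw [fderiv_comp_sub]
      simp_rw [h3] at h2
      rw [h2, neg_neg, hD]
      simp only
      congr 1
      rw [← integral_add_left_eq_self (fun x => φ (x - s • v) • g x) (s • v)]
      refine integral_congr_ae (Eventually.of_forall fun x => ?_)
      simp only [add_sub_cancel_left]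
      by_cases hx : φ x = 0
      · simp [hx]
      · rw [hGg]
        refine (norm_add_le _ _).trans ?_
        rw [norm_smul, Real.norm_of_nonneg hs.1, add_comm R]
        exact add_le_add (mul_le_one₀ (hs.2.trans ht1) (norm_nonneg _) hv) (hR x hx)
    · exact (hf.mul_bdd (c := 1) (hφs s).continuous.aestronglyMeasurable
        (Eventually.of_forall fun x => hφn _))
    · refine (hf.aestronglyMeasurable.mul (Continuous.aestronglyMeasurable ?_)).neg
      exact (hdc.comp (continuous_id.sub continuous_const)).clm_apply continuous_const
    · refine Eventually.of_forall fun x s _ => ?_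
      rw [norm_neg, norm_mul]
      gcongr
      exact ContinuousLinearMap.le_of_opNorm_le _ (hc _) _
    · exact hf.norm.mul_const _
    · refine Eventually.of_forall fun x s _ => ?_
      have h4 : HasDerivAt (fun s : ℝ => x - s • v) (-v) s := by
        simpa using ((hasDerivAt_id s).smul_const v).const_sub x
      have h5 := ((hφ1'.differentiable one_ne_zero (x - s • v)).hasFDerivAt.comp_hasDerivAt s
        h4).const_mul (f x)
      refine h5.congr_deriv ?_
      simp
  have hGs : ∀ s : ℝ, Integrable (fun x => φ x • G (s • v + x)) volume := fun s =>
    (hG.comp_add_left (s • v)).bdd_smul 1 hφ.continuous.aestronglyMeasurable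
      (Eventually.of_forall hφn)
  have hDb : ∀ s ∈ Set.Icc 0 t, ‖D s - D 0‖ ≤ η := by
    intro s hs
    rw [hD]
    simp only [zero_smul, zero_add]
    have hG0 := hGs 0
    simp only [zero_smul, zero_add] at hG0
    rw [← inner_sub_right, ← integral_sub (hGs s) hG0]
    refine (norm_inner_le_norm _ _).trans ((mul_le_of_le_one_left (norm_nonneg _) hv).trans ?_)
    refine (norm_integral_le_of_norm_le ((hG.comp_add_left (s • v)).sub hG).norm
      (Eventually.of_forall fun x => ?_)).trans (hη s hs)
    rw [← smul_sub, norm_smul]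
    exact mul_le_of_le_one_left (norm_nonneg _) (hφn x)
  -- mean value inequality for `s ↦ J s - s J' 0`
  have hmv := norm_image_sub_le_of_norm_deriv_le_segment' (f := fun s => J s - s * D 0)
    (f' := fun s => D s - D 0) (a := 0) (b := t) (C := η)
    (fun s hs => (((hder s hs).sub ((hasDerivAt_id s).mul_const (D 0))).congr_deriv
      (by simp)).hasDerivWithinAt)
    (fun s hs => hDb s ⟨hs.1, hs.2.le⟩) t ⟨ht0, le_rfl⟩
  have hJt : 0 ≤ J t := integral_nonneg fun x => mul_nonneg (hf0 x) (hφ0 _)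
  have hJ0 : J 0 = ∫ x, f x * φ x := by simp [hJ]
  have hD0 : D 0 = inner ℝ v (∫ x, φ x • G x) := by simp [hD]
  rw [← hJ0, ← hD0]
  have := (abs_le.1 hmv).2
  nlinarith

/-- On a bounded set `A` where `f` vanishes, `f ≥ 0` has a minimum, so no direction `v` may see a
negative derivative. `translate_ineq` is applied to mollifications of the indicator of `A`; the term
`∫ f φ` disappears in the limit, and dividing by `t` leaves `0 ≤ ⟪v, ∫_A g⟫ + η`. -/
lemma setIntegral_inner_nonneg {f : E2 → ℝ} {g : E2 → E2} (hf : Integrable f volume)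
    (hf0 : ∀ x, 0 ≤ f x) (W : IsWeakGrad f g) (hg : LocallyIntegrable g volume) {A : Set E2}
    (hA : MeasurableSet A) {R : ℝ} (hAR : ∀ x ∈ A, ‖x‖ ≤ R) (hfA : ∀ᵐ x, x ∈ A → f x = 0)
    {v : E2} (hv : ‖v‖ ≤ 1) : 0 ≤ inner ℝ v (∫ x in A, g x) := by
  set G : E2 → E2 := (Metric.closedBall 0 (R + 2 + 1)).indicator g with hGdef
  have hG : Integrable G volume :=
    (hg.integrableOn_isCompact (isCompact_closedBall _ _)).integrable_indicator
      measurableSet_closedBall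
  set a : E2 → ℝ := A.indicator 1 with ha
  have hAfin : volume A ≠ ∞ := by
    refine ne_top_of_le_ne_top (isCompact_closedBall (0 : E2) R).measure_lt_top.ne
      (measure_mono fun x hx => ?_)
    simpa using hAR x hx
  have hai : Integrable a volume := (integrable_indicator_iff hA).2
    (integrableOn_const hAfin : IntegrableOn (fun _ => (1 : ℝ)) A volume)
  have ha0 : ∀ x, 0 ≤ a x := fun x => Set.indicator_nonneg (fun _ _ => zero_le_one) x
  have ha1 : ∀ x, a x ≤ 1 := fun x => Set.indicator_le_self' (fun _ _ => zero_le_one) x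
  set φ : ℕ → E2 → ℝ := fun n => moll (bumpSeq n) a with hφ
  have hφd : ∀ n, ContDiff ℝ (⊤ : ℕ∞) (φ n) := fun n => moll_contDiff _ hai
  have hφ0 : ∀ n x, 0 ≤ φ n x := fun n => moll_nonneg _ ha0
  have hφ1 : ∀ n x, φ n x ≤ 1 := by
    intro n x
    set ρ := bumpSeq n
    calc φ n x ≤ ∫ y, ρ.normed volume (x - y) := by
          refine integral_mono (moll_integrable ρ hai x)
            ((test_contDiff ρ x).continuous.integrable_of_hasCompactSupport (test_compact ρ x))
            fun y => mul_le_of_le_one_right (ρ.nonneg_normed _) (ha1 y)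
      _ = 1 := by
          rw [integral_sub_left_eq_self (fun y => ρ.normed volume y), ρ.integral_normed]
  have hφR : ∀ n x, φ n x ≠ 0 → ‖x‖ ≤ R + 2 := by
    intro n x hx
    obtain ⟨y, hy⟩ : ∃ y, (bumpSeq n).normed volume (x - y) * a y ≠ 0 := by
      by_contra! hcon
      exact hx (by simp [hφ, moll, hcon])
    have hy1 : y ∈ A := by
      by_contra hyA
      exact right_ne_zero_of_mul hy (by simp [ha, hyA])
    have hy2 : x - y ∈ Function.support ((bumpSeq n).normed volume) := left_ne_zero_of_mul hy
    rw [ContDiffBump.support_normed_eq, mem_ball_zero_iff] at hy2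
    have hy3 : (bumpSeq n).rOut ≤ 2 := by
      change (2 : ℝ) / (n + 1) ≤ 2
      exact div_le_self (by norm_num) (by simp)
    calc ‖x‖ = ‖y + (x - y)‖ := by rw [add_sub_cancel]
      _ ≤ ‖y‖ + ‖x - y‖ := norm_add_le _ _
      _ ≤ R + 2 := add_le_add (hAR y hy1) (hy2.le.trans hy3)
  have hφc : ∀ n, HasCompactSupport (φ n) := fun n =>
    HasCompactSupport.intro (isCompact_closedBall 0 (R + 2)) fun x hx => by
      by_contra hne
      exact hx (by simpa using hφR n x hne)
  have hφn : ∀ n x, ‖φ n x‖ ≤ 1 := fun n x => by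
    rw [Real.norm_of_nonneg (hφ0 n x)]; exact hφ1 n x
  have hlim := bumpSeq_tendsto hai
  have hl1 : Tendsto (fun n => ∫ x, f x * φ n x) atTop (𝓝 0) := by
    have e : ∫ x, f x * a x = 0 := by
      refine integral_eq_zero_of_ae ?_
      filter_upwards [hfA] with x hx
      by_cases h : x ∈ A
      · simp [hx h]
      · simp [ha, h]
    rw [← e]
    refine tendsto_integral_of_dominated_convergence (fun x => ‖f x‖)
      (fun n => hf.aestronglyMeasurable.mul (hφd n).continuous.aestronglyMeasurable) hf.norm
      (fun n => Eventually.of_forall fun x => ?_) ?_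
    · rw [norm_mul]
      exact mul_le_of_le_one_right (norm_nonneg _) (hφn n x)
    · filter_upwards [hlim] with x hx
      exact hx.const_mul _
  have hl2 : Tendsto (fun n => ∫ x, φ n x • G x) atTop (𝓝 (∫ x in A, g x)) := by
    have e : ∫ x, a x • G x = ∫ x in A, g x := by
      rw [← integral_indicator hA]
      refine integral_congr_ae (Eventually.of_forall fun x => ?_)
      by_cases h : x ∈ A
      · have : x ∈ Metric.closedBall (0 : E2) (R + 2 + 1) := by
          rw [mem_closedBall_zero_iff]
          linarith [hAR x h]
        simp only [ha, hGdef, Set.indicator_of_mem h, Set.indicator_of_mem this, Pi.one_apply,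
          one_smul]
      · simp [ha, h]
    rw [← e]
    refine tendsto_integral_of_dominated_convergence (fun x => ‖G x‖)
      (fun n => (hφd n).continuous.aestronglyMeasurable.smul hG.aestronglyMeasurable) hG.norm
      (fun n => Eventually.of_forall fun x => ?_) ?_
    · rw [norm_smul]
      exact mul_le_of_le_one_left (norm_nonneg _) (hφn n x)
    · filter_upwards [hlim] with x hx
      exact hx.smul_const _
  refine le_of_forall_pos_le_add fun η hη => ?_
  obtain ⟨δ, hδ, hδη⟩ := Metric.eventually_nhds_iff.1
    ((translate_L1 hG v).eventually_le_const hη)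
  set t := min (δ / 2) 1 with ht
  have ht0 : 0 < t := lt_min (by linarith) one_pos
  have hn : ∀ n, 0 ≤ (∫ x, f x * φ n x) + t * (inner ℝ v (∫ x, φ n x • G x) + η) := by
    intro n
    refine translate_ineq hf hf0 W (hφd n) (hφc n) (hφ0 n) (hφ1 n) hG (hφR n) ?_ hv ht0.le
      (min_le_right _ _) fun s hs => hδη ?_
    · intro x hx
      exact Set.indicator_of_mem (by simpa using hx) _
    · rw [Real.dist_eq, sub_zero, abs_of_nonneg hs.1]
      linarith [hs.2, min_le_left (δ / 2) 1]
  have := ge_of_tendsto'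
    (hl1.add ((((tendsto_const_nhds (x := v)).inner hl2).add_const η).const_mul t)) hn
  rw [zero_add] at this
  exact nonneg_of_mul_nonneg_right this ht0

lemma IsWeakGrad.locallyIntegrable {f : E2 → ℝ} {g : E2 → E2} (W : IsWeakGrad f g) :
    LocallyIntegrable g volume := by
  intro x
  let B : ContDiffBump x := ⟨1, 2, one_pos, one_lt_two⟩
  refine ⟨Metric.closedBall x 1, Metric.closedBall_mem_nhds x one_pos, ?_⟩
  refine (W.int B B.contDiff B.hasCompactSupport).integrableOn.congr_fun (fun y hy => ?_)
    measurableSet_closedBall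
  simp only
  rw [B.one_of_mem_closedBall hy, one_smul]

/-- The gradient of a nonnegative function vanishes almost everywhere on its zero set. In the
theorem this covers the points where `‖g‖²/f` is `0` only because division by `0` is. -/
lemma grad_eq_zero {f : E2 → ℝ} {g : E2 → E2} (hf : Integrable f volume) (hf0 : ∀ x, 0 ≤ f x)
    (W : IsWeakGrad f g) : ∀ᵐ x, f x = 0 → g x = 0 := by
  have hg := W.locallyIntegrable
  have key : ∀ A : Set E2, MeasurableSet A → ∀ R : ℝ, (∀ x ∈ A, ‖x‖ ≤ R) →
      (∀ᵐ x, x ∈ A → f x = 0) → ∫ x in A, g x = 0 := by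
    intro A hA R hAR hfA
    set u := ∫ x in A, g x with hu
    by_contra hne
    have hpos : 0 < ‖u‖ := norm_pos_iff.2 hne
    -- the direction opposite to `u = ∫_A g` would give `-‖u‖ ≥ 0`
    have h1 := setIntegral_inner_nonneg hf hf0 W hg hA hAR hfA (v := -(‖u‖⁻¹ • u)) (by
      rw [norm_neg, norm_smul, norm_inv, norm_norm, inv_mul_cancel₀ hpos.ne'])
    rw [← hu, inner_neg_left, real_inner_smul_left, real_inner_self_eq_norm_sq, pow_two,
      inv_mul_cancel_left₀ hpos.ne'] at h1
    linarith
  -- a measurable representative of `f`, since the zero set of `f` need not be measurable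
  set k := hf.aestronglyMeasurable.mk f with hk
  have hfk : f =ᵐ[volume] k := hf.aestronglyMeasurable.ae_eq_mk
  have hkm : Measurable k := hf.aestronglyMeasurable.stronglyMeasurable_mk.measurable
  have hZ : MeasurableSet {x | k x = 0} := hkm (measurableSet_singleton 0)
  have hn : ∀ n : ℕ, ∀ᵐ x, x ∈ {x | k x = 0} ∩ Metric.closedBall 0 n → g x = 0 := by
    intro n
    have hS : MeasurableSet ({x | k x = 0} ∩ Metric.closedBall (0 : E2) n) :=
      hZ.inter measurableSet_closedBall
    rw [← ae_restrict_iff' hS]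
    refine Integrable.ae_eq_zero_of_forall_setIntegral_eq_zero
      ((hg.integrableOn_isCompact (isCompact_closedBall (0 : E2) n)).mono_set
        Set.inter_subset_right) fun s hs _ => ?_
    rw [Measure.restrict_restrict hs]
    refine key _ (hs.inter hS) n (fun x hx => by simpa using hx.2.2) ?_
    filter_upwards [hfk] with x hx hxs
    rw [hx]
    exact hxs.2.1
  filter_upwards [hfk, ae_all_iff.2 hn] with x hx hxn h0
  obtain ⟨n, hn⟩ := exists_nat_ge ‖x‖
  exact hxn n ⟨by rw [Set.mem_ofPred_eq, ← hx, h0], by simpa using hn⟩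

/-! ### Integrability against test functions -/

/-- For a density the integration by parts formula alone, read with `∫ φ • g = 0` when `φ • g` is
not integrable, forces `φ • g` to be integrable for every test function `φ`. If `φ₀ • g` is not
integrable, then for each `φ` one of `φ • g` and `(φ₀ + φ) • g` is not integrable, hence
`∫ f ∇φ = 0`. So `0` is a weak gradient of `f`, and `density_bound` with `h = 0` gives `f = 0`
almost everywhere, contradicting `∫ f = 1`. -/
lemma isWeakGrad_of_eq {f : E2 → ℝ} {g : E2 → E2} (hf0 : ∀ x, 0 ≤ f x)
    (hf : Integrable f volume) (hf1 : ∫ x, f x = 1)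
    (H : ∀ φ : E2 → ℝ, ContDiff ℝ (⊤ : ℕ∞) φ → HasCompactSupport φ →
      (∫ x, f x • gradient φ x) = - ∫ x, φ x • g x) : IsWeakGrad f g := by
  refine ⟨?_, H⟩
  by_contra! hcon
  obtain ⟨φ₀, hd₀, hc₀, hn₀⟩ := hcon
  have hint : ∀ φ : E2 → ℝ, ContDiff ℝ (⊤ : ℕ∞) φ → HasCompactSupport φ →
      Integrable (fun x => f x • gradient φ x) volume := by
    intro φ hφ hφc
    have hφ1 : ContDiff ℝ 1 φ := hφ.of_le (by exact_mod_cast le_top)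
    have hgc : Continuous (gradient φ) :=
      (InnerProductSpace.toDual ℝ E2).symm.continuous.comp (hφ1.continuous_fderiv one_ne_zero)
    obtain ⟨c, hc⟩ := (hφc.fderiv (𝕜 := ℝ)).exists_bound_of_continuous
      (hφ1.continuous_fderiv one_ne_zero)
    refine hf.smul_bdd c hgc.aestronglyMeasurable (Eventually.of_forall fun x => ?_)
    rw [gradient, LinearIsometryEquiv.norm_map]
    exact hc x
  have hz₀ : ∫ x, f x • gradient φ₀ x = 0 := by
    rw [H φ₀ hd₀ hc₀, integral_undef hn₀, neg_zero]
  have hz : ∀ φ : E2 → ℝ, ContDiff ℝ (⊤ : ℕ∞) φ → HasCompactSupport φ →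
      ∫ x, f x • gradient φ x = 0 := by
    intro φ hφ hφc
    by_cases hi : Integrable (fun x => φ x • g x) volume
    · have hn : ¬ Integrable (fun x => (φ₀ x + φ x) • g x) volume := by
        intro hs
        refine hn₀ ((hs.sub hi).congr (Eventually.of_forall fun x => ?_))
        simp [add_smul]
      have h1 := H (fun x => φ₀ x + φ x) (hd₀.add hφ) (hc₀.add hφc)
      rw [integral_undef hn, neg_zero] at h1
      have h2 : ∀ x, gradient (fun x => φ₀ x + φ x) x = gradient φ₀ x + gradient φ x := by
        intro x
        rw [gradient, gradient, gradient, ← map_add,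
          fderiv_fun_add (hd₀.differentiable (by simp) x) (hφ.differentiable (by simp) x)]
      simp_rw [h2, smul_add] at h1
      rwa [integral_add (hint _ hd₀ hc₀) (hint _ hφ hφc), hz₀, zero_add] at h1
    · rw [H φ hφ hφc, integral_undef hi, neg_zero]
  have W : IsWeakGrad f (fun _ => 0) := by
    refine ⟨fun φ _ _ => by simp, fun φ hφ hφc => ?_⟩
    rw [hz φ hφ hφc]
    simp
  -- any `q` with `p > 1` makes the right side `0`; here `q = 4/3` and `p = 2`
  have hb := density_bound hf hf0 hf1 W (h := fun _ => 0) aemeasurable_const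
    (Eventually.of_forall fun x => by simp) (p := 2) (q := 4 / 3)
    (by norm_num) (by norm_num) (by norm_num)
  rw [lintegral_zero, ENNReal.zero_rpow_of_pos (by norm_num), mul_zero, nonpos_iff_eq_zero,
    lintegral_eq_zero_iff' (hf.aestronglyMeasurable.aemeasurable.ennreal_ofReal.pow_const _)] at hb
  have h0 : ∫ x, f x = 0 := by
    refine integral_eq_zero_of_ae ?_
    filter_upwards [hb] with x hx
    simp only [Pi.zero_apply, ENNReal.rpow_eq_zero_iff, ENNReal.ofReal_eq_zero] at hx
    rcases hx with hx | hx
    · exact le_antisymm hx.1 (hf0 x)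
    · exact absurd hx.2 (by norm_num)
  linarith

/-! ### The gradient estimate -/

/-- For any probability density `f` on `ℝ²` with weak gradient `g` and finite Fisher
information `I(f)`, and any `q ∈ [1,2)`, there is a constant `C_q` depending only on `q`
such that `‖∇f‖_{L^q} ≤ C_q · I(f)^{3/2 - 1/q}`. -/
theorem stmt1 (q : ℝ) (hq1 : 1 ≤ q) (hq2 : q < 2) :
    ∃ C : ℝ, 0 < C ∧
      ∀ (f : E2 → ℝ) (g : E2 → E2),
        (∀ x, 0 ≤ f x) →
        Integrable f volume →
        (∫ x, f x) = 1 →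
        (∀ φ : E2 → ℝ, ContDiff ℝ (⊤ : ℕ∞) φ → HasCompactSupport φ →
          (∫ x, f x • gradient φ x) = - ∫ x, φ x • g x) →
        Integrable (fun x => ‖g x‖ ^ 2 / f x) volume →
        eLpNorm g (ENNReal.ofReal q) volume ≤
          ENNReal.ofReal (C * (∫ x, ‖g x‖ ^ 2 / f x) ^ (3 / 2 - 1 / q)) := by
  have h2 : (0 : ℝ) < 2 - q := by linarith
  have hq0 : (0 : ℝ) < q := by linarith
  set p : ℝ := q / (2 - q) with hp
  have hp1 : 1 ≤ p := by rw [hp, le_div_iff₀ h2]; linarith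
  have hKfin : fisherK q ^ ((1 - q / 2) / q) ≠ ∞ := by
    refine ENNReal.rpow_ne_top_of_nonneg (div_nonneg (by linarith) hq0.le)
      (ENNReal.rpow_ne_top_of_nonneg (div_nonneg (by linarith) (by linarith))
        (ENNReal.rpow_ne_top_of_nonneg (by linarith) (by simp)))
  -- the summand `1` only makes the constant positive
  refine ⟨(fisherK q ^ ((1 - q / 2) / q)).toReal + 1, by positivity, ?_⟩
  intro f g hf0 hf hf1 H hI
  have W := isWeakGrad_of_eq hf0 hf hf1 H
  set I := ∫ x, ‖g x‖ ^ 2 / f x with hIdef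
  have hi0 : ∀ x, 0 ≤ ‖g x‖ ^ 2 / f x := fun x => div_nonneg (by positivity) (hf0 x)
  have hI0 : 0 ≤ I := integral_nonneg hi0
  have hh : AEMeasurable (fun x => ENNReal.ofReal (‖g x‖ ^ 2 / f x)) volume :=
    hI.aestronglyMeasurable.aemeasurable.ennreal_ofReal
  have hIl : ∫⁻ x, ENNReal.ofReal (‖g x‖ ^ 2 / f x) = ENNReal.ofReal I :=
    (ofReal_integral_eq_lintegral_ofReal hI (Eventually.of_forall hi0)).symm
  have hg : ∀ᵐ x, ‖g x‖ₑ ≤ ENNReal.ofReal (f x) ^ (1 / 2 : ℝ) *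
      ENNReal.ofReal (‖g x‖ ^ 2 / f x) ^ (1 / 2 : ℝ) := by
    filter_upwards [grad_eq_zero hf hf0 W] with x hx
    rcases (hf0 x).eq_or_lt with h | h
    · rw [hx h.symm]
      simp
    · rw [← ENNReal.mul_rpow_of_nonneg _ _ (by norm_num), ← ENNReal.ofReal_mul (hf0 x),
        mul_div_cancel₀ _ h.ne', ENNReal.ofReal_rpow_of_nonneg (by positivity) (by norm_num),
        ← Real.sqrt_eq_rpow, Real.sqrt_sq (norm_nonneg _), ofReal_norm]
  have hA := density_bound hf hf0 hf1 W hh hg hq1 hq2 hp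
  have hB := holder_grad hf.aestronglyMeasurable.aemeasurable.ennreal_ofReal hh hg hq1 hq2 hp
  rw [hIl] at hA hB
  set J := ENNReal.ofReal I with hJ
  rw [eLpNorm_eq_lintegral_rpow_enorm_toReal (by simpa using hq0) (by simp),
    ENNReal.toReal_ofReal hq0.le]
  have hr : (0 : ℝ) ≤ 1 - q / 2 := by linarith
  have e1 : (0 : ℝ) ≤ (p - 1) * ((1 - q / 2) * (1 / q)) := by
    have : 0 ≤ p - 1 := by linarith
    positivity
  calc (∫⁻ x, ‖g x‖ₑ ^ q) ^ (1 / q)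
      ≤ (J ^ (q / 2) * (fisherK q * J ^ (p - 1)) ^ (1 - q / 2)) ^ (1 / q) := by
        refine ENNReal.rpow_le_rpow (hB.trans ?_) (by positivity)
        gcongr
    _ = fisherK q ^ ((1 - q / 2) / q) * J ^ (3 / 2 - 1 / q) := by
        rw [ENNReal.mul_rpow_of_nonneg _ _ hr, ENNReal.mul_rpow_of_nonneg _ _ (by positivity),
          ENNReal.mul_rpow_of_nonneg _ _ (by positivity), ← ENNReal.rpow_mul, ← ENNReal.rpow_mul,
          ← ENNReal.rpow_mul, ← ENNReal.rpow_mul, mul_left_comm,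
          ← ENNReal.rpow_add_of_nonneg _ _ (by positivity) e1]
        congr 2
        · ring
        · rw [hp]
          field_simp
          ring
    _ ≤ ENNReal.ofReal ((fisherK q ^ ((1 - q / 2) / q)).toReal + 1) *
          ENNReal.ofReal (I ^ (3 / 2 - 1 / q)) := by
        rw [hJ, ENNReal.ofReal_rpow_of_nonneg hI0 (by
          have : 1 / q ≤ 1 := by rw [div_le_one hq0]; exact hq1
          linarith)]
        gcongr
        rw [ENNReal.le_ofReal_iff_toReal_le hKfin (by positivity)]
        linarith
    _ = _ := (ENNReal.ofReal_mul (by positivity)).symm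
end
end

section
/- Let F be a probability density on ℝ² × ℝ² with finite Fisher information I(F) = (1/2)∫ |∇F|²/F, and let (X₁, X₂) be a random variable with law F. Then for any γ ∈ (0,2) and any β > γ/2 there is a constant C_{γ,β} such that E[|X₁ - X₂|^{-γ}] ≤ C_{γ,β} (I(F)^β + 1). -/
/-!
The proof is a Hardy-type inequality in the relative variable `u = x₁ - x₂ ∈ ℝ²`. Testing the weak
gradient `D1` of `F` against the vector field `u / |u|^g`, whose divergence is `(2 - g) / |u|^g`,
gives `(2 - g) ∫ F / |u|^g ≤ ∫ |D1| / |u|^(g - 1)`. Young's inequality bounds the right side by a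
multiple of the Fisher information, a multiple of the mass of `F`, and a part of the left side that
is absorbed; with weights chosen according to scaling, the outcome is
`∫ F / |u|^g ≤ c L^(g/2)` for every `L > 0` bounding `∫ |D1|² / F` (`young_pointwise`,
`regularized_estimate`). The field is regularized by replacing `|u|²` with `ε + |u|²`, and it is
bounded only for `g ≥ 1`: the estimate is used with `g = max γ 1` and then interpolated down to `γ`,
after which Fatou's lemma removes `ε`. With `L = 2 I(F) + 1 ≥ 1` one has `L^(γ/2) ≤ L^β`, which is
at most `3^β (I(F)^β + 1)`. Only the weak gradient in the first variable enters.

Two features of the hypotheses need extra care. Nothing says directly that `D1` is locally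
integrable, and the weak-derivative identities are stated with the Bochner integral, which is `0` for
non-integrable functions. If `φ • D1` failed to be integrable for a single test function `φ`, then all
weak derivatives of `F` would vanish and `F` would be `0`
(`locallyIntegrable_weakGradient`). Moreover the quotient `|D1|² / F` is `0` where `F = 0`, so finite
Fisher information says nothing about `D1` there. A weak derivative of a nonnegative
function vanishes almost everywhere on the zero set, because zeros are minima; this is
`weakDeriv_ae_eq_zero_of_eq_zero`, proved from continuity of translations in `L¹`. It follows that
`D1` is integrable, so the weak-derivative identity extends to bounded test functions with bounded
derivative (`weakDeriv_bounded_test`).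
-/

open MeasureTheory

noncomputable section

open Set Filter Topology

/-! ### Translations and smooth bumps -/

section General

variable {E : Type*} [NormedAddCommGroup E] [NormedSpace ℝ E] [FiniteDimensional ℝ E]
  [MeasurableSpace E] [BorelSpace E] {μ : Measure E} [μ.IsAddHaarMeasure]

/-- Translations are continuous in `L¹`. -/
theorem tendsto_integral_norm_translate_sub {f : E → ℝ} (hf : Integrable f μ) (v : E) :
    Tendsto (fun t : ℝ => ∫ z, ‖f (z + t • v) - f z‖ ∂μ) (𝓝 0) (𝓝 0) := by
  let g : ℝ → C(E, E) := fun t => ⟨fun z => z + t • v, by fun_prop⟩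
  have hg : Continuous g :=
    ContinuousMap.continuous_of_continuous_uncurry _
      (show Continuous fun p : ℝ × E => p.2 + p.1 • v by fun_prop)
  have hgm : ∀ t, MeasurePreserving (g t) μ μ := fun t => measurePreserving_add_right μ (t • v)
  have hf1 : MemLp f 1 μ := memLp_one_iff_integrable.2 hf
  have h := (continuous_const (y := hf1.toLp f)).compMeasurePreservingLp hg hgm (by simp)
  have h2 := (h.sub (continuous_const (y := hf1.toLp f))).norm.tendsto 0
  have key : ∀ t, ‖Lp.compMeasurePreserving (g t) (hgm t) (hf1.toLp f) - hf1.toLp f‖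
      = ∫ z, ‖f (z + t • v) - f z‖ ∂μ := by
    intro t
    rw [L1.norm_eq_integral_norm]
    refine integral_congr_ae ?_
    have e1 := Lp.coeFn_compMeasurePreserving (hf1.toLp f) (hgm t)
    have e2 := (hgm t).quasiMeasurePreserving.ae_eq_comp hf1.coeFn_toLp
    filter_upwards [Lp.coeFn_sub (Lp.compMeasurePreserving (g t) (hgm t) (hf1.toLp f))
      (hf1.toLp f), e1, e2, hf1.coeFn_toLp] with z h1 h2 h3 h4
    rw [h1, Pi.sub_apply, h2, h3, h4]
    rfl
  have h0 : ‖Lp.compMeasurePreserving (g 0) (hgm 0) (hf1.toLp f) - hf1.toLp f‖ = 0 := by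
    rw [key 0]; simp
  have h3 := h2.congr key
  convert h3 using 2
  exact h0.symm

omit [FiniteDimensional ℝ E] [μ.IsAddHaarMeasure] in
/-- Differentiation under the integral along translates of a test function. -/
theorem hasDerivAt_integral_translate {F : E → ℝ} (hF : Integrable F μ) {φ : E → ℝ}
    (hφ : ContDiff ℝ (⊤ : ℕ∞) φ) (hc : HasCompactSupport φ) (v : E) (t : ℝ) :
    HasDerivAt (fun t : ℝ => ∫ z, F z * φ (z - t • v) ∂μ)
      (∫ z, F z * -(fderiv ℝ φ (z - t • v) v) ∂μ) t := by
  have hd : Continuous (fun z => fderiv ℝ φ z v) :=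
    (hφ.continuous_fderiv (by simp)).clm_apply continuous_const
  obtain ⟨C, hC⟩ := hd.bounded_above_of_compact_support (hc.fderiv_apply (𝕜 := ℝ) v)
  obtain ⟨C', hC'⟩ := hφ.continuous.bounded_above_of_compact_support hc
  have hφm : ∀ s : ℝ, AEStronglyMeasurable (fun z => φ (z - s • v)) μ := fun s =>
    (hφ.continuous.comp (continuous_id.sub continuous_const)).aestronglyMeasurable
  refine (hasDerivAt_integral_of_dominated_loc_of_deriv_le
    (F := fun (t : ℝ) z => F z * φ (z - t • v))
    (F' := fun t z => F z * -(fderiv ℝ φ (z - t • v) v))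
    (bound := fun z => ‖F z‖ * C) univ_mem (Eventually.of_forall fun s => ?_) ?_ ?_ ?_ ?_ ?_).2
  · exact hF.aestronglyMeasurable.mul (hφm s)
  · exact hF.mul_bdd (hφm t) (Eventually.of_forall fun z => hC' _)
  · exact hF.aestronglyMeasurable.mul
      (hd.comp (continuous_id.sub continuous_const)).neg.aestronglyMeasurable
  · refine Eventually.of_forall fun z s _ => ?_
    rw [norm_mul, norm_neg]
    exact mul_le_mul_of_nonneg_left (hC _) (norm_nonneg _)
  · exact hF.norm.mul_const C
  · refine Eventually.of_forall fun z s _ => ?_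
    have h1 : HasFDerivAt φ (fderiv ℝ φ (z - s • v)) (z - s • v) :=
      ((hφ.differentiable (by simp)) _).hasFDerivAt
    have h2 : HasDerivAt (fun s : ℝ => z - s • v) (-v) s := by
      simpa using ((hasDerivAt_id s).smul_const v).const_sub z
    simpa using (h1.comp_hasDerivAt s h2).const_mul (F z)

omit [μ.IsAddHaarMeasure] in
/-- An integrable function whose weak derivative in one nonzero direction vanishes is zero: its
pairing with the translates of a test function along that direction is constant, and tends to `0`
at infinity. -/
theorem ae_eq_zero_of_weakDeriv_eq_zero {F : E → ℝ} (hF : Integrable F μ) {v : E} (hv : v ≠ 0)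
    (h : ∀ φ : E → ℝ, ContDiff ℝ (⊤ : ℕ∞) φ → HasCompactSupport φ →
      ∫ z, F z * fderiv ℝ φ z v ∂μ = 0) :
    ∀ᵐ z ∂μ, F z = 0 := by
  refine ae_eq_zero_of_integral_contDiff_smul_eq_zero hF.locallyIntegrable fun φ hφ hc => ?_
  obtain ⟨C, hC⟩ := hφ.continuous.bounded_above_of_compact_support hc
  have hconst : ∀ t : ℝ, ∫ z, F z * φ (z - t • v) ∂μ = ∫ z, F z * φ (z - (0 : ℝ) • v) ∂μ := by
    intro t
    refine is_const_of_deriv_eq_zero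
      (fun s => (hasDerivAt_integral_translate hF hφ hc v s).differentiableAt) (fun s => ?_) t 0
    rw [(hasDerivAt_integral_translate hF hφ hc v s).deriv]
    have hs := h (fun z => φ (z - s • v)) (hφ.comp (contDiff_id.sub contDiff_const))
      (hc.comp_homeomorph (Homeomorph.subRight (s • v)))
    simp only [fderiv_comp_sub] at hs
    simp only [mul_neg, integral_neg, hs, neg_zero]
  have hlim : Tendsto (fun n : ℕ => ∫ z, F z * φ (z - (n : ℝ) • v) ∂μ) atTop (𝓝 0) := by
    have := tendsto_integral_of_dominated_convergence (μ := μ)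
      (F := fun (n : ℕ) z => F z * φ (z - (n : ℝ) • v)) (f := fun _ => 0)
      (fun z => ‖F z‖ * C)
      (fun n => hF.aestronglyMeasurable.mul (hφ.continuous.comp
        (continuous_id.sub continuous_const)).aestronglyMeasurable)
      (hF.norm.mul_const C)
      (fun n => Eventually.of_forall fun z => by
        rw [norm_mul]; exact mul_le_mul_of_nonneg_left (hC _) (norm_nonneg _))
      (Eventually.of_forall fun z => ?_)
    · simpa using this
    · obtain ⟨R, hR⟩ := hc.isCompact.isBounded.subset_closedBall (0 : E)
      refine tendsto_const_nhds.congr' ?_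
      have hvn : 0 < ‖v‖ := norm_pos_iff.2 hv
      filter_upwards [(tendsto_natCast_atTop_atTop (R := ℝ)).eventually_gt_atTop
        ((R + ‖z‖) / ‖v‖)] with n hn
      have : z - (n : ℝ) • v ∉ tsupport φ := by
        intro hz
        have h1 := hR hz
        rw [mem_closedBall_zero_iff] at h1
        have h2 : ‖(n : ℝ) • v‖ ≤ ‖z‖ + ‖z - (n : ℝ) • v‖ := by
          have := norm_sub_le z (z - (n : ℝ) • v)
          simpa using this
        rw [norm_smul, Real.norm_of_nonneg n.cast_nonneg] at h2
        rw [div_lt_iff₀ hvn] at hn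
        linarith
      rw [image_eq_zero_of_notMem_tsupport this, mul_zero]
  simp only [hconst, zero_smul, sub_zero] at hlim
  have := tendsto_nhds_unique hlim tendsto_const_nhds
  simpa [mul_comm] using this.symm

omit [μ.IsAddHaarMeasure] in
/-- Smooth bumps decreasing to the indicator of a compact set. -/
theorem exists_smooth_approx_indicator {K : Set E} (hK : IsCompact K) :
    ∃ (g : ℕ → E → ℝ) (K' : Set E), IsCompact K' ∧
      (∀ n, ContDiff ℝ (⊤ : ℕ∞) (g n)) ∧ (∀ n, HasCompactSupport (g n)) ∧
      (∀ n x, g n x ∈ Icc (0 : ℝ) 1) ∧ (∀ n, ∀ x ∉ K', g n x = 0) ∧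
      ∀ f : E → ℝ, LocallyIntegrable f μ →
        Tendsto (fun n => ∫ x, f x * g n x ∂μ) atTop (𝓝 (∫ x in K, f x ∂μ)) := by
  obtain ⟨δ, δpos, hδ⟩ : ∃ δ, 0 < δ ∧ IsCompact (Metric.cthickening δ K) :=
    hK.exists_isCompact_cthickening
  obtain ⟨u, -, u_pos, u_lim⟩ : ∃ u, StrictAnti u ∧ (∀ (n : ℕ), u n ∈ Ioo 0 δ)
    ∧ Tendsto u atTop (𝓝 0) := exists_seq_strictAnti_tendsto' δpos
  have : ∀ n, ∃ (g : E → ℝ), Function.support g = Metric.thickening (u n) K ∧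
      ContDiff ℝ (⊤ : ℕ∞) g ∧ Set.range g ⊆ Set.Icc 0 1 ∧ ∀ x ∈ K, g x = 1 := by
    intro n
    rcases exists_contMDiff_support_eq_eq_one_iff (modelWithCornersSelf ℝ E)
      Metric.isOpen_thickening hK.isClosed
      (Metric.self_subset_thickening (u_pos n).1 K) with ⟨g, g_smooth, g_range, g_supp, hg⟩
    exact ⟨g, g_supp, g_smooth.contDiff, g_range, fun x hx ↦ (hg x).1 hx⟩
  choose g g_supp g_diff g_range hg using this
  have hz : ∀ n, ∀ x ∉ Metric.cthickening δ K, g n x = 0 := by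
    intro n x hx
    rw [← Function.notMem_support, g_supp]
    contrapose! hx
    exact Metric.thickening_subset_cthickening_of_le (u_pos n).2.le _ hx
  refine ⟨g, _, hδ, g_diff, fun n => HasCompactSupport.intro hδ (hz n),
    fun n x => g_range n (mem_range_self x), hz, fun f hf => ?_⟩
  rw [← integral_indicator hK.measurableSet]
  refine tendsto_integral_of_dominated_convergence
    ((Metric.cthickening δ K).indicator (fun x ↦ ‖f x‖))
    (fun n ↦ hf.aestronglyMeasurable.mul (g_diff n).continuous.aestronglyMeasurable) ?_
    (fun n => Eventually.of_forall fun x => ?_) (Eventually.of_forall fun x => ?_)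
  · rw [integrable_indicator_iff hδ.measurableSet]
    exact (hf.integrableOn_isCompact hδ).norm
  · refine le_indicator_apply (fun _ ↦ ?_) (fun hxK ↦ by simp [hz n x hxK])
    have := g_range n (mem_range_self x)
    rw [norm_mul, Real.norm_of_nonneg this.1]
    exact mul_le_of_le_one_right (norm_nonneg _) this.2
  · by_cases hxs : x ∈ K
    · simp [hg _ x hxs, indicator_of_mem hxs f]
    · rw [indicator_of_notMem hxs f]
      apply tendsto_const_nhds.congr'
      obtain ⟨ε, εpos, hε⟩ : ∃ ε, 0 < ε ∧ x ∉ Metric.thickening ε K := by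
        rw [← hK.isClosed.closure_eq, Metric.closure_eq_iInter_thickening K] at hxs
        simpa using hxs
      filter_upwards [(tendsto_order.1 u_lim).2 _ εpos] with n hn
      have : g n x = 0 := by
        rw [← Function.notMem_support, g_supp]
        contrapose hε
        exact Metric.thickening_mono hn.le K hε
      rw [this, mul_zero]

omit [NormedSpace ℝ E] [FiniteDimensional ℝ E] in
theorem integral_translate_eq (f φ : E → ℝ) (w : E) :
    ∫ z, f z * φ (z - w) ∂μ = ∫ z, f (z + w) * φ z ∂μ := by
  rw [← integral_add_right_eq_self _ w]
  simp

/-! ### Weak derivatives on the zero set of a nonnegative function -/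

/-- The integral of a weak derivative `d` of `F ≥ 0` over a compact part `K` of the zero set
vanishes. Since `F = 0` on `K`, the difference quotient `h⁻¹ ∫_K F(z + h v)` has the sign of `h`; it
tends to `∫_K d` as `h → 0`. -/
theorem setIntegral_weakDeriv_eq_zero {F d : E → ℝ} (hF : Integrable F μ) (hF0 : ∀ z, 0 ≤ F z)
    (hd : LocallyIntegrable d μ) (v : E)
    (hw : ∀ φ : E → ℝ, ContDiff ℝ (⊤ : ℕ∞) φ → HasCompactSupport φ →
      ∫ z, F z * fderiv ℝ φ z v ∂μ = -∫ z, d z * φ z ∂μ)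
    {K : Set E} (hK : IsCompact K) (hFK : ∀ z ∈ K, F z = 0) :
    ∫ z in K, d z ∂μ = 0 := by
  obtain ⟨g, K', hK', g_diff, g_supp, g_range, g_zero, g_lim⟩ :=
    exists_smooth_approx_indicator (μ := μ) hK
  -- all translates of the bumps by `t • v`, `|t| ≤ 1`, live on `K''`, so `d` may be truncated there
  let K'' : Set E := (fun p : E × ℝ => p.1 + p.2 • v) '' (K' ×ˢ Icc (-1) 1)
  have hK'' : IsCompact K'' := (hK'.prod isCompact_Icc).image (by fun_prop)
  let d1 : E → ℝ := K''.indicator d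
  have hd1 : Integrable d1 μ :=
    (integrable_indicator_iff hK''.measurableSet).2 (hd.integrableOn_isCompact hK'')
  have d_eq : ∀ z ∈ K', ∀ t ∈ Icc (-1 : ℝ) 1, d (z + t • v) = d1 (z + t • v) := fun z hz t ht =>
    (indicator_of_mem (show z + t • v ∈ K'' from ⟨(z, t), ⟨hz, ht⟩, rfl⟩) d).symm
  have hder : ∀ n t, HasDerivAt (fun t : ℝ => ∫ z, F z * g n (z - t • v) ∂μ)
      (∫ z, d z * g n (z - t • v) ∂μ) t := by
    intro n t
    convert hasDerivAt_integral_translate hF (g_diff n) (g_supp n) v t using 1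
    have hs := hw (fun z => g n (z - t • v)) ((g_diff n).comp (contDiff_id.sub contDiff_const))
      ((g_supp n).comp_homeomorph (Homeomorph.subRight (t • v)))
    simp only [fderiv_comp_sub] at hs
    simp only [mul_neg, integral_neg, hs, neg_neg]
  -- `h ↦ ∫_K F(z + h v)` is differentiable at `0` with derivative `∫_K d`: a mean value estimate
  -- for the bumps, uniform in `n`, passes to the limit
  have key : ∀ ε > 0, ∃ η > 0, ∀ h : ℝ, |h| ≤ η →
      |∫ z in K, F (z + h • v) ∂μ - h * ∫ z in K, d z ∂μ| ≤ ε * |h| := by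
    intro ε hε
    obtain ⟨η, hη, hη'⟩ := Metric.eventually_nhds_iff_ball.1
      ((tendsto_integral_norm_translate_sub hd1 v).eventually_le_const hε)
    refine ⟨min (η / 2) 1, by positivity, fun h hh => ?_⟩
    have hosc : ∀ n, ∀ t : ℝ, |t| ≤ min (η / 2) 1 →
        |∫ z, d z * g n (z - t • v) ∂μ - ∫ z, d z * g n z ∂μ| ≤ ε := by
      intro n t ht
      have ht1 : t ∈ Icc (-1 : ℝ) 1 := abs_le.1 (ht.trans (min_le_right _ _))
      have h2 : ∀ s ∈ Icc (-1 : ℝ) 1,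
          ∫ z, d (z + s • v) * g n z ∂μ = ∫ z, d1 (z + s • v) * g n z ∂μ := by
        intro s hs
        refine integral_congr_ae (Eventually.of_forall fun z => ?_)
        by_cases hz : z ∈ K'
        · simp only [d_eq z hz s hs]
        · simp [g_zero n z hz]
      have h20 := h2 0 ⟨by norm_num, by norm_num⟩
      simp only [zero_smul, add_zero] at h20
      have hgb : ∀ z, ‖g n z‖ ≤ 1 := fun z => by
        rw [Real.norm_of_nonneg (g_range n z).1]; exact (g_range n z).2
      have hgm : AEStronglyMeasurable (g n) μ := (g_diff n).continuous.aestronglyMeasurable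
      have hd1t : Integrable (fun z => d1 (z + t • v)) μ := hd1.comp_add_right _
      rw [integral_translate_eq, h2 t ht1, h20, ← integral_sub
        (hd1t.mul_bdd hgm (Eventually.of_forall hgb)) (hd1.mul_bdd hgm (Eventually.of_forall hgb)),
        ← Real.norm_eq_abs]
      refine (norm_integral_le_integral_norm _).trans ((integral_mono_of_nonneg
        (Eventually.of_forall fun z => norm_nonneg _) (hd1t.sub hd1).norm
        (Eventually.of_forall fun z => ?_)).trans (hη' t ?_))
      · simp only [← sub_mul, norm_mul, Pi.sub_apply]
        exact mul_le_of_le_one_right (norm_nonneg _) (hgb z)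
      · rw [mem_ball_zero_iff, Real.norm_eq_abs]
        linarith [ht.trans (min_le_left _ _)]
    have hn : ∀ n, |(∫ z, F (z + h • v) * g n z ∂μ - ∫ z, F z * g n z ∂μ)
        - h * ∫ z, d z * g n z ∂μ| ≤ ε * |h| := by
      intro n
      have := Convex.norm_image_sub_le_of_norm_hasDerivWithin_le (𝕜 := ℝ)
        (f := fun t : ℝ => ∫ z, F z * g n (z - t • v) ∂μ - t * ∫ z, d z * g n z ∂μ)
        (f' := fun t => ∫ z, d z * g n (z - t • v) ∂μ - 1 * ∫ z, d z * g n z ∂μ)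
        (s := Icc (-min (η / 2) 1) (min (η / 2) 1)) (x := 0) (y := h) (C := ε)
        (fun t _ => ((hder n t).sub
          ((hasDerivAt_id t).mul_const (∫ z, d z * g n z ∂μ))).hasDerivWithinAt)
        (fun t ht => by simpa using hosc n t (abs_le.2 ht)) (convex_Icc _ _)
        (abs_le.1 (by simpa using by positivity)) (abs_le.1 hh)
      simp only [integral_translate_eq F] at this
      simp only [Real.norm_eq_abs, zero_smul, add_zero, zero_mul, sub_zero] at this
      rwa [sub_right_comm] at this
    have hFt : Integrable (fun z => F (z + h • v)) μ := hF.comp_add_right _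
    have hlim := (((g_lim _ hFt.locallyIntegrable).sub (g_lim _ hF.locallyIntegrable)).sub
      ((g_lim _ hd).const_mul h)).abs
    have h0 : ∫ z in K, F z ∂μ = 0 := by
      rw [setIntegral_congr_fun hK.measurableSet hFK]; simp
    rw [h0, sub_zero] at hlim
    exact le_of_tendsto hlim (Eventually.of_forall hn)
  refine abs_eq_zero.1 (le_antisymm (le_of_forall_pos_le_add fun ε hε => ?_) (abs_nonneg _))
  obtain ⟨η, hη, hh⟩ := key ε hε
  have hpos : ∀ h : ℝ, 0 ≤ ∫ z in K, F (z + h • v) ∂μ := fun h => integral_nonneg fun z => hF0 _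
  have h1 := (abs_le.1 (hh η (abs_of_pos hη).le)).2
  have h2 := (abs_le.1 (hh (-η) (by rw [abs_neg, abs_of_pos hη]))).2
  rw [abs_neg] at h2
  rw [abs_of_pos hη] at h1 h2
  rw [zero_add, abs_le]
  constructor
  · refine le_of_mul_le_mul_left ?_ hη
    linarith [hpos η]
  · refine le_of_mul_le_mul_left ?_ hη
    linarith [hpos (-η)]

/-- The one-sided half of `weakDeriv_ae_eq_zero_of_eq_zero`. -/
theorem weakDeriv_ae_nonpos_of_eq_zero {F d : E → ℝ} (hF : Integrable F μ) (hF0 : ∀ z, 0 ≤ F z)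
    (hd : LocallyIntegrable d μ) (v : E)
    (hw : ∀ φ : E → ℝ, ContDiff ℝ (⊤ : ℕ∞) φ → HasCompactSupport φ →
      ∫ z, F z * fderiv ℝ φ z v ∂μ = -∫ z, d z * φ z ∂μ) :
    ∀ᵐ z ∂μ, F z = 0 → d z ≤ 0 := by
  have hS : NullMeasurableSet ({z | F z = 0} ∩ {z | 0 < d z}) μ :=
    (hF.aestronglyMeasurable.aemeasurable.nullMeasurable (measurableSet_singleton 0)).inter
      (hd.aestronglyMeasurable.aemeasurable.nullMeasurable measurableSet_Ioi)
  have hzero : μ ({z | F z = 0} ∩ {z | 0 < d z}) = 0 := by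
    by_contra hne
    obtain ⟨A, hAS, hA, hAe⟩ := hS.exists_measurable_subset_ae_eq
    rw [← measure_congr hAe] at hne
    obtain ⟨K, hKA, hK, hKpos⟩ := hA.exists_lt_isCompact (pos_iff_ne_zero.2 hne)
    have hI := setIntegral_weakDeriv_eq_zero hF hF0 hd v hw hK fun z hz => (hAS (hKA hz)).1
    have hpos : ∀ z ∈ K, 0 < d z := fun z hz => (hAS (hKA hz)).2
    have := (setIntegral_pos_iff_support_of_nonneg_ae
      ((ae_restrict_iff' hK.measurableSet).2 (Eventually.of_forall fun z hz => (hpos z hz).le))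
      (hd.integrableOn_isCompact hK)).2 (by
        rwa [inter_eq_self_of_subset_right (s := Function.support d)
          fun z hz => (hpos z hz).ne'])
    exact this.ne' hI
  filter_upwards [measure_eq_zero_iff_ae_notMem.1 hzero] with z hz h0
  exact not_lt.1 fun h => hz ⟨h0, h⟩

/-- A weak derivative of a nonnegative function vanishes almost everywhere on its zero set: zeros
are minima. -/
theorem weakDeriv_ae_eq_zero_of_eq_zero {F d : E → ℝ} (hF : Integrable F μ) (hF0 : ∀ z, 0 ≤ F z)
    (hd : LocallyIntegrable d μ) (v : E)
    (hw : ∀ φ : E → ℝ, ContDiff ℝ (⊤ : ℕ∞) φ → HasCompactSupport φ →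
      ∫ z, F z * fderiv ℝ φ z v ∂μ = -∫ z, d z * φ z ∂μ) :
    ∀ᵐ z ∂μ, F z = 0 → d z = 0 := by
  have h2 := weakDeriv_ae_nonpos_of_eq_zero hF hF0 hd.neg (-v) (fun φ h1 h2 => by
    simp only [map_neg, mul_neg, integral_neg, hw φ h1 h2, Pi.neg_apply, neg_mul])
  filter_upwards [weakDeriv_ae_nonpos_of_eq_zero hF hF0 hd v hw, h2] with z h3 h4 h0
  have := h4 h0
  rw [Pi.neg_apply] at this
  linarith [h3 h0]

/-! ### Bounded test functions -/

omit [μ.IsAddHaarMeasure] in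
/-- For integrable `F` and `d`, the weak derivative identity extends from compactly supported test
functions to bounded ones with bounded derivative. -/
theorem weakDeriv_bounded_test {F d : E → ℝ} (hF : Integrable F μ) (hd : Integrable d μ) (v : E)
    (hw : ∀ φ : E → ℝ, ContDiff ℝ (⊤ : ℕ∞) φ → HasCompactSupport φ →
      ∫ z, F z * fderiv ℝ φ z v ∂μ = -∫ z, d z * φ z ∂μ)
    {ψ : E → ℝ} (hψ : ContDiff ℝ (⊤ : ℕ∞) ψ) {A B : ℝ} (hA : ∀ z, ‖ψ z‖ ≤ A)
    (hB : ∀ z, ‖fderiv ℝ ψ z v‖ ≤ B) :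
    ∫ z, F z * fderiv ℝ ψ z v ∂μ = -∫ z, d z * ψ z ∂μ := by
  let χ : ContDiffBump (0 : E) := ⟨1, 2, by norm_num, by norm_num⟩
  have hχ : ContDiff ℝ (⊤ : ℕ∞) χ := χ.contDiff
  have hχd : Continuous (fun z => fderiv ℝ χ z v) :=
    (hχ.continuous_fderiv (by simp)).clm_apply continuous_const
  obtain ⟨C, hC⟩ := hχd.bounded_above_of_compact_support
    (χ.hasCompactSupport.fderiv_apply (𝕜 := ℝ) v)
  let r : ℕ → ℝ := fun n => 1 / ((n : ℝ) + 1)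
  have hr0 : ∀ n, 0 < r n := fun n => by positivity
  have hr1 : ∀ n, r n ≤ 1 := fun n => by
    rw [div_le_one (by positivity)]; linarith [n.cast_nonneg (α := ℝ)]
  have hr : Tendsto r atTop (𝓝 0) := tendsto_one_div_add_atTop_nhds_zero_nat
  have hcut : ∀ n, ContDiff ℝ (⊤ : ℕ∞) (fun z => χ (r n • z)) := fun n =>
    hχ.comp (contDiff_const_smul (r n))
  have hcutd : ∀ n z, fderiv ℝ (fun z => χ (r n • z)) z v = r n * fderiv ℝ χ (r n • z) v := by
    intro n z
    rw [fderiv_comp_smul]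
    simp
  have hprod : ∀ n z, fderiv ℝ (fun z => χ (r n • z) * ψ z) z v =
      χ (r n • z) * fderiv ℝ ψ z v + r n * fderiv ℝ χ (r n • z) v * ψ z := by
    intro n z
    rw [fderiv_fun_mul ((hcut n).differentiable (by simp) z) (hψ.differentiable (by simp) z)]
    simp only [_root_.add_apply, _root_.smul_apply, hcutd, smul_eq_mul]
    ring
  have hid : ∀ n, ∫ z, F z * (χ (r n • z) * fderiv ℝ ψ z v
      + r n * fderiv ℝ χ (r n • z) v * ψ z) ∂μ = -∫ z, d z * (χ (r n • z) * ψ z) ∂μ := by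
    intro n
    simp only [← hprod]
    refine hw _ ((hcut n).mul hψ) (HasCompactSupport.mul_right ?_)
    exact χ.hasCompactSupport.comp_homeomorph (Homeomorph.smulOfNeZero (r n) (hr0 n).ne')
  have hχ1 : ∀ z, ‖χ z‖ ≤ 1 := fun z => by
    rw [Real.norm_of_nonneg χ.nonneg]; exact χ.le_one
  have hC0 : 0 ≤ C := (norm_nonneg _).trans (hC 0)
  have hχlim : ∀ z, Tendsto (fun n => χ (r n • z)) atTop (𝓝 1) := by
    intro z
    have h1 : Tendsto (fun n => r n • z) atTop (𝓝 ((0 : ℝ) • z)) := hr.smul_const z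
    have h2 := (hχ.continuous.tendsto _).comp h1
    have h3 : χ 0 = 1 := χ.one_of_mem_closedBall (Metric.mem_closedBall_self χ.rIn_pos.le)
    simpa [Function.comp_def, zero_smul, h3] using h2
  have hψd : Continuous (fun z => fderiv ℝ ψ z v) :=
    (hψ.continuous_fderiv (by simp)).clm_apply continuous_const
  have L1 : Tendsto (fun n => ∫ z, F z * (χ (r n • z) * fderiv ℝ ψ z v
      + r n * fderiv ℝ χ (r n • z) v * ψ z) ∂μ) atTop (𝓝 (∫ z, F z * fderiv ℝ ψ z v ∂μ)) := by
    refine tendsto_integral_of_dominated_convergence (fun z => ‖F z‖ * (B + C * A))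
      (fun n => hF.aestronglyMeasurable.mul (Continuous.aestronglyMeasurable ?_))
      (hF.norm.mul_const _) (fun n => Eventually.of_forall fun z => ?_)
      (Eventually.of_forall fun z => ?_)
    · have := (hcut n).continuous
      have h3 : Continuous (fun z => fderiv ℝ χ (r n • z) v) :=
        hχd.comp (continuous_const_smul (r n))
      have := hψ.continuous
      fun_prop
    · rw [norm_mul]
      refine mul_le_mul_of_nonneg_left ((norm_add_le _ _).trans (add_le_add ?_ ?_)) (norm_nonneg _)
      · rw [norm_mul]
        exact (mul_le_of_le_one_left (norm_nonneg _) (hχ1 _)).trans (hB z)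
      · rw [norm_mul, norm_mul, Real.norm_of_nonneg (hr0 n).le]
        exact mul_le_mul ((mul_le_of_le_one_left (norm_nonneg _) (hr1 n)).trans (hC _)) (hA z)
          (norm_nonneg _) hC0
    · have h4 : Tendsto (fun n => r n * fderiv ℝ χ (r n • z) v * ψ z) atTop (𝓝 (0 * ψ z)) :=
        (hr.zero_mul_isBoundedUnder_le (isBoundedUnder_of ⟨C, fun n => hC _⟩)).mul_const _
      simpa using ((((hχlim z).mul_const (fderiv ℝ ψ z v)).add h4).const_mul (F z))
  have L2 : Tendsto (fun n => -∫ z, d z * (χ (r n • z) * ψ z) ∂μ) atTop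
      (𝓝 (-∫ z, d z * ψ z ∂μ)) := by
    refine (tendsto_integral_of_dominated_convergence (fun z => ‖d z‖ * A)
      (fun n => hd.aestronglyMeasurable.mul (Continuous.aestronglyMeasurable ?_))
      (hd.norm.mul_const _) (fun n => Eventually.of_forall fun z => ?_)
      (Eventually.of_forall fun z => ?_)).neg
    · exact (hcut n).continuous.mul hψ.continuous
    · rw [Pi.mul_apply, norm_mul, norm_mul]
      exact mul_le_mul_of_nonneg_left
        ((mul_le_of_le_one_left (norm_nonneg _) (hχ1 _)).trans (hA z)) (norm_nonneg _)
    · simpa using ((hχlim z).mul_const (ψ z)).const_mul (d z)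
  simp only [hid] at L1
  exact tendsto_nhds_unique L1 L2

end General

/-! ### The weak gradient in the first variable -/

section Plane

theorem isAddHaarMeasure_volume : (volume : Measure (E2 × E2)).IsAddHaarMeasure :=
  inferInstanceAs ((volume : Measure E2).prod volume).IsAddHaarMeasure

/-- The `i`-th coordinate direction in the first factor of `ℝ² × ℝ²`. -/
def dir (i : Fin 2) : E2 × E2 := (EuclideanSpace.single i 1, 0)

theorem partial_gradient_apply {φ : E2 × E2 → ℝ} (hφ : ContDiff ℝ (⊤ : ℕ∞) φ) (z : E2 × E2)
    (i : Fin 2) :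
    gradient (fun y => φ (y, z.2)) z.1 i = fderiv ℝ φ z (dir i) := by
  have h1 : HasFDerivAt (fun y : E2 => φ (y, z.2))
      ((fderiv ℝ φ z).comp (ContinuousLinearMap.inl ℝ E2 E2)) z.1 :=
    HasFDerivAt.comp z.1 (g := φ) ((hφ.differentiable (by simp) z).hasFDerivAt)
      (hasFDerivAt_prodMk_left z.1 z.2)
  have h2 := inner_gradient_left (𝕜 := ℝ) (f := fun y : E2 => φ (y, z.2)) (x := z.1)
    (y := EuclideanSpace.single i 1)
  rw [EuclideanSpace.inner_single_right, h1.fderiv] at h2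
  simpa [dir] using h2

theorem integrable_smul_partial_gradient {F : E2 × E2 → ℝ} (hF : Integrable F) {φ : E2 × E2 → ℝ}
    (hφ : ContDiff ℝ (⊤ : ℕ∞) φ) (hc : HasCompactSupport φ) :
    Integrable (fun z => F z • gradient (fun y => φ (y, z.2)) z.1) := by
  let T : ((E2 × E2) →L[ℝ] ℝ) → E2 := fun l =>
    (InnerProductSpace.toDual ℝ E2).symm (l.comp (ContinuousLinearMap.inl ℝ E2 E2))
  have hT : Continuous T := (InnerProductSpace.toDual ℝ E2).symm.continuous.comp
    (continuous_id.clm_comp continuous_const)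
  have e : (fun z : E2 × E2 => gradient (fun y => φ (y, z.2)) z.1) = T ∘ fderiv ℝ φ := by
    funext z
    ext i
    rw [partial_gradient_apply hφ]
    have h2 : inner ℝ (T (fderiv ℝ φ z)) (EuclideanSpace.single i 1) = fderiv ℝ φ z (dir i) := by
      simp only [T, InnerProductSpace.toDual_symm_apply]
      rfl
    rw [EuclideanSpace.inner_single_right] at h2
    simpa using h2.symm
  have hcont : Continuous (fun z : E2 × E2 => gradient (fun y => φ (y, z.2)) z.1) := by
    rw [e]; exact hT.comp (hφ.continuous_fderiv (by simp))
  have hcs : HasCompactSupport (fun z : E2 × E2 => gradient (fun y => φ (y, z.2)) z.1) := by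
    rw [e]; exact (hc.fderiv (𝕜 := ℝ)).comp_left (by simp [T])
  obtain ⟨C, hC⟩ := hcont.bounded_above_of_compact_support hcs
  exact hF.smul_bdd C hcont.aestronglyMeasurable (Eventually.of_forall hC)

theorem integrable_mul_fderiv {F : E2 × E2 → ℝ} (hF : Integrable F) {φ : E2 × E2 → ℝ}
    (hφ : ContDiff ℝ (⊤ : ℕ∞) φ) (hc : HasCompactSupport φ) (v : E2 × E2) :
    Integrable (fun z => F z * fderiv ℝ φ z v) := by
  have hd : Continuous (fun z => fderiv ℝ φ z v) :=
    (hφ.continuous_fderiv (by simp)).clm_apply continuous_const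
  obtain ⟨C, hC⟩ := hd.bounded_above_of_compact_support (hc.fderiv_apply (𝕜 := ℝ) v)
  exact hF.mul_bdd hd.aestronglyMeasurable (Eventually.of_forall hC)

/-- A weak partial gradient `D` of a nonzero integrable function is locally integrable. If
`φ₀ • D` were not integrable for some test function `φ₀`, every test function would either have this
property or be a difference of two functions that do, so (the Bochner integral of a non-integrable function being `0`) all weak
derivatives of `F` would vanish. -/
theorem locallyIntegrable_weakGradient {F : E2 × E2 → ℝ} {D : E2 × E2 → E2} (hF : Integrable F)
    (hF1 : ∫ z, F z = 1)
    (hw : ∀ φ : E2 × E2 → ℝ, ContDiff ℝ (⊤ : ℕ∞) φ → HasCompactSupport φ →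
      (∫ z, F z • gradient (fun y => φ (y, z.2)) z.1) = - ∫ z, φ z • D z) :
    LocallyIntegrable D ∧ ∀ (i : Fin 2) (φ : E2 × E2 → ℝ), ContDiff ℝ (⊤ : ℕ∞) φ →
      HasCompactSupport φ → ∫ z, F z * fderiv ℝ φ z (dir i) = -∫ z, D z i * φ z := by
  have := isAddHaarMeasure_volume
  have hT : ∀ (i : Fin 2) (φ : E2 × E2 → ℝ), ContDiff ℝ (⊤ : ℕ∞) φ → HasCompactSupport φ →
      ∫ z, F z * fderiv ℝ φ z (dir i) = (-∫ z, φ z • D z) i := by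
    intro i φ hφ hc
    rw [← hw φ hφ hc]
    have := (EuclideanSpace.proj i : E2 →L[ℝ] ℝ).integral_comp_comm
      (integrable_smul_partial_gradient hF hφ hc)
    simp only [PiLp.proj_apply, PiLp.smul_apply, partial_gradient_apply hφ, smul_eq_mul] at this
    exact this
  have hDint : ∀ φ : E2 × E2 → ℝ, ContDiff ℝ (⊤ : ℕ∞) φ → HasCompactSupport φ →
      Integrable (fun z => φ z • D z) := by
    by_contra! hcon
    obtain ⟨φ₀, hφ₀, hc₀, hn₀⟩ := hcon
    have hundef : ∀ φ : E2 × E2 → ℝ, ContDiff ℝ (⊤ : ℕ∞) φ → HasCompactSupport φ →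
        ¬ Integrable (fun z => φ z • D z) → ∫ z, F z * fderiv ℝ φ z (dir 0) = 0 := by
      intro φ hφ hc hn
      rw [hT 0 φ hφ hc, integral_undef hn]
      simp
    have hv : dir 0 ≠ 0 := by simp [dir, Prod.ext_iff]
    have h0 := ae_eq_zero_of_weakDeriv_eq_zero hF hv fun ψ hψ hc => ?_
    · rw [integral_eq_zero_of_ae h0] at hF1
      exact zero_ne_one hF1
    by_cases hψi : Integrable (fun z => ψ z • D z)
    · have hs := hundef (ψ + φ₀) (hψ.add hφ₀) (hc.add hc₀) (fun h => hn₀ (by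
        refine (h.sub hψi).congr (Eventually.of_forall fun z => ?_)
        simp [add_smul]))
      have e : ∀ z, F z * fderiv ℝ (ψ + φ₀) z (dir 0)
          = F z * fderiv ℝ ψ z (dir 0) + F z * fderiv ℝ φ₀ z (dir 0) := by
        intro z
        rw [fderiv_add (hψ.differentiable (by simp) z) (hφ₀.differentiable (by simp) z),
          _root_.add_apply, mul_add]
      simp only [e] at hs
      rw [integral_add (integrable_mul_fderiv hF hψ hc _) (integrable_mul_fderiv hF hφ₀ hc₀ _),
        hundef φ₀ hφ₀ hc₀ hn₀, add_zero] at hs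
      exact hs
    · exact hundef ψ hψ hc hψi
  refine ⟨locallyIntegrable_iff.2 fun K hK => ?_, fun i φ hφ hc => ?_⟩
  · obtain ⟨R, hR⟩ := hK.isBounded.subset_closedBall (0 : E2 × E2)
    let χ : ContDiffBump (0 : E2 × E2) := ⟨max R 1, max R 1 + 1, by positivity, by linarith⟩
    refine (hDint χ χ.contDiff χ.hasCompactSupport).integrableOn.congr_fun (fun z hz => ?_)
      hK.measurableSet
    have : χ z = 1 := χ.one_of_mem_closedBall
      (Metric.closedBall_subset_closedBall (le_max_left _ _) (hR hz))
    simp [this]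
  · rw [hT i φ hφ hc]
    have := (EuclideanSpace.proj i : E2 →L[ℝ] ℝ).integral_comp_comm (hDint φ hφ hc)
    simp only [PiLp.proj_apply, PiLp.smul_apply, smul_eq_mul] at this
    rw [PiLp.neg_apply, ← this]
    simp only [mul_comm]

/-- The weak gradient vanishes almost everywhere on `{F = 0}` and, by finiteness of the Fisher
information, is integrable. -/
theorem integrable_weakGradient {F : E2 × E2 → ℝ} {D : E2 × E2 → E2} (hF0 : ∀ z, 0 ≤ F z)
    (hF : Integrable F) (hD : LocallyIntegrable D)
    (hw : ∀ (i : Fin 2) (φ : E2 × E2 → ℝ), ContDiff ℝ (⊤ : ℕ∞) φ →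
      HasCompactSupport φ → ∫ z, F z * fderiv ℝ φ z (dir i) = -∫ z, D z i * φ z)
    (hJ : Integrable (fun z => ‖D z‖ ^ 2 / F z)) :
    (∀ᵐ z, F z = 0 → D z = 0) ∧ Integrable D := by
  have := isAddHaarMeasure_volume
  have hDi : ∀ i, LocallyIntegrable (fun z => D z i) := fun i =>
    locallyIntegrable_iff.2 fun K hK =>
      (EuclideanSpace.proj i : E2 →L[ℝ] ℝ).integrable_comp (hD.integrableOn_isCompact hK)
  have h0 : ∀ᵐ z, F z = 0 → D z = 0 := by
    filter_upwards [ae_all_iff.2 fun i =>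
      weakDeriv_ae_eq_zero_of_eq_zero hF hF0 (hDi i) (dir i) (hw i)] with z hz hFz
    ext i
    simpa using hz i hFz
  refine ⟨h0, (hF.add hJ).mono' hD.aestronglyMeasurable ?_⟩
  filter_upwards [h0] with z hz
  rw [Pi.add_apply]
  rcases (hF0 z).eq_or_lt with h | h
  · simp [hz h.symm, ← h]
  · have : ‖D z‖ * F z ≤ (F z + ‖D z‖ ^ 2 / F z) * F z := by
      rw [add_mul, div_mul_cancel₀ _ h.ne']
      nlinarith [sq_nonneg (F z - ‖D z‖), norm_nonneg (D z), mul_nonneg (norm_nonneg (D z)) h.le]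
    exact le_of_mul_le_mul_right this h

end Plane

/-! ### The Hardy-type estimate -/

section Estimate

/-- Young's inequality for the integrand of the Hardy-type estimate, with `q = ε + |u|²`, `U = |u|`
and `a = |D1|`. The middle term on the right, half of the left side of that estimate, can be
absorbed. -/
theorem young_pointwise {g L q F a U : ℝ} (hg1 : 1 ≤ g) (hg2 : g < 2) (hL : 0 < L) (hq : 0 < q)
    (hF : 0 < F) (hU : U ^ 2 ≤ q) :
    U * q ^ (-(g / 2)) * a ≤ 2⁻¹ * ((((2 - g) ^ (2 / (2 - g))) ^ (1 - g) * L ^ (g / 2)) * F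
      + (2 - g) * (q ^ (-(g / 2)) * F) + L ^ ((g - 2) / 2) * (a ^ 2 / F)) := by
  set b : ℝ := (2 - g) ^ (2 / (2 - g)) with hb
  have hk : 0 < 2 - g := by linarith
  have hb0 : 0 < b := Real.rpow_pos_of_pos hk _
  set t : ℝ := L ^ ((2 - g) / 2) with ht
  have ht0 : 0 < t := Real.rpow_pos_of_pos hL _
  have htinv : L ^ ((g - 2) / 2) = t⁻¹ := by
    rw [ht, ← Real.rpow_neg hL.le]; congr 1; ring
  have hx0 : 0 < q ^ (-(g / 2)) := Real.rpow_pos_of_pos hq _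
  have hsq : U ^ 2 * (q ^ (-(g / 2))) ^ 2 ≤ q ^ (1 - g) := by
    have : q * (q ^ (-(g / 2))) ^ 2 = q ^ (1 - g) := by
      rw [← Real.rpow_natCast, ← Real.rpow_mul hq.le]
      nth_rewrite 1 [← Real.rpow_one q]
      rw [← Real.rpow_add hq]; congr 1; push_cast; ring
    rw [← this]
    gcongr
  -- compare `L q` with the threshold `b`: below it the absorbed term dominates, above it the mass
  -- term does
  have habs : t * q ^ (1 - g) ≤ b ^ (1 - g) * L ^ (g / 2) + (2 - g) * q ^ (-(g / 2)) := by
    rcases le_or_gt ((L * q) ^ ((2 - g) / 2)) (2 - g) with h | h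
    · have e : t * q ^ (1 - g) = (L * q) ^ ((2 - g) / 2) * q ^ (-(g / 2)) := by
        rw [Real.mul_rpow hL.le hq.le, mul_assoc, ← Real.rpow_add hq]
        congr 2; ring
      rw [e]
      have : 0 ≤ b ^ (1 - g) * L ^ (g / 2) := by positivity
      nlinarith [mul_le_mul_of_nonneg_right h hx0.le]
    · have hLq : b ≤ L * q := by
        have h1 := Real.rpow_le_rpow hk.le h.le (show 0 ≤ 2 / (2 - g) by positivity)
        rw [← Real.rpow_mul (by positivity),
          show (2 - g) / 2 * (2 / (2 - g)) = 1 by field_simp, Real.rpow_one] at h1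
        exact h1
      have h2 : (L * q) ^ (1 - g) ≤ b ^ (1 - g) :=
        Real.rpow_le_rpow_of_nonpos hb0 hLq (by linarith)
      have e : t * q ^ (1 - g) = (L * q) ^ (1 - g) * L ^ (g / 2) := by
        rw [Real.mul_rpow hL.le hq.le, mul_right_comm, ← Real.rpow_add hL, ht]
        congr 2; ring
      rw [e]
      have : 0 ≤ (2 - g) * q ^ (-(g / 2)) := by positivity
      nlinarith [mul_le_mul_of_nonneg_right h2 (show 0 ≤ L ^ (g / 2) by positivity)]
  rw [htinv]
  have amgm : U * q ^ (-(g / 2)) * a ≤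
      2⁻¹ * (t * (U ^ 2 * (q ^ (-(g / 2))) ^ 2) * F + t⁻¹ * (a ^ 2 / F)) := by
    have h1 : t * (U ^ 2 * (q ^ (-(g / 2))) ^ 2) * F + t⁻¹ * (a ^ 2 / F)
        - 2 * (U * q ^ (-(g / 2)) * a) = (t * F * (U * q ^ (-(g / 2))) - a) ^ 2 / (t * F) := by
      field_simp
      ring
    have h2 : 0 ≤ (t * F * (U * q ^ (-(g / 2))) - a) ^ 2 / (t * F) := by positivity
    linarith
  have h3 : t * (U ^ 2 * (q ^ (-(g / 2))) ^ 2) * F ≤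
      (b ^ (1 - g) * L ^ (g / 2) + (2 - g) * q ^ (-(g / 2))) * F := by
    refine mul_le_mul_of_nonneg_right (le_trans ?_ habs) hF.le
    exact mul_le_mul_of_nonneg_left hsq ht0.le
  linarith

/-- The regularized squared distance `ε + |x₁ - x₂|²`. -/
def regDist (ε : ℝ) (z : E2 × E2) : ℝ := ε + ‖z.1 - z.2‖ ^ 2

theorem le_regDist (ε : ℝ) (z : E2 × E2) : ε ≤ regDist ε z := by
  unfold regDist; linarith [sq_nonneg ‖z.1 - z.2‖]

/-- The vector field `(x₁ - x₂) (ε + |x₁ - x₂|²)^{-g/2}`, a regularization of `u / |u|^g` with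
`u = x₁ - x₂`, given by its `i`-th coordinate. -/
def hardyField (ε g : ℝ) (i : Fin 2) (z : E2 × E2) : ℝ :=
  (z.1 - z.2) i * regDist ε z ^ (-(g / 2))

theorem contDiff_regDist (ε : ℝ) : ContDiff ℝ (⊤ : ℕ∞) (regDist ε) :=
  contDiff_const.add ((contDiff_fst.sub contDiff_snd).norm_sq ℝ)

theorem contDiff_hardyField {ε : ℝ} (hε : 0 < ε) (g : ℝ) (i : Fin 2) :
    ContDiff ℝ (⊤ : ℕ∞) (hardyField ε g i) := by
  refine ContDiff.mul ?_ ((contDiff_regDist ε).rpow_const_of_ne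
    fun z => (hε.trans_le (le_regDist ε z)).ne')
  exact (EuclideanSpace.proj i : E2 →L[ℝ] ℝ).contDiff.comp (contDiff_fst.sub contDiff_snd)

theorem fderiv_hardyField {ε : ℝ} (hε : 0 < ε) (g : ℝ) (i : Fin 2) (z : E2 × E2) :
    fderiv ℝ (hardyField ε g i) z (dir i) = regDist ε z ^ (-(g / 2))
      - g * ((z.1 - z.2) i ^ 2 * regDist ε z ^ (-(g / 2) - 1)) := by
  have hq := hε.trans_le (le_regDist ε z)
  let P : (E2 × E2) →L[ℝ] E2 := ContinuousLinearMap.fst ℝ E2 E2 - ContinuousLinearMap.snd ℝ E2 E2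
  have hP : P (dir i) = EuclideanSpace.single i 1 := by simp [P, dir]
  have h1 : HasFDerivAt (regDist ε) (2 • (innerSL ℝ (P z)).comp P) z :=
    (P.hasFDerivAt.norm_sq).const_add ε
  have h2 := h1.rpow_const (p := -(g / 2)) (Or.inl hq.ne')
  have h3 : HasFDerivAt (fun z : E2 × E2 => (z.1 - z.2) i)
      ((EuclideanSpace.proj i : E2 →L[ℝ] ℝ).comp P) z :=
    ((EuclideanSpace.proj i : E2 →L[ℝ] ℝ).comp P).hasFDerivAt
  have h4 : HasFDerivAt (hardyField ε g i) _ z := h3.mul h2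
  rw [h4.fderiv]
  simp [hP, EuclideanSpace.inner_single_right]
  simp [P]
  ring

theorem sq_apply_le (u : E2) (i : Fin 2) : u i ^ 2 ≤ ‖u‖ ^ 2 := by
  rw [EuclideanSpace.norm_sq_eq, ← sq_abs, ← Real.norm_eq_abs]
  exact Finset.single_le_sum (f := fun j => ‖u j‖ ^ 2) (fun j _ => sq_nonneg _) (Finset.mem_univ i)

theorem hardyField_bounds {ε g : ℝ} (hε : 0 < ε) (hg1 : 1 ≤ g) (i : Fin 2) (z : E2 × E2) :
    ‖hardyField ε g i z‖ ≤ ε ^ ((1 - g) / 2) ∧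
      ‖fderiv ℝ (hardyField ε g i) z (dir i)‖ ≤ (1 + g) * ε ^ (-(g / 2)) := by
  have hεq := le_regDist ε z
  have hq := hε.trans_le hεq
  have hu : (z.1 - z.2) i ^ 2 ≤ regDist ε z :=
    (sq_apply_le _ i).trans (by unfold regDist; linarith)
  have hx : 0 < regDist ε z ^ (-(g / 2)) := Real.rpow_pos_of_pos hq _
  constructor
  · rw [hardyField, norm_mul, Real.norm_of_nonneg hx.le, Real.norm_eq_abs]
    calc _ ≤ regDist ε z ^ (1 / 2 : ℝ) * regDist ε z ^ (-(g / 2)) := by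
          rw [← Real.sqrt_eq_rpow]
          exact mul_le_mul_of_nonneg_right (Real.abs_le_sqrt hu) hx.le
      _ = regDist ε z ^ ((1 - g) / 2) := by rw [← Real.rpow_add hq]; congr 1; ring
      _ ≤ _ := Real.rpow_le_rpow_of_nonpos hε hεq (by linarith)
  · rw [fderiv_hardyField hε]
    have hle : regDist ε z ^ (-(g / 2)) ≤ ε ^ (-(g / 2)) :=
      Real.rpow_le_rpow_of_nonpos hε hεq (by linarith)
    have hy : (z.1 - z.2) i ^ 2 * regDist ε z ^ (-(g / 2) - 1) ≤ regDist ε z ^ (-(g / 2)) := by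
      rw [Real.rpow_sub_one hq.ne', ← mul_div_assoc, div_le_iff₀ hq, mul_comm]
      exact mul_le_mul_of_nonneg_left hu hx.le
    have hy0 : 0 ≤ (z.1 - z.2) i ^ 2 * regDist ε z ^ (-(g / 2) - 1) := by positivity
    rw [Real.norm_eq_abs, abs_le]
    constructor <;> nlinarith

/-- The scale-invariant Hardy-type estimate for the regularized distance, with a constant that does
not depend on `ε`. -/
theorem regularized_estimate {g : ℝ} (hg1 : 1 ≤ g) (hg2 : g < 2) {F : E2 × E2 → ℝ}
    {D : E2 × E2 → E2} (hF0 : ∀ z, 0 ≤ F z) (hF : Integrable F) (hF1 : ∫ z, F z = 1)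
    (hD : Integrable D) (h0 : ∀ᵐ z, F z = 0 → D z = 0)
    (hw : ∀ (i : Fin 2) (φ : E2 × E2 → ℝ), ContDiff ℝ (⊤ : ℕ∞) φ →
      HasCompactSupport φ → ∫ z, F z * fderiv ℝ φ z (dir i) = -∫ z, D z i * φ z)
    (hJ : Integrable (fun z => ‖D z‖ ^ 2 / F z)) {L : ℝ} (hL : 0 < L)
    (hJL : ∫ z, ‖D z‖ ^ 2 / F z ≤ L) {ε : ℝ} (hε : 0 < ε) :
    ∫ z, regDist ε z ^ (-(g / 2)) * F z ≤
      ((((2 - g) ^ (2 / (2 - g))) ^ (1 - g) + 1) / (2 - g)) * L ^ (g / 2) := by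
  have := isAddHaarMeasure_volume
  set M := ((2 - g) ^ (2 / (2 - g))) ^ (1 - g) with hM
  have hk : 0 < 2 - g := by linarith
  have hDi : ∀ i, Integrable (fun z => D z i) := fun i =>
    (EuclideanSpace.proj i : E2 →L[ℝ] ℝ).integrable_comp hD
  have hpart : ∀ i, ∫ z, F z * fderiv ℝ (hardyField ε g i) z (dir i)
      = -∫ z, D z i * hardyField ε g i z := fun i =>
    weakDeriv_bounded_test hF (hDi i) (dir i) (hw i) (contDiff_hardyField hε g i)
      (fun z => (hardyField_bounds hε hg1 i z).1) (fun z => (hardyField_bounds hε hg1 i z).2)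
  have hI1 : ∀ i, Integrable (fun z => F z * fderiv ℝ (hardyField ε g i) z (dir i)) := fun i =>
    hF.mul_bdd (((contDiff_hardyField hε g i).continuous_fderiv (by simp)).clm_apply
      continuous_const).aestronglyMeasurable
      (Eventually.of_forall fun z => (hardyField_bounds hε hg1 i z).2)
  have hI2 : ∀ i, Integrable (fun z => D z i * hardyField ε g i z) := fun i =>
    (hDi i).mul_bdd (contDiff_hardyField hε g i).continuous.aestronglyMeasurable
      (Eventually.of_forall fun z => (hardyField_bounds hε hg1 i z).1)
  have hW : Integrable (fun z => regDist ε z ^ (-(g / 2)) * F z) := by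
    refine hF.bdd_mul (c := ε ^ (-(g / 2))) ((contDiff_regDist ε).rpow_const_of_ne
      fun z => (hε.trans_le (le_regDist ε z)).ne').continuous.aestronglyMeasurable
      (Eventually.of_forall fun z => ?_)
    rw [Real.norm_of_nonneg (Real.rpow_nonneg (hε.le.trans (le_regDist ε z)) _)]
    exact Real.rpow_le_rpow_of_nonpos hε (le_regDist ε z) (by linarith)
  -- the divergence of the field is at least `2 - g` times the weight
  have lower : (2 - g) * ∫ z, regDist ε z ^ (-(g / 2)) * F z ≤
      ∫ z, ∑ i, F z * fderiv ℝ (hardyField ε g i) z (dir i) := by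
    rw [← integral_const_mul]
    refine integral_mono (hW.const_mul _) (integrable_finsetSum _ fun i _ => hI1 i) fun z => ?_
    have hq := hε.trans_le (le_regDist ε z)
    simp only [fderiv_hardyField hε, ← Finset.mul_sum, Finset.sum_sub_distrib, ← Finset.sum_mul]
    have hn : ∑ i, (z.1 - z.2) i ^ 2 = ‖z.1 - z.2‖ ^ 2 := by
      rw [EuclideanSpace.norm_sq_eq]; simp
    rw [hn, Real.rpow_sub_one hq.ne']
    have hx : 0 < regDist ε z ^ (-(g / 2)) := Real.rpow_pos_of_pos hq _
    have hy : ‖z.1 - z.2‖ ^ 2 * (regDist ε z ^ (-(g / 2)) / regDist ε z) ≤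
        regDist ε z ^ (-(g / 2)) := by
      rw [← mul_div_assoc, div_le_iff₀ hq, mul_comm]
      exact mul_le_mul_of_nonneg_left (by unfold regDist; linarith) hx.le
    simp only [Finset.sum_const, Finset.card_univ, Fintype.card_fin, nsmul_eq_mul, Nat.cast_ofNat]
    nlinarith [mul_le_mul_of_nonneg_left hy (mul_nonneg (by linarith : 0 ≤ g) (hF0 z))]
  have upper : -∫ z, ∑ i, D z i * hardyField ε g i z ≤
      2⁻¹ * (M * L ^ (g / 2) * 1 + (2 - g) * (∫ z, regDist ε z ^ (-(g / 2)) * F z)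
        + L ^ ((g - 2) / 2) * ∫ z, ‖D z‖ ^ 2 / F z) := by
    have hFW : Integrable (fun z => M * L ^ (g / 2) * F z
        + (2 - g) * (regDist ε z ^ (-(g / 2)) * F z)) := (hF.const_mul _).add (hW.const_mul _)
    rw [← hF1, ← integral_const_mul, ← integral_const_mul, ← integral_const_mul,
      ← integral_add (hF.const_mul _) (hW.const_mul _),
      ← integral_add hFW (hJ.const_mul _),
      ← integral_const_mul, ← integral_neg]
    refine integral_mono_ae (integrable_finsetSum _ fun i _ => hI2 i).neg
      ((hFW.add (hJ.const_mul _)).const_mul _) ?_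
    filter_upwards [h0] with z hz
    have hq := hε.trans_le (le_regDist ε z)
    rcases (hF0 z).eq_or_lt with h | h
    · simp [hz h.symm, ← h]
    · refine le_trans ?_ (young_pointwise hg1 hg2 hL hq h
        (by unfold regDist; linarith))
      have hin : ∑ i, D z i * (z.1 - z.2) i = inner ℝ (z.1 - z.2) (D z) := by
        simp [PiLp.inner_apply]
      have hx : 0 < regDist ε z ^ (-(g / 2)) := Real.rpow_pos_of_pos hq _
      have hcs := (abs_le.1 (abs_real_inner_le_norm (z.1 - z.2) (D z))).1
      simp only [hardyField, ← mul_assoc, ← Finset.sum_mul, hin]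
      nlinarith
  rw [integral_finsetSum _ fun i _ => hI1 i] at lower
  rw [integral_finsetSum _ fun i _ => hI2 i] at upper
  simp only [hpart, Finset.sum_neg_distrib] at lower
  have hlast : L ^ ((g - 2) / 2) * ∫ z, ‖D z‖ ^ 2 / F z ≤ L ^ (g / 2) := by
    calc _ ≤ L ^ ((g - 2) / 2) * L := mul_le_mul_of_nonneg_left hJL (by positivity)
      _ = L ^ (g / 2) := by
        rw [← Real.rpow_add_one hL.ne']; congr 1; ring
  rw [div_mul_eq_mul_div, le_div_iff₀ hk]
  linarith

end Estimate

/-! ### The moment bound -/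

theorem rpow_add_one_le {I β : ℝ} (hI : 0 ≤ I) (hβ : 0 < β) :
    (2 * I + 1) ^ β ≤ 3 ^ β * (I ^ β + 1) := by
  have h3 : (0 : ℝ) < 3 ^ β := by positivity
  have hIβ : 0 ≤ I ^ β := by positivity
  rcases le_total I 1 with h | h
  · have := Real.rpow_le_rpow (by positivity) (show 2 * I + 1 ≤ 3 by linarith) hβ.le
    nlinarith
  · have := Real.rpow_le_rpow (by positivity) (show 2 * I + 1 ≤ 3 * I by linarith) hβ.le
    rw [Real.mul_rpow (by norm_num) hI] at this
    linarith

theorem rpow_neg_le_one_add {y γ g : ℝ} (hy : 0 < y) (hγ : 0 < γ) (hg : γ ≤ g) :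
    y ^ (-(γ / 2)) ≤ 1 + y ^ (-(g / 2)) := by
  have h0 : 0 < y ^ (-(g / 2)) := Real.rpow_pos_of_pos hy _
  rcases le_total 1 y with h | h
  · linarith [Real.rpow_le_one_of_one_le_of_nonpos h (show -(γ / 2) ≤ 0 by linarith)]
  · linarith [Real.rpow_le_rpow_of_exponent_ge hy h (show -(g / 2) ≤ -(γ / 2) by linarith)]

/-- If `F` is a probability density on `ℝ²×ℝ²` with finite normalized Fisher information
`I(F) = (1/2)∫ |∇F|²/F` (weak gradient `(D1,D2)`), `(X₁,X₂)` is a random variable with law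
`F dx`, then for `γ ∈ (0,2)` and `β > γ/2` there is `C_{γ,β}` with
`E[|X₁-X₂|^{-γ}] ≤ C_{γ,β}(I(F)^β + 1)`. -/
theorem stmt3 (γ β : ℝ) (hγ1 : 0 < γ) (hγ2 : γ < 2) (hβ : γ / 2 < β) :
    ∃ C : ℝ, 0 < C ∧
      ∀ {Ω : Type} [MeasurableSpace Ω] (P : Measure Ω) [IsProbabilityMeasure P]
        (F : E2 × E2 → ℝ) (D1 D2 : E2 × E2 → E2) (X : Ω → E2 × E2),
        (∀ z, 0 ≤ F z) →
        Integrable F volume →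
        (∫ z, F z) = 1 →
        AEMeasurable X P →
        Measure.map X P = volume.withDensity (fun z => ENNReal.ofReal (F z)) →
        (∀ φ : E2 × E2 → ℝ, ContDiff ℝ (⊤ : ℕ∞) φ → HasCompactSupport φ →
          (∫ z, F z • gradient (fun y => φ (y, z.2)) z.1) = - ∫ z, φ z • D1 z) →
        (∀ φ : E2 × E2 → ℝ, ContDiff ℝ (⊤ : ℕ∞) φ → HasCompactSupport φ →
          (∫ z, F z • gradient (fun y => φ (z.1, y)) z.2) = - ∫ z, φ z • D2 z) →
        Integrable (fun z => (‖D1 z‖ ^ 2 + ‖D2 z‖ ^ 2) / F z) volume →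
        (∫⁻ ω, ENNReal.ofReal (‖(X ω).1 - (X ω).2‖ ^ (-γ)) ∂P) ≤
          ENNReal.ofReal
            (C * (((2:ℝ)⁻¹ * ∫ z, (‖D1 z‖ ^ 2 + ‖D2 z‖ ^ 2) / F z) ^ β + 1)) := by
  -- integration by parts needs an exponent at least `1`; smaller `γ` are interpolated
  obtain ⟨g, hg1, hg2, hγg⟩ : ∃ g : ℝ, 1 ≤ g ∧ g < 2 ∧ γ ≤ g :=
    ⟨max γ 1, le_max_right _ _, max_lt hγ2 (by norm_num), le_max_left _ _⟩
  set c : ℝ := (((2 - g) ^ (2 / (2 - g))) ^ (1 - g) + 1) / (2 - g) with hc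
  have hc0 : 0 < c := by
    have : 0 < 2 - g := by linarith
    positivity
  refine ⟨(1 + c) * 3 ^ β, by positivity, ?_⟩
  intro Ω _ P _ F D1 D2 X hF0 hF hF1 hX hlaw hw1 _ hI
  have := isAddHaarMeasure_volume
  set I : ℝ := (2:ℝ)⁻¹ * ∫ z, (‖D1 z‖ ^ 2 + ‖D2 z‖ ^ 2) / F z with hIdef
  have hI0 : 0 ≤ I := mul_nonneg (by norm_num)
    (integral_nonneg fun z => div_nonneg (by positivity) (hF0 z))
  obtain ⟨hDloc, hw⟩ := locallyIntegrable_weakGradient hF hF1 hw1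
  have hle : ∀ z, ‖D1 z‖ ^ 2 / F z ≤ (‖D1 z‖ ^ 2 + ‖D2 z‖ ^ 2) / F z := fun z =>
    div_le_div_of_nonneg_right (by linarith [sq_nonneg ‖D2 z‖]) (hF0 z)
  have hJ : Integrable (fun z => ‖D1 z‖ ^ 2 / F z) := by
    refine hI.mono' ((hDloc.aestronglyMeasurable.norm.aemeasurable.pow_const 2).div
      hF.aestronglyMeasurable.aemeasurable).aestronglyMeasurable (Eventually.of_forall fun z => ?_)
    rw [Real.norm_of_nonneg (div_nonneg (sq_nonneg _) (hF0 z))]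
    exact hle z
  obtain ⟨h0, hD⟩ := integrable_weakGradient hF0 hF hDloc hw hJ
  set L : ℝ := 2 * I + 1 with hLdef
  have hL1 : 1 ≤ L := by linarith
  have hL0 : 0 < L := by linarith
  have hJL : ∫ z, ‖D1 z‖ ^ 2 / F z ≤ L := by
    have := integral_mono hJ hI hle
    rw [hLdef, hIdef]; linarith
  have hcont : ∀ ε : ℝ, 0 < ε → ∀ s : ℝ, Continuous (fun z => regDist ε z ^ (-(s / 2))) := fun ε hε s =>
    ((contDiff_regDist ε).rpow_const_of_ne
      fun z => (hε.trans_le (le_regDist ε z)).ne').continuous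
  have hWint : ∀ ε : ℝ, 0 < ε → ∀ s : ℝ, 0 ≤ s →
      Integrable (fun z => regDist ε z ^ (-(s / 2)) * F z) := by
    intro ε hε s hs
    refine hF.bdd_mul (c := ε ^ (-(s / 2))) (hcont ε hε s).aestronglyMeasurable
      (Eventually.of_forall fun z => ?_)
    rw [Real.norm_of_nonneg (Real.rpow_nonneg (hε.le.trans (le_regDist ε z)) _)]
    exact Real.rpow_le_rpow_of_nonpos hε (le_regDist ε z) (by linarith)
  have hreg : ∀ ε : ℝ, 0 < ε →
      ∫ z, regDist ε z ^ (-(γ / 2)) * F z ≤ (1 + c) * 3 ^ β * (I ^ β + 1) := by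
    intro ε hε
    have hest := regularized_estimate hg1 hg2 hF0 hF hF1 hD h0 hw hJ hL0 hJL hε
    have hpt : ∀ z, regDist ε z ^ (-(γ / 2)) * F z ≤ L ^ (γ / 2) * F z
        + L ^ (γ / 2) * L ^ (-(g / 2)) * (regDist ε z ^ (-(g / 2)) * F z) := by
      intro z
      have hq := hε.trans_le (le_regDist ε z)
      have h1 := rpow_neg_le_one_add (mul_pos hL0 hq) hγ1 hγg
      rw [Real.mul_rpow hL0.le hq.le, Real.mul_rpow hL0.le hq.le] at h1
      have h2 := mul_le_mul_of_nonneg_left h1 (Real.rpow_nonneg hL0.le (γ / 2))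
      rw [← mul_assoc, ← Real.rpow_add hL0, add_neg_cancel, Real.rpow_zero, one_mul] at h2
      have h3 := mul_le_mul_of_nonneg_right h2 (hF0 z)
      linarith
    have h4 := integral_mono (hWint ε hε γ hγ1.le) ((hF.const_mul _).add
      ((hWint ε hε g (by linarith)).const_mul _)) hpt
    simp only [Pi.add_apply] at h4
    rw [integral_add (hF.const_mul _) ((hWint ε hε g (by linarith)).const_mul _),
      integral_const_mul, integral_const_mul, hF1] at h4
    have h5 := mul_le_mul_of_nonneg_left hest
      (show 0 ≤ L ^ (γ / 2) * L ^ (-(g / 2)) by positivity)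
    have h6 : L ^ (γ / 2) * L ^ (-(g / 2)) * (c * L ^ (g / 2)) = c * L ^ (γ / 2) := by
      rw [Real.rpow_neg hL0.le]
      field_simp
    rw [← hc, h6] at h5
    have h7 : L ^ (γ / 2) ≤ L ^ β := Real.rpow_le_rpow_of_exponent_le hL1 hβ.le
    have h8 := rpow_add_one_le hI0 (show 0 < β by linarith)
    have h9 := mul_le_mul_of_nonneg_left (h7.trans h8) (show 0 ≤ 1 + c by positivity)
    linarith
  have hmeas : Measurable (fun z : E2 × E2 => ENNReal.ofReal (‖z.1 - z.2‖ ^ (-γ))) := by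
    fun_prop
  have hFm : AEMeasurable (fun z => ENNReal.ofReal (F z)) :=
    hF.aestronglyMeasurable.aemeasurable.ennreal_ofReal
  rw [← lintegral_map' (f := fun z : E2 × E2 => ENNReal.ofReal (‖z.1 - z.2‖ ^ (-γ)))
    hmeas.aemeasurable hX, hlaw, lintegral_withDensity_eq_lintegral_mul₀ hFm hmeas.aemeasurable]
  let ε : ℕ → ℝ := fun n => 1 / ((n : ℝ) + 1)
  have hε : ∀ n, 0 < ε n := fun n => by positivity
  have hεlim : Tendsto ε atTop (𝓝 0) := tendsto_one_div_add_atTop_nhds_zero_nat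
  have hfatou : ∀ z : E2 × E2,
      ((fun z => ENNReal.ofReal (F z)) *
        fun z : E2 × E2 => ENNReal.ofReal (‖z.1 - z.2‖ ^ (-γ))) z ≤
        liminf (fun n => ENNReal.ofReal (regDist (ε n) z ^ (-(γ / 2)) * F z)) atTop := by
    intro z
    rw [Pi.mul_apply, ← ENNReal.ofReal_mul (hF0 z)]
    rcases eq_or_ne ‖z.1 - z.2‖ 0 with hu | hu
    · -- on the diagonal `0 ^ (-γ) = 0`
      rw [hu, Real.zero_rpow (by linarith)]
      simp
    · refine le_of_eq (Tendsto.liminf_eq ?_).symm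
      refine ENNReal.tendsto_ofReal ?_
      rw [mul_comm]
      refine Tendsto.mul_const _ ?_
      have h1 : Tendsto (fun n => regDist (ε n) z) atTop (𝓝 (‖z.1 - z.2‖ ^ 2)) := by
        simpa [regDist] using hεlim.add_const (‖z.1 - z.2‖ ^ 2)
      have h2 := h1.rpow_const (p := -(γ / 2)) (Or.inl (pow_ne_zero 2 hu))
      rw [← Real.rpow_natCast, ← Real.rpow_mul (norm_nonneg _)] at h2
      convert h2 using 3
      push_cast; ring
  refine (lintegral_mono hfatou).trans ((lintegral_liminf_le' fun n =>
    ((hWint (ε n) (hε n) γ hγ1.le).aestronglyMeasurable.aemeasurable.ennreal_ofReal)).trans ?_)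
  refine liminf_le_of_le (by isBoundedDefault) fun b hb => ?_
  obtain ⟨n, hn⟩ := hb.exists
  refine hn.trans ?_
  rw [← ofReal_integral_eq_lintegral_ofReal (hWint (ε n) (hε n) γ hγ1.le)
    (Eventually.of_forall fun z =>
      mul_nonneg (Real.rpow_nonneg ((hε n).le.trans (le_regDist _ z)) _) (hF0 z))]
  exact ENNReal.ofReal_le_ofReal (hreg _ (hε n))
end
end
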